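/- Let Γ = (T, ℓ) be a normal bunch of grapes (with ℓ(v) ≥ 1 at every degree-2 vertex of T). Inside the unordered 2-point configuration space UC₂(|Γ|), let K be the union, over all edges t of T, of the subspaces {unordered configurations {x, y} : x ∈ |Γ_{t,1}|, y ∈ |Γ_{t,2}|}, where |Γ_{t,i}| ⊆ |Γ| are the realizations of the t-components. Then K is path-connected, and there exists N ≥ Σ_{v ∈ V(T)} ℓ(v) such that the graph 2-braid group B₂(Γ) is isomorphic to π₁(K) ∗ F_N, where π₁(K) is the fundamental group of K at any basepoint and F_N is the free group of rank N. -/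

import Mathlib

/-!
Write `C` for the configuration space of two points on `|Γ|` and `stemsR x ⊆ V(T)` for the set of
stem vertices below the open cell of a point `x` of `|Γ|`.  A configuration `{x, y}` lies in `K` if
and only if `stemsR x` and `stemsR y` are disjoint (`mk2_mem_K`).

Outside `K` the space `C` is covered by three kinds of pieces: both points on different branches at
a stem vertex `v` (a branch is a stem edge at `v` or half of a grape at `v`), both points on the
same stem edge, or both points on the same grape.  An explicit flow on each piece pushes the two
points apart.  These flows agree on overlaps and are constant on `K`, so they descend to a
deformation retraction (`exists_flow`, `exists_deformation`) of `C` onto `L`, the union of `K` and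
finitely many arcs with disjoint interiors: for every grape `g` the arc `rot g`, where two antipodal
points turn around `g` until they have changed places, and the arcs `push g b`, where one point
rests at the far end `mid g` of a grape and the other one runs over another branch `b` at the same
vertex.

The arcs are attached to `K` in three steps.  One arc `push g b` along a stem edge for each grape is
attached at one of its ends only, as is one arc joining `{mid g, v}` to `{mid g, mid g'}` for each
pair of grapes at a common vertex `v`; this does not change the fundamental group (`whisker`).
Afterwards both ends of every other arc are attached already, and `K` is path-connected, so that the
remaining `N` arcs contribute a free factor `F_N` (`ArcData.coprod_free`).  The latter is a van
Kampen argument, carried out with functors from the fundamental groupoid to groups (`Cocycle`),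
which are glued from an open cover.  The arcs `rot g` are all among the remaining ones, whence
`N ≥ ∑ ℓ v`.

`K` is path-connected since every configuration in it can be moved to a pair of distinct stem
vertices, and two unlabelled tokens on a connected graph can be moved to any two vertices
(`kjoin_vertices`).
-/

open scoped Classical

noncomputable section

namespace GraphBraid

/-- The standard basis vector `e_v` in `ℝ^V`. -/
def basisVec {V : Type} [DecidableEq V] (v : V) : V → ℝ := fun w => if w = v then 1 else 0

/-- The geometric realization of a simple graph, as the subspace of `ℝ^V` given by the
union over the edges of the straight segments joining the corresponding basis vectors. -/
def realization {V : Type} [DecidableEq V] (G : SimpleGraph V) : Set (V → ℝ) :=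
  ⋃ (u : V) (v : V) (_ : G.Adj u v), segment ℝ (basisVec u) (basisVec v)

/-- The realization of a subgraph, as a subspace of `ℝ^V`. -/
def subRealization {V : Type} [DecidableEq V] {G : SimpleGraph V} (H : G.Subgraph) :
    Set (V → ℝ) :=
  ⋃ (u : V) (v : V) (_ : H.Adj u v), segment ℝ (basisVec u) (basisVec v)

/-- The ordered `n`-point configuration space of a topological space. -/
abbrev Conf (n : ℕ) (X : Type) [TopologicalSpace X] : Type :=
  {f : Fin n → X // Function.Injective f}

/-- Two ordered configurations are related when they differ by a permutation of coordinates. -/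
def permRel (n : ℕ) (X : Type) [TopologicalSpace X] (f g : Conf n X) : Prop :=
  ∃ σ : Equiv.Perm (Fin n), (f : Fin n → X) = (g : Fin n → X) ∘ σ

/-- The unordered `n`-point configuration space: the quotient of the ordered configuration
space by the symmetric group permuting coordinates. -/
abbrev UConf (n : ℕ) (X : Type) [TopologicalSpace X] : Type :=
  Quot (permRel n X)

/-- A group is free when it is isomorphic to `FreeGroup S` for some set `S`. -/
def IsFreeGroupType (G : Type*) [Group G] : Prop :=
  ∃ S : Type, Nonempty (G ≃* FreeGroup S)

/-- A cycle subgraph: a subgraph with at least one edge which is connected and all of whose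
vertices have degree exactly two (inside the subgraph). -/
def IsCycleSubgraph {W : Type*} {G : SimpleGraph W} (H : G.Subgraph) : Prop :=
  H.edgeSet.Nonempty ∧ H.Connected ∧ ∀ v ∈ H.verts, (H.neighborSet v).ncard = 2


/-- The vertex type of a bunch of grapes over a stem with vertex type `VT`:
the stem vertices together with, for each vertex `v` and each of the `ℓ v` grapes at `v`,
two new vertices completing a triangle at `v`. -/
def GrapeVert (VT : Type) (ℓ : VT → ℕ) : Type :=
  VT ⊕ (Σ v : VT, Fin (ℓ v) × Fin 2)

instance (VT : Type) [Fintype VT] [DecidableEq VT] (ℓ : VT → ℕ) : Fintype (GrapeVert VT ℓ) := by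
  unfold GrapeVert; infer_instance

instance (VT : Type) [DecidableEq VT] (ℓ : VT → ℕ) : DecidableEq (GrapeVert VT ℓ) := by
  unfold GrapeVert; infer_instance

/-- The stem vertex underlying a vertex of the bunch of grapes. -/
def stemOf {VT : Type} {ℓ : VT → ℕ} : GrapeVert VT ℓ → VT :=
  Sum.elim id (fun p => p.1)

/-- The bunch of grapes `Γ = (T, ℓ)`: the graph obtained from the stem `T` by attaching
`ℓ v` triangles (grapes) at each vertex `v` of `T`. -/
def bunchOfGrapes {VT : Type} (T : SimpleGraph VT) (ℓ : VT → ℕ) :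
    SimpleGraph (GrapeVert VT ℓ) :=
  SimpleGraph.fromEdgeSet
    ({e | ∃ u v : VT, T.Adj u v ∧ e = s(Sum.inl u, Sum.inl v)} ∪
     {e | ∃ (v : VT) (i : Fin (ℓ v)) (j : Fin 2), e = s(Sum.inl v, Sum.inr ⟨v, (i, j)⟩)} ∪
     {e | ∃ (v : VT) (i : Fin (ℓ v)), e = s(Sum.inr ⟨v, (i, 0)⟩, Sum.inr ⟨v, (i, 1)⟩)})

/-- A bunch of grapes is normal when at least two distinct stem vertices carry a grape and
every leaf of the stem carries a grape; following the standing assumption, every degree-2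
stem vertex also carries a grape.  The stem is required to be a finite tree. -/
def IsNormalGrapes {VT : Type} (T : SimpleGraph VT) (ℓ : VT → ℕ) : Prop :=
  T.IsTree ∧
  (∃ v w : VT, v ≠ w ∧ 1 ≤ ℓ v ∧ 1 ≤ ℓ w) ∧
  (∀ v : VT, (T.neighborSet v).ncard = 1 → 1 ≤ ℓ v) ∧
  (∀ v : VT, (T.neighborSet v).ncard = 2 → 1 ≤ ℓ v)

/-- Membership in the side of the edge `{a,b}` of the stem containing `a`: a vertex of the
bunch of grapes lies in the `t`-component `Γ_{t,1}` (for `t = {a,b}`) when its stem vertex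
is reachable from `a` after deleting the edge `{a,b}` from `T`. -/
def inSide {VT : Type} (T : SimpleGraph VT) (ℓ : VT → ℕ) (a b : VT)
    (x : GrapeVert VT ℓ) : Prop :=
  (T.deleteEdges {s(a, b)}).Reachable a (stemOf x)



/-- The realization of the `t`-component `Γ_{t,1}` (side of `a`) inside `ℝ^(GrapeVert)`:
the union of the segments corresponding to the edges of the bunch of grapes both of whose
endpoints lie on the `a`-side of the stem edge `{a,b}`. -/
def sideRealization {VT : Type} [DecidableEq VT] (T : SimpleGraph VT) (ℓ : VT → ℕ)
    (a b : VT) : Set (GrapeVert VT ℓ → ℝ) :=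
  ⋃ (u : GrapeVert VT ℓ) (v : GrapeVert VT ℓ)
    (_ : (bunchOfGrapes T ℓ).Adj u v ∧ inSide T ℓ a b u ∧ inSide T ℓ a b v),
    segment ℝ (basisVec u) (basisVec v)

/-- The subspace `K = UP₂(Γ)` of the unordered 2-point configuration space of a bunch of
grapes: the union, over the edges `t = {a,b}` of the stem, of the sets of unordered
configurations with one point in the realization of `Γ_{t,1}` and the other in the
realization of `Γ_{t,2}`. -/
def Kset {VT : Type} [Fintype VT] [DecidableEq VT] (T : SimpleGraph VT) (ℓ : VT → ℕ) :
    Set (UConf 2 ↥(realization (bunchOfGrapes T ℓ))) :=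
  {q | ∃ (a b : VT) (_ : T.Adj a b) (f : Conf 2 ↥(realization (bunchOfGrapes T ℓ))),
        q = Quot.mk _ f ∧
        ((f : Fin 2 → ↥(realization (bunchOfGrapes T ℓ))) 0 : GrapeVert VT ℓ → ℝ) ∈
          sideRealization T ℓ a b ∧
        ((f : Fin 2 → ↥(realization (bunchOfGrapes T ℓ))) 1 : GrapeVert VT ℓ → ℝ) ∈
          sideRealization T ℓ b a}

set_option linter.unusedSectionVars false

/-! ### Gluing local cocycles over an open cover -/

section

open unitInterval Set.Icc in
/-- The straight segment from `p` to `q` in the unit square. -/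
def seg (p q : I × I) : Path p q where
  toFun t := (convexComb p.1 q.1 t, convexComb p.2 q.2 t)
  continuous_toFun := (continuous_convexComb _ _).prodMk (continuous_convexComb _ _)
  source' := by simp
  target' := by simp

open unitInterval Set.Icc

lemma convexComb_mem_Icc {a b x y : I} (hx : x ∈ Set.Icc a b) (hy : y ∈ Set.Icc a b) (t : I) :
    convexComb x y t ∈ Set.Icc a b := by
  have h0 := t.2.1
  have h1 := t.2.2
  have hx1 : (a : ℝ) ≤ x := hx.1
  have hx2 : (x : ℝ) ≤ b := hx.2
  have hy1 : (a : ℝ) ≤ y := hy.1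
  have hy2 : (y : ℝ) ≤ b := hy.2
  constructor
  · rw [← Subtype.coe_le_coe, coe_convexComb]; nlinarith
  · rw [← Subtype.coe_le_coe, coe_convexComb]; nlinarith

lemma seg_mem {a b p q : I × I} (hp : p ∈ Set.Icc a b) (hq : q ∈ Set.Icc a b) (t : I) :
    seg p q t ∈ Set.Icc a b :=
  ⟨⟨(convexComb_mem_Icc ⟨hp.1.1, hp.2.1⟩ ⟨hq.1.1, hq.2.1⟩ t).1,
    (convexComb_mem_Icc ⟨hp.1.2, hp.2.2⟩ ⟨hq.1.2, hq.2.2⟩ t).1⟩,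
   ⟨(convexComb_mem_Icc ⟨hp.1.1, hp.2.1⟩ ⟨hq.1.1, hq.2.1⟩ t).2,
    (convexComb_mem_Icc ⟨hp.1.2, hp.2.2⟩ ⟨hq.1.2, hq.2.2⟩ t).2⟩⟩

/-- A `G`-valued cocycle given locally on the members of a cover: a multiplicative function
`f i` of paths for each `i`, invariant under homotopies inside `U i`, with agreement of `f i` and
`f j` on paths lying in `U i ∩ U j`. -/
structure LocalCocycle {X ι : Type*} [TopologicalSpace X] (U : ι → Set X) (G : Type*) [Group G]
    where
  f : ι → ∀ {x y : X}, Path x y → G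
  mul : ∀ i {x y z : X} (γ : Path x y) (γ' : Path y z), (∀ t, γ t ∈ U i) → (∀ t, γ' t ∈ U i) →
    f i (γ.trans γ') = f i γ * f i γ'
  hom : ∀ i {x y : X} (γ γ' : Path x y) (F : Path.Homotopy γ γ'), (∀ z, F z ∈ U i) →
    f i γ = f i γ'
  agree : ∀ i j {x y : X} (γ : Path x y), (∀ t, γ t ∈ U i) → (∀ t, γ t ∈ U j) → f i γ = f j γ

namespace LocalCocycle
variable {X ι : Type*} [TopologicalSpace X] {U : ι → Set X} {G : Type*} [Group G]
  (c : LocalCocycle U G)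

lemma congr' (i : ι) {x y x' y' : X} (γ : Path x y) (γ' : Path x' y') (h : ∀ t, γ t = γ' t) :
    c.f i γ = c.f i γ' := by
  have hx : x = x' := by have := h 0; simpa using this
  have hy : y = y' := by have := h 1; simpa using this
  subst hx hy
  have : γ = γ' := Path.ext (funext h)
  rw [this]

/-- Straight homotopies inside a box of the square give homotopies inside `U i`. -/
lemma hom_box (i : ι) (H : C(I × I, X)) {a b : I × I} (hb : ∀ p ∈ Set.Icc a b, H p ∈ U i)
    {p q : I × I} (γ γ' : Path p q) (hγ : ∀ t, γ t ∈ Set.Icc a b)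
    (hγ' : ∀ t, γ' t ∈ Set.Icc a b) :
    c.f i (γ.map H.continuous) = c.f i (γ'.map H.continuous) := by
  refine c.hom i _ _
    { toFun := fun z => H (convexComb (γ z.2).1 (γ' z.2).1 z.1,
        convexComb (γ z.2).2 (γ' z.2).2 z.1)
      continuous_toFun := ?_
      map_zero_left := ?_
      map_one_left := ?_
      prop' := ?_ } ?_
  · refine H.continuous.comp (Continuous.prodMk ?_ ?_)
    · exact continuous_convexComb_prod.comp (f := fun z : I × I => ((γ z.2).1, (γ' z.2).1, z.1))
        (by fun_prop)
    · exact continuous_convexComb_prod.comp (f := fun z : I × I => ((γ z.2).2, (γ' z.2).2, z.1))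
        (by fun_prop)
  · intro t; simp
  · intro t; simp
  · rintro t x (rfl | rfl) <;> simp
  · rintro ⟨t, s⟩
    exact hb _ (seg_mem (hγ s) (hγ' s) t)

lemma tri (i : ι) (H : C(I × I, X)) {a b : I × I} (hb : ∀ p ∈ Set.Icc a b, H p ∈ U i)
    {p q r : I × I} (hp : p ∈ Set.Icc a b) (hq : q ∈ Set.Icc a b) (hr : r ∈ Set.Icc a b) :
    c.f i ((seg p q).map H.continuous) * c.f i ((seg q r).map H.continuous)
      = c.f i ((seg p r).map H.continuous) := by
  rw [← c.mul i _ _ (fun t => hb _ (seg_mem hp hq t)) (fun t => hb _ (seg_mem hq hr t)),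
    ← Path.map_trans]
  apply c.hom_box i H hb _ _ _ (seg_mem hp hr)
  intro t
  rw [Path.trans_apply]
  split_ifs
  · exact seg_mem hp hq _
  · exact seg_mem hq hr _

lemma one (i : ι) {x : X} (hx : x ∈ U i) : c.f i (Path.refl x) = 1 := by
  have := c.mul i (Path.refl x) (Path.refl x) (fun _ => hx) (fun _ => hx)
  rw [Path.refl_trans_refl] at this
  simpa using this

/-- The restriction of `γ` to `[s, s']`, linearly reparametrized. -/
def sub {x y : X} (γ : Path x y) (s s' : I) : Path (γ s) (γ s') where
  toFun t := γ (convexComb s s' t)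
  continuous_toFun := γ.continuous.comp (continuous_convexComb _ _)
  source' := by simp
  target' := by simp

lemma tri_sub (i : ι) {x y : X} (γ : Path x y) {a b s t u : I}
    (hb : ∀ p ∈ Set.Icc a b, γ p ∈ U i)
    (hp : s ∈ Set.Icc a b) (hq : t ∈ Set.Icc a b) (hr : u ∈ Set.Icc a b) :
    c.f i (sub γ s t) * c.f i (sub γ t u) = c.f i (sub γ s u) := by
  have key := c.tri i (H := ⟨fun z : I × I => γ z.1, by fun_prop⟩) (a := (a, 0)) (b := (b, 1))
    (fun p hp => hb _ ⟨hp.1.1, hp.2.1⟩) (p := (s, 0)) (q := (t, 0)) (r := (u, 0))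
    ⟨⟨hp.1, le_rfl⟩, ⟨hp.2, zero_le_one⟩⟩ ⟨⟨hq.1, le_rfl⟩, ⟨hq.2, zero_le_one⟩⟩
    ⟨⟨hr.1, le_rfl⟩, ⟨hr.2, zero_le_one⟩⟩
  exact key

/-- A potential of `γ` on `[0, b]`: a `G`-valued function of the parameter whose increments over
small subintervals are the values of the cocycle. -/
def IsPot {x y : X} (γ : Path x y) (b : I) (κ : I → G) : Prop :=
  ∀ i (s t : I), s ≤ t → t ≤ b → (∀ u ∈ Set.Icc s t, γ u ∈ U i) →
    κ s * c.f i (sub γ s t) = κ t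

lemma IsPot.extend {x y : X} {γ : Path x y} {a b : I} (hab : a ≤ b) {κ : I → G}
    (h : c.IsPot γ a κ) (j : ι) (hj : ∀ u ∈ Set.Icc a b, γ u ∈ U j) :
    c.IsPot γ b (fun s => if s ≤ a then κ s else κ a * c.f j (sub γ a s)) := by
  intro i s t hst htb hi
  rcases le_or_gt t a with hta | hta
  · simp only [hta, hst.trans hta, if_true]
    exact h i s t hst hta hi
  · have hfi : ∀ s : I, a ≤ s → s ≤ t → (∀ u ∈ Set.Icc s t, γ u ∈ U i) →
        c.f i (sub γ s t) = c.f j (sub γ s t) := fun s has hst hi =>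
      c.agree i j _ (fun r => hi _ (convexComb_mem_Icc ⟨le_rfl, hst⟩ ⟨hst, le_rfl⟩ r))
        (fun r => hj _ (convexComb_mem_Icc ⟨has, hst.trans htb⟩ ⟨has.trans hst, htb⟩ r))
    simp only [not_le.2 hta, if_false]
    rcases le_or_gt s a with hsa | hsa
    · simp only [hsa, if_true]
      rw [← c.tri_sub i γ hi (t := a) ⟨le_rfl, hst⟩ ⟨hsa, hta.le⟩ ⟨hst, le_rfl⟩, ← mul_assoc,
        h i s a hsa le_rfl (fun u hu => hi u ⟨hu.1, hu.2.trans hta.le⟩),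
        hfi a le_rfl hta.le (fun u hu => hi u ⟨hsa.trans hu.1, hu.2⟩)]
    · simp only [not_le.2 hsa, if_false]
      rw [mul_assoc, hfi s hsa.le hst hi, c.tri_sub j γ hj ⟨le_rfl, hab⟩ ⟨hsa.le, hst.trans htb⟩
        ⟨hta.le, htb⟩]

lemma exists_partition (hU : ∀ i, IsOpen (U i)) (hc : ∀ x, ∃ i, x ∈ U i) {x y : X}
    (γ : Path x y) : ∃ t : ℕ → I, t 0 = 0 ∧ Monotone t ∧ (∃ n, t n = 1) ∧
      ∀ n, ∃ i, ∀ u ∈ Set.Icc (t n) (t (n + 1)), γ u ∈ U i := by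
  obtain ⟨t, h0, hm, ⟨n, hn⟩, h⟩ := exists_monotone_Icc_subset_open_cover_unitInterval
    (c := fun i => γ ⁻¹' U i) (fun i => (hU i).preimage γ.continuous)
    (fun s _ => by simpa using hc (γ s))
  exact ⟨t, h0, hm, ⟨n, hn n le_rfl⟩, fun n => (h n).imp fun i hi u hu => hi hu⟩

lemma exists_pot (hU : ∀ i, IsOpen (U i)) (hc : ∀ x, ∃ i, x ∈ U i) {x y : X} (γ : Path x y) :
    ∃ κ, c.IsPot γ 1 κ := by
  obtain ⟨t, h0, hm, ⟨n, hn⟩, h⟩ := exists_partition hU hc γ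
  suffices ∀ n, ∃ κ, c.IsPot γ (t n) κ by simpa [hn] using this n
  intro n
  induction n with
  | zero =>
    refine ⟨fun _ => 1, fun i s u hsu hu hi => ?_⟩
    have hu : u = 0 := le_antisymm (hu.trans h0.le) u.2.1
    have hs : s = 0 := le_antisymm (hsu.trans hu.le) s.2.1
    subst hu hs
    have := c.congr' i (sub γ 0 0) (Path.refl (γ 0)) (fun t => by simp [sub])
    rw [this, c.one i (hi 0 (by simp)), mul_one]
  | succ n ih =>
    obtain ⟨κ, hκ⟩ := ih
    obtain ⟨i, hi⟩ := h n
    exact ⟨_, hκ.extend c (hm n.le_succ) i hi⟩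

/-- The value on `γ` of the global cocycle glued from `c`. -/
def glue (hU : ∀ i, IsOpen (U i)) (hc : ∀ x, ∃ i, x ∈ U i) {x y : X} (γ : Path x y) : G :=
  ((c.exists_pot hU hc γ).choose 0)⁻¹ * (c.exists_pot hU hc γ).choose 1

lemma glue_eq (hU : ∀ i, IsOpen (U i)) (hc : ∀ x, ∃ i, x ∈ U i) {x y : X} (γ : Path x y)
    {κ : I → G} (hκ : c.IsPot γ 1 κ) : c.glue hU hc γ = (κ 0)⁻¹ * κ 1 := by
  have hκ' := (c.exists_pot hU hc γ).choose_spec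
  rw [glue]
  set κ' := (c.exists_pot hU hc γ).choose
  obtain ⟨t, h0, hm, ⟨n, hn⟩, h⟩ := exists_partition hU hc γ
  suffices ∀ n, (κ' 0)⁻¹ * κ' (t n) = (κ 0)⁻¹ * κ (t n) by simpa [hn] using this n
  intro n
  induction n with
  | zero => simp [h0]
  | succ n ih =>
    obtain ⟨i, hi⟩ := h n
    rw [← hκ i _ _ (hm n.le_succ) le_one' hi, ← hκ' i _ _ (hm n.le_succ) le_one' hi,
      ← mul_assoc, ih, mul_assoc]

lemma glue_small (hU : ∀ i, IsOpen (U i)) (hc : ∀ x, ∃ i, x ∈ U i) {x y : X} (γ : Path x y)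
    (i : ι) (hi : ∀ t, γ t ∈ U i) : c.glue hU hc γ = c.f i γ := by
  obtain ⟨κ, hκ⟩ := c.exists_pot hU hc γ
  rw [c.glue_eq hU hc γ hκ, ← hκ i 0 1 zero_le_one le_rfl (fun u _ => hi u), inv_mul_cancel_left]
  exact c.congr' i _ _ fun t => by simp [sub]

/-- A potential of `γ` restricted along an increasing affine reparametrization. -/
lemma glue_of_sub (hU : ∀ i, IsOpen (U i)) (hc : ∀ x, ∃ i, x ∈ U i) {x y x' y' : X}
    (γ : Path x y) (γ' : Path x' y') (a b : I) (hab : a ≤ b)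
    (h : ∀ t, γ' t = γ (convexComb a b t)) {κ : I → G} (hκ : c.IsPot γ 1 κ) :
    c.glue hU hc γ' = (κ a)⁻¹ * κ b := by
  have hmono : Monotone (convexComb a b) := by
    intro s t hst
    have hst : (s : ℝ) ≤ t := hst
    have hab : (a : ℝ) ≤ b := hab
    rw [← Subtype.coe_le_coe, coe_convexComb, coe_convexComb]
    nlinarith
  have hpot : c.IsPot γ' 1 (fun s => κ (convexComb a b s)) := by
    intro i s t hst _ hi
    beta_reduce
    rw [← hκ i (convexComb a b s) (convexComb a b t) (hmono hst) le_one']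
    · congr 1
      refine c.congr' i _ _ fun r => ?_
      change γ' _ = γ _
      rw [h]
      congr 1
      ext
      simp only [coe_convexComb]
      ring
    · intro u hu
      have hcont : ContinuousOn (convexComb a b) (Set.Icc s t) :=
        (continuous_convexComb a b).continuousOn
      obtain ⟨r, hr, rfl⟩ := intermediate_value_Icc hst hcont hu
      rw [← h]
      exact hi r hr
  rw [c.glue_eq hU hc γ' hpot]
  simp

lemma glue_trans (hU : ∀ i, IsOpen (U i)) (hc : ∀ x, ∃ i, x ∈ U i) {x y z : X}
    (γ : Path x y) (γ' : Path y z) :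
    c.glue hU hc (γ.trans γ') = c.glue hU hc γ * c.glue hU hc γ' := by
  obtain ⟨κ, hκ⟩ := c.exists_pot hU hc (γ.trans γ')
  let m : I := ⟨1 / 2, by norm_num, by norm_num⟩
  rw [c.glue_eq hU hc _ hκ, c.glue_of_sub hU hc (γ.trans γ') γ 0 m m.2.1 ?_ hκ,
    c.glue_of_sub hU hc (γ.trans γ') γ' m 1 m.2.2 ?_ hκ]
  · group
  · intro t
    rw [Path.trans_apply]
    have h0 := t.2.1
    have hc : ((convexComb m 1 t : I) : ℝ) = 1 / 2 + t / 2 := by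
      rw [coe_convexComb]; simp only [m, Set.Icc.coe_one]; ring
    split_ifs with h
    · have ht : t = 0 := by
        ext; simp only [Set.Icc.coe_zero]; linarith
      subst ht
      simp [m]
    · congr 1
      ext
      simp only [hc]; ring
  · intro t
    rw [Path.trans_apply]
    have h1 := t.2.2
    have hc : ((convexComb 0 m t : I) : ℝ) = t / 2 := by
      rw [coe_convexComb]; simp only [m, Set.Icc.coe_zero]; ring
    rw [dif_pos (by linarith)]
    congr 1
    ext
    simp only [hc]; ring

/-- Homotopy invariance of the glued cocycle: the square is cut into small squares, around each
of which the local cocycle is trivial. -/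
lemma glue_hom (hU : ∀ i, IsOpen (U i)) (hc : ∀ x, ∃ i, x ∈ U i) {x y : X}
    (γ γ' : Path x y) (H : Path.Homotopy γ γ') :
    c.glue hU hc γ = c.glue hU hc γ' := by
  obtain ⟨t, h0, hm, ⟨n, hn⟩, h⟩ := exists_monotone_Icc_subset_open_cover_unitInterval_prod_self
    (c := fun i => H ⁻¹' U i) (fun i => (hU i).preimage H.continuous)
    (fun s _ => by simpa using hc (H s))
  have hn := hn n le_rfl
  have h : ∀ n m, ∃ i, ∀ p ∈ Set.Icc (t n, t m) (t (n + 1), t (m + 1)), H p ∈ U i := by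
    intro n m
    obtain ⟨i, hi⟩ := h n m
    exact ⟨i, fun p hp => hi ⟨⟨hp.1.1, hp.2.1⟩, ⟨hp.1.2, hp.2.2⟩⟩⟩
  suffices ∀ n, c.glue hU hc (H.eval (t n)) = c.glue hU hc (H.eval 0) by
    have := this n
    rw [hn, Path.Homotopy.eval_one, Path.Homotopy.eval_zero] at this
    exact this.symm
  intro n
  induction n with
  | zero => rw [h0]
  | succ n ih =>
    rw [← ih]
    clear ih
    obtain ⟨κ, hκ⟩ := c.exists_pot hU hc (H.eval (t n))
    obtain ⟨κ', hκ'⟩ := c.exists_pot hU hc (H.eval (t (n + 1)))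
    rw [c.glue_eq hU hc _ hκ, c.glue_eq hU hc _ hκ']
    have hn1 := hm n.le_succ
    have key : ∀ m, ∀ i, (∀ p ∈ Set.Icc (t n, t m) (t (n + 1), t m), H p ∈ U i) →
        (κ 0)⁻¹ * κ (t m) * c.f i ((seg (t n, t m) (t (n + 1), t m)).map H.continuous)
          = (κ' 0)⁻¹ * κ' (t m) := by
      intro m
      induction m with
      | zero =>
        intro i hi
        rw [h0, inv_mul_cancel, inv_mul_cancel, one_mul,
          c.congr' i _ (Path.refl x) (fun s => by simp [seg])]
        refine c.one i ?_
        have := hi (t n, t 0) ⟨le_rfl, ⟨hn1, le_rfl⟩⟩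
        rw [h0] at this
        simpa using this
      | succ m ih =>
        intro i hi
        obtain ⟨j, hj⟩ := h n m
        have hm1 := hm m.le_succ
        have e1 : c.f i ((seg (t n, t (m + 1)) (t (n + 1), t (m + 1))).map H.continuous)
            = c.f j ((seg (t n, t (m + 1)) (t (n + 1), t (m + 1))).map H.continuous) := by
          apply c.agree
          · intro s
            refine hi _ (seg_mem ?_ ?_ s)
            · exact ⟨le_rfl, ⟨hn1, le_rfl⟩⟩
            · exact ⟨⟨hn1, le_rfl⟩, le_rfl⟩
          · intro s
            refine hj _ (seg_mem ?_ ?_ s)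
            · exact ⟨⟨le_rfl, hm1⟩, ⟨hn1, le_rfl⟩⟩
            · exact ⟨⟨hn1, hm1⟩, le_rfl⟩
        have e2 := hκ j (t m) (t (m + 1)) hm1 le_one'
          (fun u hu => hj (t n, u) ⟨⟨le_rfl, hu.1⟩, ⟨hn1, hu.2⟩⟩)
        have e3 := hκ' j (t m) (t (m + 1)) hm1 le_one'
          (fun u hu => hj (t (n + 1), u) ⟨⟨hn1, hu.1⟩, ⟨le_rfl, hu.2⟩⟩)
        have a00 : (t n, t m) ∈ Set.Icc (t n, t m) (t (n + 1), t (m + 1)) :=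
          ⟨le_rfl, ⟨hn1, hm1⟩⟩
        have a01 : (t n, t (m + 1)) ∈ Set.Icc (t n, t m) (t (n + 1), t (m + 1)) :=
          ⟨⟨le_rfl, hm1⟩, ⟨hn1, le_rfl⟩⟩
        have a10 : (t (n + 1), t m) ∈ Set.Icc (t n, t m) (t (n + 1), t (m + 1)) :=
          ⟨⟨hn1, le_rfl⟩, ⟨le_rfl, hm1⟩⟩
        have a11 : (t (n + 1), t (m + 1)) ∈ Set.Icc (t n, t m) (t (n + 1), t (m + 1)) :=
          ⟨⟨hn1, hm1⟩, le_rfl⟩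
        have T1 := c.tri j H.toContinuousMap hj a00 a01 a11
        have T2 := c.tri j H.toContinuousMap hj a00 a10 a11
        have s1 : c.f j (sub (H.eval (t n)) (t m) (t (m + 1)))
            = c.f j ((seg (t n, t m) (t n, t (m + 1))).map H.continuous) :=
          c.congr' j _ _ fun s => by simp [seg, sub]
        have s2 : c.f j (sub (H.eval (t (n + 1))) (t m) (t (m + 1)))
            = c.f j ((seg (t (n + 1), t m) (t (n + 1), t (m + 1))).map H.continuous) :=
          c.congr' j _ _ fun s => by simp [seg, sub]
        have ih' := ih j (fun p hp => hj p ⟨hp.1, ⟨hp.2.1, hp.2.2.trans hm1⟩⟩)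
        rw [e1, ← e2, ← e3, ← mul_assoc (κ' 0)⁻¹, ← ih', s1, s2]
        simp only [mul_assoc]
        congr 2
        exact T1.trans T2.symm
    have k0 := h0
    obtain ⟨N, hN⟩ : ∃ N, t N = 1 := ⟨_, hn⟩
    obtain ⟨i, hi⟩ := hc y
    have := key N i (fun p hp => by
      rw [hN] at hp
      have : p.2 = 1 := le_antisymm le_one' hp.1.2
      have e : p = (p.1, 1) := Prod.ext rfl this
      rw [e]; simpa using hi)
    rw [hN, c.congr' i _ (Path.refl y) (fun s => by simp [seg]), c.one i hi, mul_one] at this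
    exact this.symm

end LocalCocycle

/-- Two multiplicative functions of paths that agree on all paths inside members of an open cover
agree on all paths. -/
lemma cocycle_unique {X ι : Type*} [TopologicalSpace X] {U : ι → Set X} {G : Type*} [Group G]
    (hU : ∀ i, IsOpen (U i)) (hc : ∀ x, ∃ i, x ∈ U i)
    (f g : ∀ {x y : X}, Path x y → G)
    (fm : ∀ {x y z : X} (γ : Path x y) (γ' : Path y z), f (γ.trans γ') = f γ * f γ')
    (gm : ∀ {x y z : X} (γ : Path x y) (γ' : Path y z), g (γ.trans γ') = g γ * g γ')
    (fh : ∀ {x y : X} (γ γ' : Path x y), γ.Homotopic γ' → f γ = f γ')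
    (gh : ∀ {x y : X} (γ γ' : Path x y), γ.Homotopic γ' → g γ = g γ')
    (hfg : ∀ i {x y : X} (γ : Path x y), (∀ t, γ t ∈ U i) → f γ = g γ)
    {x y : X} (γ : Path x y) : f γ = g γ := by
  let d : LocalCocycle (fun _ : Unit => (Set.univ : Set X)) G :=
    { f := fun _ => f
      mul := fun _ _ _ _ γ γ' _ _ => fm γ γ'
      hom := fun _ _ _ γ γ' F _ => fh γ γ' ⟨F⟩
      agree := fun _ _ _ _ _ _ _ => rfl }
  let d' : LocalCocycle (fun _ : Unit => (Set.univ : Set X)) G :=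
    { f := fun _ => g
      mul := fun _ _ _ _ γ γ' _ _ => gm γ γ'
      hom := fun _ _ _ γ γ' F _ => gh γ γ' ⟨F⟩
      agree := fun _ _ _ _ _ _ _ => rfl }
  have hd : ∀ {x y : X} (γ : Path x y) (s t u : I), f (LocalCocycle.sub γ s t)
      * f (LocalCocycle.sub γ t u) = f (LocalCocycle.sub γ s u) := fun γ s t u =>
    d.tri_sub () γ (a := 0) (b := 1) (fun _ _ => trivial) s.2 t.2 u.2
  have hd' : ∀ {x y : X} (γ : Path x y) (s t u : I), g (LocalCocycle.sub γ s t)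
      * g (LocalCocycle.sub γ t u) = g (LocalCocycle.sub γ s u) := fun γ s t u =>
    d'.tri_sub () γ (a := 0) (b := 1) (fun _ _ => trivial) s.2 t.2 u.2
  obtain ⟨t, h0, hm, ⟨n, hn⟩, h⟩ := LocalCocycle.exists_partition hU hc γ
  have key : ∀ n, f (LocalCocycle.sub γ 0 (t n)) = g (LocalCocycle.sub γ 0 (t n)) := by
    intro n
    induction n with
    | zero =>
      obtain ⟨i, hi⟩ := hc (γ 0)
      apply hfg i
      intro s
      simpa [LocalCocycle.sub, h0] using hi
    | succ n ih =>
      obtain ⟨i, hi⟩ := h n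
      rw [← hd γ 0 (t n) (t (n + 1)), ← hd' γ 0 (t n) (t (n + 1)), ih]
      congr 1
      exact hfg i _ fun s => hi _ (convexComb_mem_Icc ⟨le_rfl, hm n.le_succ⟩ ⟨hm n.le_succ, le_rfl⟩ s)
  have e := key n
  rw [hn] at e
  exact (d.congr' () γ (LocalCocycle.sub γ 0 1) (fun t => by simp [LocalCocycle.sub])).trans
    (e.trans (d'.congr' () γ (LocalCocycle.sub γ 0 1)
      (fun t => by simp [LocalCocycle.sub])).symm)

end

/-! ### Deformation retractions and whiskers -/

section

open unitInterval Set.Icc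

/-- A homotopy `X × I → X` may be constructed on a space `P` of which `X` is a quotient. -/
lemma exists_homotopy_descend {P X : Type*} [TopologicalSpace P] [TopologicalSpace X] {p : P → X}
    (hp : Topology.IsQuotientMap p) (h : C(P × I, X))
    (hh : ∀ a b, p a = p b → ∀ t, h (a, t) = h (b, t)) :
    ∃ H : C(X × I, X), ∀ a t, H (p a, t) = h (a, t) := by
  let g : C(X, C(I, X)) := hp.lift (f := ⟨p, hp.continuous⟩) h.curry (by
    intro a b hab
    ext t
    exact hh a b hab t)
  refine ⟨g.uncurry, fun a t => ?_⟩
  have : g (p a) = h.curry a := by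
    have := hp.lift_comp (f := ⟨p, hp.continuous⟩) h.curry (by
      intro a b hab
      ext t
      exact hh a b hab t)
    exact DFunLike.congr_fun this a
  change g (p a) t = _
  rw [this]; rfl

section DR
variable {A X : Type*} [TopologicalSpace A] [TopologicalSpace X]

/-- The inclusion of a (strong) deformation retract induces a bijection on fundamental groups. -/
theorem map_bijective_of_deformation (i : C(A, X)) (hi : Topology.IsEmbedding i) (H : C(X × I, X))
    (H0 : ∀ x, H (x, 0) = x) (H1 : ∀ x, H (x, 1) ∈ Set.range i)
    (Hi : ∀ a t, H (i a, t) = i a) (a : A) :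
    Function.Bijective (FundamentalGroup.map i a) := by
  choose r hr using H1
  have hrc : Continuous r := by
    rw [hi.continuous_iff]
    have : (⇑i ∘ r) = fun x => H (x, 1) := funext hr
    rw [this]; fun_prop
  have hri : ∀ a, r (i a) = a := fun a => hi.injective (by rw [hr, Hi])
  constructor
  · intro p q
    refine Quotient.inductionOn₂ p q fun γ γ' h => ?_
    have h : Path.Homotopic.Quotient.mk (γ.map i.continuous)
      = Path.Homotopic.Quotient.mk (γ'.map i.continuous) := h
    rw [Path.Homotopic.Quotient.eq] at h
    have h2 := h.map ⟨r, hrc⟩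
    change Path.Homotopic.Quotient.mk γ = Path.Homotopic.Quotient.mk γ'
    rw [Path.Homotopic.Quotient.eq]
    have e : ∀ γ : Path a a, γ = ((γ.map i.continuous).map hrc).cast (hri a).symm (hri a).symm :=
      fun γ => by ext t; simp [hri]
    rw [e γ, e γ']
    obtain ⟨F⟩ := h2
    exact ⟨{ toFun := F
             continuous_toFun := F.continuous
             map_zero_left := F.map_zero_left
             map_one_left := F.map_one_left
             prop' := F.prop' }⟩
  · intro p
    refine Quotient.inductionOn p fun γ => ?_
    refine ⟨Path.Homotopic.Quotient.mk ((γ.map hrc).cast (hri a).symm (hri a).symm), ?_⟩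
    change Path.Homotopic.Quotient.mk (Path.map _ i.continuous) = Path.Homotopic.Quotient.mk γ
    rw [Path.Homotopic.Quotient.eq]
    refine Path.Homotopic.symm ⟨{ toFun := fun z => H (γ z.2, z.1)
                                  continuous_toFun := by fun_prop
                                  map_zero_left := fun t => by simp [H0]
                                  map_one_left := fun t => by simp [hr]
                                  prop' := ?_ }⟩
    rintro t x (rfl | rfl) <;> simp [Hi]

theorem pathConnected_of_deformation [PathConnectedSpace A] (i : C(A, X)) (H : C(X × I, X))
    (H0 : ∀ x, H (x, 0) = x) (H1 : ∀ x, H (x, 1) ∈ Set.range i) : PathConnectedSpace X := by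
  have key : ∀ x, ∃ a, Joined x (i a) := by
    intro x
    obtain ⟨a, ha⟩ := H1 x
    exact ⟨a, ⟨⟨⟨fun t => H (x, t), by fun_prop⟩, by simp [H0], by simp [ha]⟩⟩⟩
  refine ⟨⟨i (Classical.arbitrary A)⟩, fun x y => ?_⟩
  obtain ⟨a, ha⟩ := key x
  obtain ⟨b, hb⟩ := key y
  exact (ha.trans ((PathConnectedSpace.joined a b).map i.continuous)).trans hb.symm

end DR

section Arcs
variable {A B J : Type*} [TopologicalSpace A] [TopologicalSpace B] [T2Space B] [Finite J]

lemma isQuotientMap_arcs (i : C(A, B)) (hi : Topology.IsClosedEmbedding i) (c : J → C(I, B))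
    (cov : ∀ b, (∃ a, i a = b) ∨ ∃ j s, c j s = b) :
    Topology.IsQuotientMap (Sum.elim i (fun z : (_ : J) × I => c z.1 z.2)) := by
  have hc : Continuous (fun z : (_ : J) × I => c z.1 z.2) :=
    continuous_sigma fun j => (c j).continuous
  refine IsClosedMap.isQuotientMap ?_ ?_ ?_
  · rw [isClosedMap_sum]
    exact ⟨hi.isClosedMap, hc.isClosedMap⟩
  · exact continuous_sum_dom.2 ⟨i.continuous, hc⟩
  · intro b
    rcases cov b with ⟨a, h⟩ | ⟨j, s, h⟩
    · exact ⟨Sum.inl a, h⟩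
    · exact ⟨Sum.inr ⟨j, s⟩, h⟩

/-- Whiskers: arcs attached along one endpoint only do not change the fundamental group. -/
theorem whisker (i : C(A, B)) (hi : Topology.IsClosedEmbedding i) (c : J → C(I, B))
    (cov : ∀ b, (∃ a, i a = b) ∨ ∃ j s, c j s = b)
    (h1 : ∀ j, c j 1 ∈ Set.range i)
    (inj : ∀ j j' s s', s < 1 → c j s = c j' s' → j = j' ∧ s = s')
    (out : ∀ j s, s < 1 → c j s ∉ Set.range i) :
    (∀ a, Nonempty (FundamentalGroup A a ≃* FundamentalGroup B (i a))) ∧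
      (PathConnectedSpace A → PathConnectedSpace B) := by
  have hq := isQuotientMap_arcs i hi c cov
  let h : C((A ⊕ ((_ : J) × I)) × I, B) :=
    ContinuousMap.uncurry
      ⟨Sum.elim (fun a => ContinuousMap.const I (i a))
        (fun z => (c z.1).comp ⟨convexComb z.2 1, continuous_convexComb _ _⟩), by
        refine continuous_sum_dom.2 ⟨?_, continuous_sigma fun j => ?_⟩
        · exact ContinuousMap.continuous_const'.comp i.continuous
        · refine (ContinuousMap.curry
            (⟨fun z => c j (convexComb z.1 1 z.2), ?_⟩ : C(I × I, B))).continuous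
          refine (c j).continuous.comp ?_
          exact continuous_convexComb_prod.comp (f := fun z : I × I => (z.1, 1, z.2)) (by fun_prop)⟩
  have hA : ∀ a t, h (Sum.inl a, t) = i a := fun a t => rfl
  have hJ : ∀ j s t, h (Sum.inr ⟨j, s⟩, t) = c j (convexComb s 1 t) := fun a s t => rfl
  have lt1 : ∀ s : I, s < 1 ∨ s = 1 := fun s => lt_or_eq_of_le le_one'
  obtain ⟨H, hH⟩ := exists_homotopy_descend hq h (by
    have aux : ∀ a j s t, i a = c j s → i a = c j (convexComb s 1 t) := by
      intro a j s t hab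
      rcases lt1 s with hs | rfl
      · exact (out j s hs ⟨a, hab⟩).elim
      · simpa using hab
    rintro (a | ⟨j, s⟩) (b | ⟨j', s'⟩) hab t
    · exact hab
    · exact aux _ _ _ _ hab
    · exact (aux _ _ _ _ hab.symm).symm
    · have hab : c j s = c j' s' := hab
      rw [hJ, hJ]
      rcases lt1 s with hs | rfl
      · obtain ⟨rfl, rfl⟩ := inj _ _ _ _ hs hab
        rfl
      · rcases lt1 s' with hs' | rfl
        · obtain ⟨rfl, rfl⟩ := inj _ _ _ _ hs' hab.symm
          rfl
        · simpa using hab)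
  have HA : ∀ a t, H (i a, t) = i a := fun a t => hH (Sum.inl a) t
  have HJ : ∀ j s t, H (c j s, t) = c j (convexComb s 1 t) := fun j s t => hH (Sum.inr ⟨j, s⟩) t
  have H0 : ∀ x, H (x, 0) = x := by
    intro x
    rcases cov x with ⟨a, rfl⟩ | ⟨j, s, rfl⟩
    · exact HA a 0
    · rw [HJ]; simp
  have H1 : ∀ x, H (x, 1) ∈ Set.range i := by
    intro x
    rcases cov x with ⟨a, rfl⟩ | ⟨j, s, rfl⟩
    · exact ⟨a, (HA a 1).symm⟩
    · rw [HJ]; simpa using h1 j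
  exact ⟨fun a => ⟨MulEquiv.ofBijective _
    (map_bijective_of_deformation i hi.isEmbedding H H0 H1 HA a)⟩,
    fun _ => pathConnected_of_deformation i H H0 H1⟩

end Arcs

end

/-! ### Functors from the fundamental groupoid to a group -/

section

open unitInterval Set.Icc

/-- Homotopy classes of paths. -/
abbrev PQ {X : Type*} [TopologicalSpace X] (x y : X) := Path.Homotopic.Quotient x y

/-- A functor from the fundamental groupoid of `X` to the group `G`, written multiplicatively in the
order of concatenation of paths. -/
structure Cocycle (X : Type*) [TopologicalSpace X] (G : Type*) [Group G] where
  f : ∀ {x y : X}, PQ x y → G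
  mul : ∀ {x y z : X} (p : PQ x y) (q : PQ y z), f (p.trans q) = f p * f q

namespace Cocycle
variable {X Y : Type*} [TopologicalSpace X] [TopologicalSpace Y] {G : Type*} [Group G]
  (c : Cocycle X G)

lemma one (x : X) : c.f (Path.Homotopic.Quotient.refl x) = 1 := by
  have := c.mul (Path.Homotopic.Quotient.refl x) (Path.Homotopic.Quotient.refl x)
  rw [Path.Homotopic.Quotient.refl_trans] at this
  simpa using this

lemma inv {x y : X} (p : PQ x y) : c.f p.symm = (c.f p)⁻¹ := by
  have := c.mul p p.symm
  rw [Path.Homotopic.Quotient.trans_symm, c.one] at this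
  exact eq_inv_of_mul_eq_one_right this.symm

/-- The homomorphism on the fundamental group at `x`. The inverse accounts for the fact that
multiplication in `FundamentalGroup` is in the order of composition of arrows. -/
def toHom (x : X) : FundamentalGroup X x →* G where
  toFun p := (c.f p.toPath)⁻¹
  map_one' := by
    rw [FundamentalGroup.one_def, c.one, inv_one]
  map_mul' p q := by
    rw [FundamentalGroup.mul_def, c.mul, mul_inv_rev]

/-- The cocycle valued in the fundamental group determined by a choice of paths from the basepoint
to all points. -/
def based {k : X} (α : ∀ x, PQ k x) : Cocycle X (FundamentalGroup X k) where
  f {x y} p := (FundamentalGroup.fromPath (((α x).trans p).trans (α y).symm))⁻¹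
  mul {x y z} p q := by
    rw [← mul_inv_rev]
    congr 1
    rw [FundamentalGroup.mul_def]
    simp only [Path.Homotopic.Quotient.trans_assoc]
    rw [← Path.Homotopic.Quotient.trans_assoc (α y).symm (α y),
      Path.Homotopic.Quotient.symm_trans, Path.Homotopic.Quotient.refl_trans]

lemma based_eq_one {k : X} (α : ∀ x, PQ k x) {x y : X} (p : PQ x y) (h : α y = (α x).trans p) :
    (based α).f p = 1 := by
  change (FundamentalGroup.fromPath (((α x).trans p).trans (α y).symm))⁻¹ = 1
  rw [← h, Path.Homotopic.Quotient.trans_symm]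
  exact inv_one

lemma based_toHom {k : X} (α : ∀ x, PQ k x) (hk : α k = Path.Homotopic.Quotient.refl k)
    (p : FundamentalGroup X k) : (based α).toHom k p = p := by
  change ((FundamentalGroup.fromPath (((α k).trans p.toPath).trans (α k).symm))⁻¹)⁻¹ = p
  rw [inv_inv, hk, Path.Homotopic.Quotient.refl_trans]
  refine Quotient.inductionOn p fun γ => ?_
  change Path.Homotopic.Quotient.trans (Path.Homotopic.Quotient.mk γ)
    (Path.Homotopic.Quotient.symm (Path.Homotopic.Quotient.mk (Path.refl k))) = _
  rw [← Path.Homotopic.Quotient.mk_symm, Path.refl_symm, Path.Homotopic.Quotient.mk_refl,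
    Path.Homotopic.Quotient.trans_refl]
  rfl

lemma map_refl' (i : C(X, Y)) (x : X) : (Path.Homotopic.Quotient.refl x).map i
    = Path.Homotopic.Quotient.refl (i x) := rfl

lemma map_trans' (i : C(X, Y)) {x y z : X} (p : PQ x y) (q : PQ y z) :
    (p.trans q).map i = (p.map i).trans (q.map i) := by
  refine Quotient.inductionOn₂ p q fun γ γ' => ?_
  change Path.Homotopic.Quotient.mk ((γ.trans γ').map i.continuous) = _
  rw [Path.map_trans]; rfl

/-- The restriction of a cocycle along a continuous map. -/
def comap (i : C(Y, X)) : Cocycle Y G where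
  f p := c.f (p.map i)
  mul p q := by rw [map_trans', c.mul]

/-- Functoriality of `based`. -/
lemma map_based (i : C(Y, X)) {k : Y} (α : ∀ y, PQ k y) (β : ∀ x, PQ (i k) x)
    (h : ∀ y, β (i y) = (α y).map i) {x y : Y} (p : PQ x y) :
    FundamentalGroup.map i k ((based α).f p) = (based β).f (p.map i) := by
  change FundamentalGroup.map i k (FundamentalGroup.fromPath _)⁻¹ =
    (FundamentalGroup.fromPath (((β (i x)).trans _).trans (β (i y)).symm))⁻¹
  rw [map_inv, h, h]
  congr 1
  change Path.Homotopic.Quotient.map (((α x).trans p).trans (α y).symm) i = _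
  rw [map_trans', map_trans']
  congr 1
  refine Quotient.inductionOn (α y) fun γ => rfl

/-- Changing a map by a homotopy conjugates the class of a path by the tracks. -/
lemma naturality (f g : C(Y, X)) (H : C(Y × I, X)) (H0 : ∀ y, H (y, 0) = f y)
    (H1 : ∀ y, H (y, 1) = g y) (τ : ∀ y, Path (f y) (g y)) (hτ : ∀ y t, τ y t = H (y, t))
    {x y : Y} (p : PQ x y) :
    c.f (p.map f) * c.f (Path.Homotopic.Quotient.mk (τ y))
      = c.f (Path.Homotopic.Quotient.mk (τ x)) * c.f (p.map g) := by
  rw [← c.mul, ← c.mul]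
  congr 1
  let F : ContinuousMap.Homotopy f g :=
    { toFun := fun z => H (z.2, z.1)
      continuous_toFun := by fun_prop
      map_zero_left := H0
      map_one_left := H1 }
  have e : ∀ y, F.evalAt y = τ y := fun y => by ext t; exact (hτ y t).symm
  refine Quotient.inductionOn p fun γ => ?_
  have := Path.Homotopic.map_trans_evalAt F γ
  rw [e, e] at this
  exact (Path.Homotopic.Quotient.eq.2 this)

/-- Pulled back along a path, a cocycle depends on the endpoints of the parameter interval only. -/
lemma arc_eq (γ : C(I, X)) {s t : I} (p q : PQ s t) : c.f (p.map γ) = c.f (q.map γ) := by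
  have : ContractibleSpace I :=
    (convex_Icc (0 : ℝ) 1).contractibleSpace ⟨0, by simp⟩
  refine Quotient.inductionOn₂ p q fun γ₁ γ₂ => ?_
  have h : Path.Homotopic.Quotient.mk γ₁ = Path.Homotopic.Quotient.mk γ₂ :=
    Path.Homotopic.Quotient.eq.2 (SimplyConnectedSpace.paths_homotopic γ₁ γ₂)
  exact congrArg (fun r : PQ s t => c.f (r.map γ)) h

end Cocycle

namespace LocalCocycle
variable {X ι : Type*} [TopologicalSpace X] {U : ι → Set X} {G : Type*} [Group G]
  (c : LocalCocycle U G)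

/-- Local cocycles glue. -/
theorem exists_cocycle (hU : ∀ i, IsOpen (U i)) (hc : ∀ x, ∃ i, x ∈ U i) :
    ∃ F : Cocycle X G, ∀ i {x y : X} (γ : Path x y), (∀ t, γ t ∈ U i) →
      F.f (Path.Homotopic.Quotient.mk γ) = c.f i γ :=
  ⟨{ f := fun {_ _} p => Quotient.lift (s := Path.Homotopic.setoid _ _)
        (fun γ => c.glue hU hc γ) (fun γ γ' h => c.glue_hom hU hc γ γ' h.some) p
     mul := fun {_ _ _} p q => Quotient.inductionOn₂ p q fun γ γ' => c.glue_trans hU hc γ γ' },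
   fun i _ _ γ hi => c.glue_small hU hc γ i hi⟩

end LocalCocycle

lemma Cocycle.unique {X ι : Type*} [TopologicalSpace X] {U : ι → Set X} {G : Type*} [Group G]
    (hU : ∀ i, IsOpen (U i)) (hc : ∀ x, ∃ i, x ∈ U i) (c d : Cocycle X G)
    (h : ∀ i {x y : X} (γ : Path x y), (∀ t, γ t ∈ U i) →
      c.f (Path.Homotopic.Quotient.mk γ) = d.f (Path.Homotopic.Quotient.mk γ))
    {x y : X} (p : PQ x y) : c.f p = d.f p := by
  refine Quotient.inductionOn p fun γ => ?_
  exact cocycle_unique hU hc (fun γ => c.f (Path.Homotopic.Quotient.mk γ))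
    (fun γ => d.f (Path.Homotopic.Quotient.mk γ))
    (fun γ γ' => by rw [Path.Homotopic.Quotient.mk_trans, c.mul])
    (fun γ γ' => by rw [Path.Homotopic.Quotient.mk_trans, d.mul])
    (fun γ γ' h => by rw [Path.Homotopic.Quotient.eq.2 h])
    (fun γ γ' h => by rw [Path.Homotopic.Quotient.eq.2 h]) h γ

end

/-! ### Attaching arcs -/

section

open unitInterval Set.Icc

/-- The straight path between two points of the unit interval. -/
def segI (s t : I) : Path s t where
  toFun r := convexComb s t r
  continuous_toFun := continuous_convexComb _ _
  source' := by simp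
  target' := by simp

/-- A path with values in `S` as a path in the subspace `S`. -/
def codR {X : Type*} [TopologicalSpace X] {S : Set X} {x y : X} (γ : Path x y) (h : ∀ t, γ t ∈ S) :
    Path (⟨x, by simpa using h 0⟩ : S) ⟨y, by simpa using h 1⟩ where
  toFun t := ⟨γ t, h t⟩
  continuous_toFun := by fun_prop
  source' := by simp
  target' := by simp

lemma Cocycle.const {X G : Type*} [TopologicalSpace X] [Group G] (c : Cocycle X G) {x y : X}
    (γ : Path x y) (h : ∀ t, γ t = x) : c.f (Path.Homotopic.Quotient.mk γ) = 1 := by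
  have hy : y = x := by simpa using h 1
  subst hy
  have : γ = Path.refl y := by ext t; exact h t
  rw [this]
  exact c.one y

lemma Cocycle.congr' {X G : Type*} [TopologicalSpace X] [Group G] (c : Cocycle X G) {x y x' y' : X}
    (γ : Path x y) (γ' : Path x' y') (h : ∀ t, γ t = γ' t) :
    c.f (Path.Homotopic.Quotient.mk γ) = c.f (Path.Homotopic.Quotient.mk γ') := by
  have hx : x = x' := by have := h 0; simpa using this
  have hy : y = y' := by have := h 1; simpa using this
  subst hx hy
  have : γ = γ' := Path.ext (funext h)
  rw [this]

/-- A space `B` obtained from a closed subspace `A` by attaching arcs `c j` along their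
endpoints, as in a one-dimensional relative CW complex. -/
structure ArcData (A B J : Type*) [TopologicalSpace A] [TopologicalSpace B] where
  i : C(A, B)
  emb : Topology.IsClosedEmbedding i
  c : J → C(I, B)
  h0 : ∀ j, c j 0 ∈ Set.range i
  h1 : ∀ j, c j 1 ∈ Set.range i
  inj : ∀ j j' s s', 0 < s → s < 1 → c j s = c j' s' → j = j' ∧ s = s'
  out : ∀ j s, 0 < s → s < 1 → c j s ∉ Set.range i
  cov : ∀ b, (∃ a, i a = b) ∨ ∃ j s, 0 < s ∧ s < 1 ∧ c j s = b

namespace ArcData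
variable {A B J : Type*} [TopologicalSpace A] [TopologicalSpace B] [T2Space B] [Finite J]
  (D : ArcData A B J)

/-- The map of the unit interval collapsing `[0, 1/3]` and `[2/3, 1]`. -/
def stretch : C(I, I) where
  toFun s := Set.projIcc 0 1 zero_le_one (3 * (s : ℝ) - 1)
  continuous_toFun := by fun_prop

lemma stretch_low {s : I} (h : (s : ℝ) < 1 / 3) : stretch s = 0 :=
  Set.projIcc_of_le_left zero_le_one (by linarith)

lemma stretch_high {s : I} (h : 2 / 3 < (s : ℝ)) : stretch s = 1 :=
  Set.projIcc_of_right_le zero_le_one (by linarith)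

lemma trich (s : I) : s = 0 ∨ s = 1 ∨ (0 < s ∧ s < 1) := by
  rcases eq_or_lt_of_le (nonneg' : 0 ≤ s) with h | h
  · exact Or.inl h.symm
  · rcases eq_or_lt_of_le (le_one' : s ≤ 1) with h' | h'
    · exact Or.inr (Or.inl h')
    · exact Or.inr (Or.inr ⟨h, h'⟩)

lemma stretch_zero : stretch 0 = 0 := stretch_low (by norm_num)
lemma stretch_one : stretch 1 = 1 := stretch_high (by norm_num)

/-- The homotopy pushing the ends of the arcs into `A`. -/
lemma exists_push : ∃ H : C(B × I, B), (∀ a t, H (D.i a, t) = D.i a) ∧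
    ∀ j s t, H (D.c j s, t) = D.c j (convexComb s (stretch s) t) := by
  have hq := isQuotientMap_arcs D.i D.emb D.c (fun b => (D.cov b).imp id
    (fun ⟨j, s, _, _, h⟩ => ⟨j, s, h⟩))
  let h : C((A ⊕ ((_ : J) × I)) × I, B) :=
    ContinuousMap.uncurry
      ⟨Sum.elim (fun a => ContinuousMap.const I (D.i a))
        (fun z => (D.c z.1).comp ⟨convexComb z.2 (stretch z.2), continuous_convexComb _ _⟩), by
        refine continuous_sum_dom.2 ⟨?_, continuous_sigma fun j => ?_⟩
        · exact ContinuousMap.continuous_const'.comp D.i.continuous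
        · refine (ContinuousMap.curry
            (⟨fun z => D.c j (convexComb z.1 (stretch z.1) z.2), ?_⟩ : C(I × I, B))).continuous
          refine (D.c j).continuous.comp ?_
          exact continuous_convexComb_prod.comp (f := fun z : I × I => (z.1, stretch z.1, z.2))
            (by fun_prop)⟩
  have hA : ∀ a t, h (Sum.inl a, t) = D.i a := fun a t => rfl
  have hJ : ∀ j s t, h (Sum.inr ⟨j, s⟩, t) = D.c j (convexComb s (stretch s) t) :=
    fun a s t => rfl
  have hend : ∀ s t, s = 0 ∨ s = 1 → convexComb s (stretch s) t = s := by
    rintro s t (rfl | rfl)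
    · rw [stretch_zero]; simp
    · rw [stretch_one]; simp
  obtain ⟨H, hH⟩ := exists_homotopy_descend hq h (by
    have aux : ∀ a j s t, D.i a = D.c j s → D.i a = D.c j (convexComb s (stretch s) t) := by
      intro a j s t hab
      rcases trich s with hs | hs | ⟨hs, hs'⟩
      · rw [hend s t (Or.inl hs), hab]
      · rw [hend s t (Or.inr hs), hab]
      · exact (D.out j s hs hs' ⟨a, hab⟩).elim
    rintro (a | ⟨j, s⟩) (b | ⟨j', s'⟩) hab t
    · exact hab
    · exact aux _ _ _ _ hab
    · exact (aux _ _ _ _ hab.symm).symm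
    · have hab : D.c j s = D.c j' s' := hab
      rw [hJ, hJ]
      by_cases hs : 0 < s ∧ s < 1
      · obtain ⟨rfl, rfl⟩ := D.inj _ _ _ _ hs.1 hs.2 hab
        rfl
      · by_cases hs' : 0 < s' ∧ s' < 1
        · obtain ⟨rfl, rfl⟩ := D.inj _ _ _ _ hs'.1 hs'.2 hab.symm
          rfl
        · have e := trich s
          have e' := trich s'
          rw [hend s t (by tauto), hend s' t (by tauto), hab])
  exact ⟨H, fun a t => hH (Sum.inl a) t, fun j s t => hH (Sum.inr ⟨j, s⟩) t⟩

/-- The homotopy class of the piece of the arc `j` between two parameters. -/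
def E (j : J) (s t : I) : PQ (D.c j s) (D.c j t) :=
  (Path.Homotopic.Quotient.mk (segI s t)).map (D.c j)

lemma E_trans {G : Type*} [Group G] (F : Cocycle B G) (j : J) (s t u : I) :
    F.f (D.E j s t) * F.f (D.E j t u) = F.f (D.E j s u) := by
  rw [← F.mul, E, E, ← Cocycle.map_trans']
  exact F.arc_eq _ _ _

/-- Extension to `B` of a choice of paths in `A`, using the first half of each arc from its start
and the second half from its end. -/
lemma exists_basing {k : A} (α : ∀ a, PQ k a) : ∃ β : ∀ x : B, PQ (D.i k) x,
    (∀ a, β (D.i a) = (α a).map D.i) ∧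
    (∀ j (s : I), (s : ℝ) < 1 / 2 → β (D.c j s) = (β (D.c j 0)).trans (D.E j 0 s)) ∧
    (∀ j (s : I), 1 / 2 ≤ (s : ℝ) → β (D.c j s) = (β (D.c j 1)).trans (D.E j 1 s)) := by
  have st1 : ∀ x : B, ∃ q : PQ (D.i k) x, ∀ a (e : D.i a = x), q = e ▸ (α a).map D.i := by
    intro x
    by_cases hx : ∃ a, D.i a = x
    · obtain ⟨a, rfl⟩ := hx
      refine ⟨(α a).map D.i, fun a' e => ?_⟩
      obtain rfl := D.emb.injective e
      rfl
    · obtain ⟨j, s, -, -, rfl⟩ := (D.cov x).resolve_left hx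
      obtain ⟨a, ha⟩ := D.h0 j
      exact ⟨(((α a).map D.i).cast rfl ha.symm).trans (D.E j 0 s), fun a e => (hx ⟨a, e⟩).elim⟩
  choose g hg using st1
  have st2 : ∀ x : B, ∃ q : PQ (D.i k) x, (∀ a, D.i a = x → q = g x) ∧
      ∀ j (s : I) (e : D.c j s = x), 0 < s → s < 1 → q = e ▸ (if (s : ℝ) < 1 / 2 then
        (g (D.c j 0)).trans (D.E j 0 s) else (g (D.c j 1)).trans (D.E j 1 s)) := by
    intro x
    by_cases hx : ∃ a, D.i a = x
    · exact ⟨g x, fun _ _ => rfl, fun j s e h0 h1 => (D.out j s h0 h1 (e ▸ hx)).elim⟩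
    · obtain ⟨j, s, h0, h1, rfl⟩ := (D.cov x).resolve_left hx
      refine ⟨(if (s : ℝ) < 1 / 2 then
        (g (D.c j 0)).trans (D.E j 0 s) else (g (D.c j 1)).trans (D.E j 1 s)),
        fun a e => (hx ⟨a, e⟩).elim, fun j' s' e h0' h1' => ?_⟩
      obtain ⟨rfl, rfl⟩ := D.inj _ _ _ _ h0' h1' e
      rfl
  choose β hβ hβ' using st2
  have b0 : ∀ j, β (D.c j 0) = g (D.c j 0) := fun j => by
    obtain ⟨a, ha⟩ := D.h0 j
    exact hβ _ a ha
  have b1 : ∀ j, β (D.c j 1) = g (D.c j 1) := fun j => by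
    obtain ⟨a, ha⟩ := D.h1 j
    exact hβ _ a ha
  have Er : ∀ j s, D.E j s s = Path.Homotopic.Quotient.refl _ := by
    intro j s
    have : segI s s = Path.refl s := by ext t; simp [segI]
    rw [E, this]; rfl
  refine ⟨β, fun a => (hβ _ a rfl).trans (hg _ a rfl), fun j s hs => ?_, fun j s hs => ?_⟩
  · rcases trich s with rfl | rfl | ⟨h0, h1⟩
    · rw [Er, Path.Homotopic.Quotient.trans_refl]
    · norm_num at hs
    · rw [hβ' _ j s rfl h0 h1, b0]
      simp only [if_pos hs]
  · rcases trich s with rfl | rfl | ⟨h0, h1⟩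
    · norm_num at hs
    · rw [Er, Path.Homotopic.Quotient.trans_refl]
    · rw [hβ' _ j s rfl h0 h1, b1]
      simp only [if_neg (not_lt.2 hs)]

/-- The cover: `none` is a neighbourhood of `A`, and `some j` the open arc `j`. -/
def cover : Option J → Set B
  | none => (⋃ j, D.c j '' {s | 1 / 3 ≤ (s : ℝ) ∧ (s : ℝ) ≤ 2 / 3})ᶜ
  | some j => D.c j '' {s | 0 < s ∧ s < 1}

lemma cover_open (o : Option J) : IsOpen (D.cover o) := by
  cases o with
  | none =>
    refine (isClosed_iUnion_of_finite fun j => ?_).isOpen_compl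
    refine (IsClosed.isCompact ?_).image (D.c j).continuous |>.isClosed
    exact (isClosed_le continuous_const continuous_subtype_val).inter
      (isClosed_le continuous_subtype_val continuous_const)
  | some j =>
    have : D.cover (some j) = (Set.range D.i ∪ ⋃ j' : {j' // j' ≠ j}, Set.range (D.c j'))ᶜ := by
      ext x
      constructor
      · rintro ⟨s, ⟨h0, h1⟩, rfl⟩ (h | h)
        · exact D.out j s h0 h1 h
        · obtain ⟨⟨j', hj'⟩, t, ht⟩ := Set.mem_iUnion.1 h
          exact hj' (D.inj _ _ _ _ h0 h1 ht.symm).1.symm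
      · intro hx
        simp only [Set.mem_compl_iff, Set.mem_union, not_or] at hx
        obtain ⟨j', s, h0, h1, rfl⟩ := (D.cov x).resolve_left hx.1
        by_cases hj : j' = j
        · subst hj
          exact ⟨s, ⟨h0, h1⟩, rfl⟩
        · exact (hx.2 (Set.mem_iUnion.2 ⟨⟨j', hj⟩, s, rfl⟩)).elim
    rw [this]
    refine (D.emb.isClosed_range.union (isClosed_iUnion_of_finite fun j' => ?_)).isOpen_compl
    exact (isCompact_range (D.c j').continuous).isClosed

lemma i_mem_cover (a : A) : D.i a ∈ D.cover none := by
  intro h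
  obtain ⟨j, s, ⟨h1, h2⟩, h⟩ := Set.mem_iUnion.1 h
  refine D.out j s ?_ ?_ ⟨a, h.symm⟩
  · rw [← Subtype.coe_lt_coe, Set.Icc.coe_zero]; linarith
  · rw [← Subtype.coe_lt_coe, Set.Icc.coe_one]; linarith

lemma cover_none_cases {x : B} (hx : x ∈ D.cover none) : (∃ a, D.i a = x) ∨
    ∃ j s, D.c j s = x ∧ ((s : ℝ) < 1 / 3 ∨ 2 / 3 < (s : ℝ)) := by
  rcases D.cov x with h | ⟨j, s, _, _, rfl⟩
  · exact Or.inl h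
  · refine Or.inr ⟨j, s, rfl, ?_⟩
    by_contra hs
    push Not at hs
    exact hx (Set.mem_iUnion.2 ⟨j, s, hs, rfl⟩)

lemma cover_covers (x : B) : ∃ o, x ∈ D.cover o := by
  rcases D.cov x with ⟨a, rfl⟩ | ⟨j, s, h0, h1, rfl⟩
  · exact ⟨none, D.i_mem_cover a⟩
  · exact ⟨some j, s, ⟨h0, h1⟩, rfl⟩

/-- A path inside an open arc is the image of a path of parameters. -/
lemma exists_param {j : J} {x y : B} (γ : Path x y) (h : ∀ t, γ t ∈ D.cover (some j)) :
    ∃ (s t : I) (w : Path s t), ∀ r, (0 < w r ∧ w r < 1) ∧ D.c j (w r) = γ r := by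
  choose w hw hw' using h
  have hc : Continuous w := by
    rw [continuous_iff_isClosed]
    intro Z hZ
    have : w ⁻¹' Z = γ ⁻¹' (D.c j '' Z) := by
      ext r
      constructor
      · exact fun hr => ⟨w r, hr, hw' r⟩
      · rintro ⟨s, hs, e⟩
        have := (D.inj _ _ _ _ (hw r).1 (hw r).2 ((hw' r).trans e.symm)).2
        exact (congrArg (· ∈ Z) this).mpr hs
    rw [this]
    exact (hZ.isCompact.image (D.c j).continuous).isClosed.preimage γ.continuous
  exact ⟨w 0, w 1, ⟨⟨w, hc⟩, rfl, rfl⟩, fun r => ⟨hw r, hw' r⟩⟩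

end ArcData

end

/-! ### Attaching arcs adds free generators -/

section

open unitInterval Set.Icc
namespace ArcData
variable {A B J : Type*} [TopologicalSpace A] [TopologicalSpace B] [T2Space B] [Finite J]
  (D : ArcData A B J)

/-- The retraction of the neighbourhood `D.cover none` onto `A`. -/
lemma exists_retr (H : C(B × I, B)) (HA : ∀ a t, H (D.i a, t) = D.i a)
    (HJ : ∀ j s t, H (D.c j s, t) = D.c j (convexComb s (stretch s) t)) :
    ∃ r : C(D.cover none, A), ∀ x, D.i (r x) = H (x, 1) := by
  have key : ∀ x : D.cover none, ∃ a, D.i a = H (x, 1) := by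
    rintro ⟨x, hx⟩
    rcases D.cover_none_cases hx with ⟨a, rfl⟩ | ⟨j, s, rfl, hs | hs⟩
    · exact ⟨a, (HA a 1).symm⟩
    · rw [HJ, convexComb_one, stretch_low hs]; exact D.h0 j
    · rw [HJ, convexComb_one, stretch_high hs]; exact D.h1 j
  choose r hr using key
  refine ⟨⟨r, ?_⟩, hr⟩
  rw [D.emb.isEmbedding.continuous_iff]
  have : (⇑D.i ∘ r) = fun x : D.cover none => H ((x : B), 1) := funext hr
  rw [this]
  fun_prop

/-- The local value on paths near `A`; the junk value is `1` elsewhere. -/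
def fNone {G : Type*} [Group G] (F : Cocycle A G) (r : C(D.cover none, A)) {x y : B}
    (γ : Path x y) : G :=
  if h : ∀ t, γ t ∈ D.cover none then
    F.f (Path.Homotopic.Quotient.mk ((codR γ h).map r.continuous)) else 1

/-- The jump function of the arc `j`: trivial on the first half and `g` on the second. -/
def jump {G : Type*} [Group G] (g : J → G) (j : J) (x : B) : G :=
  if ∃ s : I, (s : ℝ) < 1 / 2 ∧ D.c j s = x then 1 else g j

lemma jump_eq {G : Type*} [Group G] (g : J → G) (j : J) (s : I) (h0 : 0 < s) (h1 : s < 1) :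
    D.jump g j (D.c j s) = if (s : ℝ) < 1 / 2 then 1 else g j := by
  rw [jump]
  by_cases hs : (s : ℝ) < 1 / 2
  · rw [if_pos ⟨s, hs, rfl⟩, if_pos hs]
  · rw [if_neg hs, if_neg]
    rintro ⟨t, ht, e⟩
    rw [(D.inj _ _ _ _ h0 h1 e.symm).2] at hs
    exact hs ht

/-- The local cocycle on `B` extending a cocycle `F` on `A`, with value `g j` for crossing the
middle of the arc `j`. -/
def localCocycle {G : Type*} [Group G] (F : Cocycle A G) (g : J → G)
    (H : C(B × I, B)) (HJ : ∀ j s t, H (D.c j s, t) = D.c j (convexComb s (stretch s) t))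
    (r : C(D.cover none, A)) (hr : ∀ x, D.i (r x) = H (x, 1)) : LocalCocycle D.cover G where
  f o {x y} γ := match o with
    | none => D.fNone F r γ
    | some j => (D.jump g j x)⁻¹ * D.jump g j y
  mul o {x y z} γ γ' h h' := by
    cases o with
    | none =>
      have h'' : ∀ t, (γ.trans γ') t ∈ D.cover none := by
        intro t
        rw [Path.trans_apply]
        split_ifs
        · exact h _
        · exact h' _
      simp only [fNone]
      rw [dif_pos h, dif_pos h', dif_pos h'', ← F.mul, ← Path.Homotopic.Quotient.mk_trans,
        ← Path.map_trans]
      refine F.congr' _ _ fun t => ?_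
      change r _ = r _
      congr 1
      ext
      change (γ.trans γ') t = ((codR γ h).trans (codR γ' h')) t
      rw [Path.trans_apply, Path.trans_apply]
      split_ifs <;> rfl
    | some j => simp only; group
  hom o {x y} γ γ' K hK := by
    cases o with
    | none =>
      have h : ∀ t, γ t ∈ D.cover none := fun t => by simpa using hK (0, t)
      have h' : ∀ t, γ' t ∈ D.cover none := fun t => by simpa using hK (1, t)
      simp only [fNone]
      rw [dif_pos h, dif_pos h']
      congr 1
      rw [Path.Homotopic.Quotient.eq]
      refine Path.Homotopic.map ?_ r
      exact ⟨{ toFun := fun z => ⟨K z, hK z⟩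
               continuous_toFun := by fun_prop
               map_zero_left := fun t => Subtype.ext (K.map_zero_left t)
               map_one_left := fun t => Subtype.ext (K.map_one_left t)
               prop' := fun t s hs => Subtype.ext (K.prop' t s hs) }⟩
    | some j => rfl
  agree := by
    have key : ∀ j {x y : B} (γ : Path x y), (∀ t, γ t ∈ D.cover none) →
        (∀ t, γ t ∈ D.cover (some j)) → D.fNone F r γ = (D.jump g j x)⁻¹ * D.jump g j y := by
      intro j x y γ h h'
      obtain ⟨s, t, w, hw⟩ := D.exists_param γ h'
      have hx : x = D.c j s := by have := (hw 0).2; simpa using this.symm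
      have hy : y = D.c j t := by have := (hw 1).2; simpa using this.symm
      have hs : 0 < s ∧ s < 1 := by simpa using (hw 0).1
      have ht : 0 < t ∧ t < 1 := by simpa using (hw 1).1
      have hmid : ∀ u, ¬ (1 / 3 ≤ (w u : ℝ) ∧ (w u : ℝ) ≤ 2 / 3) := fun u hu =>
        h u (Set.mem_iUnion.2 ⟨j, w u, hu, (hw u).2⟩)
      have hall : (∀ u, (w u : ℝ) < 1 / 3) ∨ ∀ u, 2 / 3 < (w u : ℝ) := by
        by_contra hcon
        push Not at hcon
        obtain ⟨⟨u, hu⟩, ⟨v, hv⟩⟩ := hcon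
        have hv' : (w v : ℝ) < 1 / 3 := by
          by_contra h1; exact hmid v ⟨not_lt.1 h1, hv⟩
        have hu' : 2 / 3 < (w u : ℝ) := by
          by_contra h1; exact hmid u ⟨hu, not_lt.1 h1⟩
        obtain ⟨z, hz⟩ := mem_range_of_exists_le_of_exists_ge
          (f := fun u : I => (w u : ℝ)) (c := 1 / 2) (by fun_prop) ⟨v, by linarith⟩
          ⟨u, by linarith⟩
        exact hmid z (by simp only at hz; constructor <;> linarith)
      have e1 : D.fNone F r γ = 1 := by
        rw [fNone, dif_pos h]
        apply F.const
        intro u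
        apply D.emb.injective
        change D.i (r ⟨γ u, _⟩) = D.i (r ⟨x, _⟩)
        have := (hw 0).2
        have hx' : x = D.c j (w 0) := by simpa using hx
        rw [hr, hr]
        simp only
        rw [← (hw u).2, HJ, (congrArg (fun z => H (z, 1)) hx' : H (x, 1) = _), HJ,
          convexComb_one, convexComb_one]
        rcases hall with ha | ha
        · rw [stretch_low (ha u), stretch_low (ha 0)]
        · rw [stretch_high (ha u), stretch_high (ha 0)]
      rw [e1, hx, hy, D.jump_eq g j s hs.1 hs.2, D.jump_eq g j t ht.1 ht.2]
      have h0 : w 0 = s := w.source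
      have h1 : w 1 = t := w.target
      rcases hall with ha | ha
      · have a0 := ha 0
        have a1 := ha 1
        rw [h0] at a0
        rw [h1] at a1
        rw [if_pos (by linarith), if_pos (by linarith)]; simp
      · have a0 := ha 0
        have a1 := ha 1
        rw [h0] at a0
        rw [h1] at a1
        rw [if_neg (by linarith), if_neg (by linarith)]; simp
    rintro (_ | j) (_ | j') x y γ h h'
    · rfl
    · exact key j' γ h h'
    · exact (key j γ h' h).symm
    · obtain ⟨s, hs, e⟩ := h 0
      obtain ⟨s', hs', e'⟩ := h' 0
      obtain ⟨rfl, -⟩ := D.inj _ _ _ _ hs.1 hs.2 (e.trans e'.symm)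
      rfl

/-- Attaching arcs to a path-connected space adds free generators to the fundamental group. -/
theorem coprod_free [PathConnectedSpace A] (k : A) :
    Nonempty (FundamentalGroup B (D.i k) ≃*
      Monoid.Coprod (FundamentalGroup A k) (FreeGroup J)) := by
  obtain ⟨α, hαk⟩ : ∃ α : ∀ a, PQ k a, α k = Path.Homotopic.Quotient.refl k :=
    ⟨Function.update (fun a => Path.Homotopic.Quotient.mk (PathConnectedSpace.somePath k a)) k
      (Path.Homotopic.Quotient.refl k), by simp⟩
  obtain ⟨β, hβi, hβ0, hβ1⟩ := D.exists_basing α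
  obtain ⟨H, HA, HJ⟩ := D.exists_push
  obtain ⟨r, hr⟩ := D.exists_retr H HA HJ
  let inl : FundamentalGroup A k →* Monoid.Coprod (FundamentalGroup A k) (FreeGroup J) :=
    Monoid.Coprod.inl
  let gen : J → Monoid.Coprod (FundamentalGroup A k) (FreeGroup J) :=
    fun j => Monoid.Coprod.inr (FreeGroup.of j)
  let FA : Cocycle A (Monoid.Coprod (FundamentalGroup A k) (FreeGroup J)) :=
    { f := fun p => inl ((Cocycle.based α).f p)
      mul := fun p q => by rw [(Cocycle.based α).mul, map_mul] }
  obtain ⟨Ψ, hΨ⟩ := (D.localCocycle FA gen H HJ r hr).exists_cocycle D.cover_open D.cover_covers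
  have hΨU : ∀ {x y : B} (γ : Path x y) (h : ∀ t, γ t ∈ D.cover none),
      Ψ.f (Path.Homotopic.Quotient.mk γ)
        = FA.f (Path.Homotopic.Quotient.mk ((codR γ h).map r.continuous)) := by
    intro x y γ h
    rw [hΨ none γ h]
    change D.fNone FA r γ = _
    rw [fNone, dif_pos h]
  have hΨV : ∀ j (s t : I), 0 < s → s < 1 → 0 < t → t < 1 →
      Ψ.f (D.E j s t) = (D.jump gen j (D.c j s))⁻¹ * D.jump gen j (D.c j t) := by
    intro j s t hs0 hs1 ht0 ht1
    refine hΨ (some j) ((segI s t).map (D.c j).continuous) fun u => ⟨segI s t u, ?_, rfl⟩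
    have hs0 : (0 : ℝ) < s := hs0
    have ht0 : (0 : ℝ) < t := ht0
    have hs1 : (s : ℝ) < 1 := hs1
    have ht1 : (t : ℝ) < 1 := ht1
    have hu0 := u.2.1
    have hu1 := u.2.2
    constructor
    · rw [← Subtype.coe_lt_coe]
      change (0 : ℝ) < ((convexComb s t u : I) : ℝ)
      rw [coe_convexComb]
      rcases hu0.eq_or_lt with h | h
      · rw [← h]; simpa using hs0
      · nlinarith [mul_nonneg (sub_nonneg.2 hu1) hs0.le, mul_pos h ht0]
    · rw [← Subtype.coe_lt_coe]
      change ((convexComb s t u : I) : ℝ) < (1 : ℝ)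
      rw [coe_convexComb]
      rcases hu0.eq_or_lt with h | h
      · rw [← h]; simpa using hs1
      · nlinarith [mul_nonneg (sub_nonneg.2 hu1) (sub_nonneg.2 hs1.le), mul_pos h (sub_pos.2 ht1)]
  -- the cocycle of `B` itself and its values on arcs
  set Δ := Cocycle.based β with hΔ
  let om : J → FundamentalGroup B (D.i k) := fun j => Δ.f (D.E j 0 1)
  have hΔ0 : ∀ j (s : I), Δ.f (D.E j 0 s) = if (s : ℝ) < 1 / 2 then 1 else om j := by
    intro j s
    split_ifs with hs
    · exact Cocycle.based_eq_one β _ (hβ0 j s hs)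
    · rw [← D.E_trans Δ j 0 1 s, Cocycle.based_eq_one β _ (hβ1 j s (not_lt.1 hs)), mul_one]
  have hΔ : ∀ j (s t : I), Δ.f (D.E j s t)
      = (if (s : ℝ) < 1 / 2 then 1 else om j)⁻¹ * (if (t : ℝ) < 1 / 2 then 1 else om j) := by
    intro j s t
    rw [← hΔ0, ← hΔ0, ← D.E_trans Δ j 0 s t]
    group
  let φ : Monoid.Coprod (FundamentalGroup A k) (FreeGroup J) →* FundamentalGroup B (D.i k) :=
    Monoid.Coprod.lift (FundamentalGroup.map D.i k) (FreeGroup.lift om)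
  have hφl : ∀ p, φ (inl p) = FundamentalGroup.map D.i k p :=
    fun p => Monoid.Coprod.lift_apply_inl _ _ p
  have hφg : ∀ j, φ (gen j) = om j := fun j => by
    change φ (Monoid.Coprod.inr (FreeGroup.of j)) = om j
    rw [Monoid.Coprod.lift_apply_inr, FreeGroup.lift_apply_of]
  have hφj : ∀ j s, 0 < s → s < 1 → φ (D.jump gen j (D.c j s))
      = if (s : ℝ) < 1 / 2 then 1 else om j := by
    intro j s h0 h1
    rw [D.jump_eq gen j s h0 h1]
    split_ifs
    · exact map_one φ
    · exact hφg j
  -- tracks of the pushing homotopy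
  let τ : ∀ x : B, Path x (H (x, 1)) := fun x =>
    ⟨⟨fun t => H (x, t), by fun_prop⟩, by
      rcases D.cov x with ⟨a, rfl⟩ | ⟨j, s, -, -, rfl⟩
      · exact HA a 0
      · simp [HJ], rfl⟩
  have hτ : ∀ x ∈ D.cover none, Δ.f (Path.Homotopic.Quotient.mk (τ x)) = 1 := by
    intro x hx
    rcases D.cover_none_cases hx with ⟨a, rfl⟩ | ⟨j, s, rfl, hs⟩
    · exact Δ.const _ fun t => HA a t
    · have : Δ.f (Path.Homotopic.Quotient.mk (τ (D.c j s))) = Δ.f (D.E j s (stretch s)) :=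
        Δ.congr' (τ (D.c j s)) ((segI s (stretch s)).map (D.c j).continuous) fun t => HJ j s t
      rw [this, hΔ]
      rcases hs with hs | hs
      · rw [stretch_low hs, if_pos (by linarith), if_pos (by norm_num)]; simp
      · rw [stretch_high hs, if_neg (by linarith), if_neg (by norm_num)]; simp
  have hU : ∀ {x y : B} (γ : Path x y), (∀ t, γ t ∈ D.cover none) →
      φ (Ψ.f (Path.Homotopic.Quotient.mk γ)) = Δ.f (Path.Homotopic.Quotient.mk γ) := by
    intro x y γ h
    rw [hΨU γ h]
    change φ (inl _) = _
    rw [hφl, Cocycle.map_based D.i α β hβi]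
    have nat := Δ.naturality (ContinuousMap.id B) ⟨fun x => H (x, 1), by fun_prop⟩ H
      (fun x => (τ x).source) (fun x => rfl) τ (fun x t => rfl) (Path.Homotopic.Quotient.mk γ)
    have hx : x ∈ D.cover none := by simpa using h 0
    have hy : y ∈ D.cover none := by simpa using h 1
    have hx1 := hτ x hx
    have hy1 := hτ y hy
    replace nat := (congrArg (Δ.f ((Path.Homotopic.Quotient.mk γ).map (ContinuousMap.id B)) * ·)
      hy1).symm.trans (nat.trans (congrArg (· * Δ.f _) hx1))
    rw [mul_one, one_mul] at nat
    have e1 : Δ.f ((Path.Homotopic.Quotient.mk γ).map (ContinuousMap.id B))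
        = Δ.f (Path.Homotopic.Quotient.mk γ) :=
      Δ.congr' (γ.map (ContinuousMap.id B).continuous) γ fun t => rfl
    rw [← e1, nat]
    exact Δ.congr' (((codR γ h).map r.continuous).map D.i.continuous)
      (γ.map (ContinuousMap.continuous ⟨fun x => H (x, 1), by fun_prop⟩)) fun t => hr _
  let φΨ : Cocycle B (FundamentalGroup B (D.i k)) :=
    { f := fun p => φ (Ψ.f p)
      mul := fun p q => by rw [Ψ.mul, map_mul] }
  have hall : ∀ {x y : B} (p : PQ x y), φ (Ψ.f p) = Δ.f p := by
    intro x y p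
    refine Cocycle.unique D.cover_open D.cover_covers φΨ Δ ?_ p
    rintro (_ | j) x y γ h
    · exact hU γ h
    · obtain ⟨s, t, w, hw⟩ := D.exists_param γ h
      have hs : 0 < s ∧ s < 1 := by simpa using (hw 0).1
      have ht : 0 < t ∧ t < 1 := by simpa using (hw 1).1
      have red : ∀ {G' : Type _} [Group G'] (F : Cocycle B G'),
          F.f (Path.Homotopic.Quotient.mk γ) = F.f (D.E j s t) := by
        intro G' _ F
        rw [F.congr' γ (w.map (D.c j).continuous) fun u => (hw u).2.symm]
        exact F.arc_eq (D.c j) (Path.Homotopic.Quotient.mk w) _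
      rw [red φΨ, red Δ, hΔ]
      change φ (Ψ.f _) = _
      rw [hΨV j s t hs.1 hs.2 ht.1 ht.2, map_mul, map_inv, hφj j s hs.1 hs.2, hφj j t ht.1 ht.2]
  have hβk : β (D.i k) = Path.Homotopic.Quotient.refl (D.i k) := by
    rw [hβi, hαk]; rfl
  have left : φ.comp (Ψ.toHom (D.i k)) = MonoidHom.id _ := by
    ext p
    change φ (Ψ.f p.toPath)⁻¹ = p
    rw [map_inv, hall]
    exact Cocycle.based_toHom β hβk p
  have hΨi : ∀ {a b : A} (p : PQ a b), Ψ.f (p.map D.i) = FA.f p := by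
    intro a b p
    refine Quotient.inductionOn p fun γ => ?_
    have h : ∀ t, (γ.map D.i.continuous) t ∈ D.cover none := fun t => D.i_mem_cover _
    have := hΨU (γ.map D.i.continuous) h
    refine this.trans (FA.congr' _ γ fun t => ?_)
    apply D.emb.injective
    change D.i (r _) = _
    rw [hr]
    exact HA (γ t) 1
  have hFA : ∀ a, FA.f (α a) = 1 := by
    intro a
    change inl _ = 1
    rw [Cocycle.based_eq_one α _ (by rw [hαk, Path.Homotopic.Quotient.refl_trans]), map_one]
  have hΨβ : ∀ x ∈ Set.range D.i, Ψ.f (β x) = 1 := by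
    rintro _ ⟨a, rfl⟩
    rw [hβi, hΨi, hFA]
  have hΨend : ∀ j (s t : I), ((s : ℝ) < 1 / 3 ∧ (t : ℝ) < 1 / 3) ∨
      (2 / 3 < (s : ℝ) ∧ 2 / 3 < (t : ℝ)) → Ψ.f (D.E j s t) = 1 := by
    intro j s t hst
    have hu : ∀ u, ((segI s t u : ℝ) < 1 / 3 ∧ (s : ℝ) < 1 / 3) ∨
        (2 / 3 < (segI s t u : ℝ) ∧ 2 / 3 < (s : ℝ)) := by
      intro u
      have hu0 := u.2.1
      have hu1 := u.2.2
      change (((convexComb s t u : I) : ℝ) < _ ∧ _) ∨ (_ < ((convexComb s t u : I) : ℝ) ∧ _)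
      rw [coe_convexComb]
      rcases hst with ⟨h1, h2⟩ | ⟨h1, h2⟩
      · refine Or.inl ⟨?_, h1⟩
        rcases hu0.eq_or_lt with h | h
        · rw [← h]; simpa using h1
        · nlinarith [mul_nonneg (sub_nonneg.2 hu1) (sub_nonneg.2 h1.le), mul_pos h (sub_pos.2 h2)]
      · refine Or.inr ⟨?_, h1⟩
        rcases hu0.eq_or_lt with h | h
        · rw [← h]; simpa using h1
        · nlinarith [mul_nonneg (sub_nonneg.2 hu1) (sub_nonneg.2 h1.le), mul_pos h (sub_pos.2 h2)]
    have hmem : ∀ u, ((segI s t).map (D.c j).continuous) u ∈ D.cover none := by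
      intro u hmem
      obtain ⟨j', s', ⟨h1, h2⟩, e⟩ := Set.mem_iUnion.1 hmem
      have e : D.c j' s' = D.c j (segI s t u) := e
      obtain ⟨-, rfl⟩ := D.inj _ _ _ _ (by rw [← Subtype.coe_lt_coe, Set.Icc.coe_zero]; linarith)
        (by rw [← Subtype.coe_lt_coe, Set.Icc.coe_one]; linarith) e
      rcases hu u with ⟨h, _⟩ | ⟨h, _⟩ <;> linarith
    refine (hΨU _ hmem).trans (FA.const _ fun u => ?_)
    apply D.emb.injective
    change D.i (r _) = D.i (r _)
    rw [hr, hr]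
    change H (D.c j (segI s t u), 1) = H (D.c j s, 1)
    rw [HJ, HJ, convexComb_one, convexComb_one]
    rcases hu u with ⟨h, h'⟩ | ⟨h, h'⟩
    · rw [stretch_low h, stretch_low h']
    · rw [stretch_high h, stretch_high h']
  have hΨom : ∀ j, Ψ.toHom (D.i k) (om j) = gen j := by
    intro j
    change (Ψ.f (Path.Homotopic.Quotient.symm
      (((β (D.c j 0)).trans (D.E j 0 1)).trans (β (D.c j 1)).symm)))⁻¹ = gen j
    rw [Ψ.inv, inv_inv, Ψ.mul, Ψ.mul, Ψ.inv, hΨβ _ (D.h0 j), hΨβ _ (D.h1 j), one_mul, inv_one,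
      mul_one]
    let u : I := ⟨1 / 6, by norm_num, by norm_num⟩
    let v : I := ⟨5 / 6, by norm_num, by norm_num⟩
    have hu0 : 0 < u := by rw [← Subtype.coe_lt_coe]; norm_num [u]
    have hu1 : u < 1 := by rw [← Subtype.coe_lt_coe]; norm_num [u]
    have hv0 : 0 < v := by rw [← Subtype.coe_lt_coe]; norm_num [v]
    have hv1 : v < 1 := by rw [← Subtype.coe_lt_coe]; norm_num [v]
    rw [← D.E_trans Ψ j 0 u 1, ← D.E_trans Ψ j u v 1,
      hΨend j 0 u (Or.inl (by norm_num [u])), hΨend j v 1 (Or.inr (by norm_num [v])),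
      hΨV j u v hu0 hu1 hv0 hv1, D.jump_eq gen j u hu0 hu1, D.jump_eq gen j v hv0 hv1,
      if_pos (by norm_num [u]), if_neg (by norm_num [v])]
    simp
  have right : (Ψ.toHom (D.i k)).comp φ = MonoidHom.id _ := by
    apply Monoid.Coprod.hom_ext
    · ext p
      change Ψ.toHom (D.i k) (φ (inl p)) = inl p
      rw [hφl]
      change (Ψ.f (Path.Homotopic.Quotient.map p.toPath D.i))⁻¹ = inl p
      rw [hΨi]
      change (inl _)⁻¹ = inl p
      rw [← map_inv]
      congr 1
      exact Cocycle.based_toHom α hαk p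
    · apply FreeGroup.ext_hom
      intro j
      change Ψ.toHom (D.i k) (φ (gen j)) = gen j
      rw [hφg, hΨom]
  exact ⟨MonoidHom.toMulEquiv _ _ left right⟩

end ArcData

end

/-! ### Coordinates on a bunch of grapes -/

section

section Geometry

variable {VT : Type} [Fintype VT] [DecidableEq VT] {T : SimpleGraph VT} {ℓ : VT → ℕ}

/-- The grapes of the bunch, all together: a grape is a stem vertex `v` with an index below
`ℓ v`. -/
abbrev Grape (ℓ : VT → ℕ) : Type := Σ v : VT, Fin (ℓ v)

/-- The point at time `s` on the segment from `e_v` to `e_u`. -/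
def st (v u : VT) (s : ℝ) : GrapeVert VT ℓ → ℝ :=
  Sum.elim (fun z => (if z = v then 1 - s else 0) + (if z = u then s else 0)) (fun _ => 0)

/-- The loop around the grape `g`, at constant speed: it leaves the stem vertex at time `0`,
meets the other two vertices of the triangle at times `1 / 3` and `2 / 3`, and is back at
time `1`. -/
def gr (g : Grape ℓ) (θ : ℝ) : GrapeVert VT ℓ → ℝ :=
  Sum.elim (fun z => if z = g.1 then max 0 (max (1 - 3 * θ) (3 * θ - 2)) else 0)
    (fun p => if (⟨p.1, p.2.1⟩ : Grape ℓ) = g then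
      (if p.2.2 = 0 then max 0 (1 - |3 * θ - 1|) else max 0 (1 - |3 * θ - 2|)) else 0)

lemma st_rev (v u : VT) (s : ℝ) : (st v u s : GrapeVert VT ℓ → ℝ) = st u v (1 - s) := by
  funext w
  rcases w with z | p
  · simp only [st, Sum.elim_inl]; rw [add_comm]; simp
  · rfl

lemma st_apply (v u : VT) (s : ℝ) (z : VT) : (st v u s : GrapeVert VT ℓ → ℝ) (Sum.inl z) =
    (if z = v then 1 - s else 0) + (if z = u then s else 0) := rfl

lemma gr_apply_inl (g : Grape ℓ) (θ : ℝ) (z : VT) : gr g θ (Sum.inl z) =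
    if z = g.1 then max 0 (max (1 - 3 * θ) (3 * θ - 2)) else 0 := rfl

lemma gr_apply_inr (g : Grape ℓ) (θ : ℝ) (v : VT) (i : Fin (ℓ v)) (j : Fin 2) :
    gr g θ (Sum.inr ⟨v, (i, j)⟩) = if (⟨v, i⟩ : Grape ℓ) = g then
      (if j = 0 then max 0 (1 - |3 * θ - 1|) else max 0 (1 - |3 * θ - 2|)) else 0 := rfl

lemma basisVec_inl (v u : VT) :
    basisVec (Sum.inl v : GrapeVert VT ℓ) = (st v u 0 : GrapeVert VT ℓ → ℝ) := by
  funext w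
  rcases w with z | p
  · simp [basisVec, st]
  · simp [basisVec, st]

lemma basisVec_inl' (v u : VT) :
    basisVec (Sum.inl v : GrapeVert VT ℓ) = (st u v 1 : GrapeVert VT ℓ → ℝ) := by
  rw [st_rev, sub_self, basisVec_inl v u]

lemma basisVec_gr0 (g : Grape ℓ) :
    basisVec (Sum.inl g.1 : GrapeVert VT ℓ) = gr g 0 := by
  funext w
  rcases w with z | p
  · have : max (0 : ℝ) (max (1 - 3 * 0) (3 * 0 - 2)) = 1 := by norm_num
    simp only [basisVec, gr, Sum.elim_inl, this, Sum.inl.injEq]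
  · simp [basisVec, gr]

lemma basisVec_gr1 (g : Grape ℓ) :
    basisVec (Sum.inl g.1 : GrapeVert VT ℓ) = gr g 1 := by
  funext w
  rcases w with z | p
  · simp [basisVec, gr]; norm_num
  · simp [basisVec, gr]; norm_num

lemma st_comb (v u : VT) (s : ℝ) : (st v u s : GrapeVert VT ℓ → ℝ) =
    (1 - s) • basisVec (Sum.inl v : GrapeVert VT ℓ) + s • basisVec (Sum.inl u) := by
  funext w
  change _ = (1 - s) * _ + s * _
  rcases w with z | p
  · simp [basisVec, st]
  · simp [basisVec, st]

lemma gr_comb0 (g : Grape ℓ) (s : ℝ) (h0 : 0 ≤ s) (h1 : s ≤ 1) : gr g (s / 3) =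
    (1 - s) • basisVec (Sum.inl g.1 : GrapeVert VT ℓ)
      + s • basisVec (Sum.inr ⟨g.1, (g.2, 0)⟩ : GrapeVert VT ℓ) := by
  obtain ⟨v, i⟩ := g
  funext w
  change _ = (1 - s) * _ + s * _
  rcases w with z | ⟨v', i', j⟩
  · have : max 0 (max (1 - 3 * (s / 3)) (3 * (s / 3) - 2)) = 1 - s := by
      rw [max_eq_left (a := 1 - 3 * (s / 3)) (by linarith), max_eq_right (by linarith)]; ring
    simp only [gr, Sum.elim_inl, this]
    simp [basisVec]
  · rw [gr_apply_inr]
    have e0 : max 0 (1 - |3 * (s / 3) - 1|) = s := by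
      rw [abs_of_nonpos (by linarith), max_eq_right (by linarith)]; ring
    have e1 : max 0 (1 - |3 * (s / 3) - 2|) = 0 := by
      rw [abs_of_nonpos (by linarith), max_eq_left (by linarith)]
    rw [e0, e1]
    by_cases hv : v' = v
    · subst hv
      by_cases hi : i' = i
      · subst hi
        fin_cases j <;> simp [basisVec]
      · simp [basisVec, hi]
    · simp [basisVec, hv]

lemma gr_comb1 (g : Grape ℓ) (s : ℝ) (h0 : 0 ≤ s) (h1 : s ≤ 1) : gr g (1 - s / 3) =
    (1 - s) • basisVec (Sum.inl g.1 : GrapeVert VT ℓ)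
      + s • basisVec (Sum.inr ⟨g.1, (g.2, 1)⟩ : GrapeVert VT ℓ) := by
  obtain ⟨v, i⟩ := g
  funext w
  change _ = (1 - s) * _ + s * _
  rcases w with z | ⟨v', i', j⟩
  · have : max 0 (max (1 - 3 * (1 - s / 3)) (3 * (1 - s / 3) - 2)) = 1 - s := by
      rw [max_eq_right (b := 3 * (1 - s / 3) - 2) (by linarith), max_eq_right (by linarith)]; ring
    simp only [gr, Sum.elim_inl, this]
    simp [basisVec]
  · rw [gr_apply_inr]
    have e0 : max 0 (1 - |3 * (1 - s / 3) - 2|) = s := by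
      rw [abs_of_nonneg (by linarith), max_eq_right (by linarith)]; ring
    have e1 : max 0 (1 - |3 * (1 - s / 3) - 1|) = 0 := by
      rw [abs_of_nonneg (by linarith), max_eq_left (by linarith)]
    rw [e0, e1]
    by_cases hv : v' = v
    · subst hv
      by_cases hi : i' = i
      · subst hi
        fin_cases j <;> simp [basisVec]
      · simp [basisVec, hi]
    · simp [basisVec, hv]

lemma gr_comb2 (g : Grape ℓ) (s : ℝ) (h0 : 0 ≤ s) (h1 : s ≤ 1) : gr g ((1 + s) / 3) =
    (1 - s) • basisVec (Sum.inr ⟨g.1, (g.2, 0)⟩ : GrapeVert VT ℓ)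
      + s • basisVec (Sum.inr ⟨g.1, (g.2, 1)⟩ : GrapeVert VT ℓ) := by
  obtain ⟨v, i⟩ := g
  funext w
  change _ = (1 - s) * _ + s * _
  rcases w with z | ⟨v', i', j⟩
  · have : max 0 (max (1 - 3 * ((1 + s) / 3)) (3 * ((1 + s) / 3) - 2)) = 0 := by
      rw [max_eq_left]; apply max_le <;> linarith
    simp only [gr, Sum.elim_inl, this]
    simp [basisVec]
  · rw [gr_apply_inr]
    have e0 : max 0 (1 - |3 * ((1 + s) / 3) - 1|) = 1 - s := by
      rw [abs_of_nonneg (by linarith), max_eq_right (by linarith)]; ring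
    have e1 : max 0 (1 - |3 * ((1 + s) / 3) - 2|) = s := by
      rw [abs_of_nonpos (by linarith), max_eq_right (by linarith)]; ring
    rw [e0, e1]
    by_cases hv : v' = v
    · subst hv
      by_cases hi : i' = i
      · subst hi
        fin_cases j <;> simp [basisVec]
      · simp [basisVec, hi]
    · simp [basisVec, hv]

/-! Adjacency in the bunch of grapes. -/

lemma adj_stem {a b : VT} (h : T.Adj a b) :
    (bunchOfGrapes T ℓ).Adj (Sum.inl a : GrapeVert VT ℓ) (Sum.inl b) := by
  refine (SimpleGraph.fromEdgeSet_adj _).2 ?_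
  exact ⟨Or.inl (Or.inl ⟨a, b, h, rfl⟩), fun e => h.ne (Sum.inl.inj e)⟩

lemma adj_leg (g : Grape ℓ) (j : Fin 2) :
    (bunchOfGrapes T ℓ).Adj (Sum.inl g.1 : GrapeVert VT ℓ) (Sum.inr ⟨g.1, (g.2, j)⟩) := by
  refine (SimpleGraph.fromEdgeSet_adj _).2 ?_
  exact ⟨Or.inl (Or.inr ⟨g.1, g.2, j, rfl⟩), fun e => by cases e⟩

lemma adj_top (g : Grape ℓ) : (bunchOfGrapes T ℓ).Adj
    (Sum.inr ⟨g.1, (g.2, 0)⟩ : GrapeVert VT ℓ) (Sum.inr ⟨g.1, (g.2, 1)⟩) := by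
  refine (SimpleGraph.fromEdgeSet_adj _).2 ?_
  refine ⟨Or.inr ⟨g.1, g.2, rfl⟩, fun e => ?_⟩
  have := Sum.inr.inj e
  simp at this

lemma mem_realization {G : SimpleGraph (GrapeVert VT ℓ)} {x : GrapeVert VT ℓ → ℝ}
    {u v : GrapeVert VT ℓ}
    (h : G.Adj u v) (hx : x ∈ segment ℝ (basisVec u) (basisVec v)) : x ∈ realization G :=
  Set.mem_iUnion.2 ⟨u, Set.mem_iUnion.2 ⟨v, Set.mem_iUnion.2 ⟨h, hx⟩⟩⟩

lemma comb_mem {x y : GrapeVert VT ℓ → ℝ} {s : ℝ} (h0 : 0 ≤ s) (h1 : s ≤ 1) :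
    (1 - s) • x + s • y ∈ segment ℝ x y := by
  rw [segment_eq_image]
  exact ⟨s, ⟨h0, h1⟩, rfl⟩

/-- The three kinds of edges, up to orientation. -/
lemma adj_cases {p q : GrapeVert VT ℓ} (h : (bunchOfGrapes T ℓ).Adj p q)
    {P : GrapeVert VT ℓ → GrapeVert VT ℓ → Prop} (symm : ∀ p q, P p q → P q p)
    (h1 : ∀ a b, T.Adj a b → P (Sum.inl a) (Sum.inl b))
    (h2 : ∀ (g : Grape ℓ) j, P (Sum.inl g.1) (Sum.inr ⟨g.1, (g.2, j)⟩))
    (h3 : ∀ g : Grape ℓ, P (Sum.inr ⟨g.1, (g.2, 0)⟩) (Sum.inr ⟨g.1, (g.2, 1)⟩)) : P p q := by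
  replace h := (SimpleGraph.fromEdgeSet_adj _).1 h
  rcases h.1 with (⟨a, b, hab, e⟩ | ⟨v, i, j, e⟩) | ⟨v, i, e⟩
  · rcases Sym2.eq_iff.1 e with ⟨rfl, rfl⟩ | ⟨rfl, rfl⟩
    · exact h1 a b hab
    · exact symm _ _ (h1 a b hab)
  · rcases Sym2.eq_iff.1 e with ⟨rfl, rfl⟩ | ⟨rfl, rfl⟩
    · exact h2 ⟨v, i⟩ j
    · exact symm _ _ (h2 ⟨v, i⟩ j)
  · rcases Sym2.eq_iff.1 e with ⟨rfl, rfl⟩ | ⟨rfl, rfl⟩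
    · exact h3 ⟨v, i⟩
    · exact symm _ _ (h3 ⟨v, i⟩)

lemma st_mem {a b : VT} (h : T.Adj a b) {s : ℝ} (hs : s ∈ Set.Icc (0 : ℝ) 1) :
    st a b s ∈ realization (bunchOfGrapes T ℓ) := by
  refine mem_realization (adj_stem h) ?_
  rw [st_comb]
  exact comb_mem hs.1 hs.2

lemma gr_mem_edge (T : SimpleGraph VT) (g : Grape ℓ) {θ : ℝ} (hθ : θ ∈ Set.Icc (0 : ℝ) 1) :
    ∃ p q : GrapeVert VT ℓ, (bunchOfGrapes T ℓ).Adj p q ∧ stemOf p = g.1 ∧ stemOf q = g.1 ∧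
      gr g θ ∈ segment ℝ (basisVec p) (basisVec q) := by
  obtain ⟨h0, h1⟩ := hθ
  rcases le_total θ (1 / 3) with h | h
  · refine ⟨_, _, adj_leg g 0, rfl, rfl, ?_⟩
    have := gr_comb0 g (3 * θ) (by linarith) (by linarith)
    rw [show 3 * θ / 3 = θ by ring] at this
    rw [this]
    exact comb_mem (by linarith) (by linarith)
  rcases le_total θ (2 / 3) with h' | h'
  · refine ⟨_, _, adj_top g, rfl, rfl, ?_⟩
    have := gr_comb2 g (3 * θ - 1) (by linarith) (by linarith)
    rw [show (1 + (3 * θ - 1)) / 3 = θ by ring] at this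
    rw [this]
    exact comb_mem (by linarith) (by linarith)
  · refine ⟨_, _, adj_leg g 1, rfl, rfl, ?_⟩
    have := gr_comb1 g (3 * (1 - θ)) (by linarith) (by linarith)
    rw [show 1 - 3 * (1 - θ) / 3 = θ by ring] at this
    rw [this]
    exact comb_mem (by linarith) (by linarith)

lemma gr_mem (g : Grape ℓ) {θ : ℝ} (hθ : θ ∈ Set.Icc (0 : ℝ) 1) :
    gr g θ ∈ realization (bunchOfGrapes T ℓ) := by
  obtain ⟨p, q, h, -, -, hx⟩ := gr_mem_edge T g hθ
  exact mem_realization h hx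

/-- Every point of the realization is on a stem edge or on a grape. -/
lemma realization_cases {x : GrapeVert VT ℓ → ℝ} (hx : x ∈ realization (bunchOfGrapes T ℓ)) :
    (∃ a b, T.Adj a b ∧ ∃ s ∈ Set.Icc (0 : ℝ) 1, x = st a b s) ∨
      ∃ (g : Grape ℓ), ∃ θ ∈ Set.Icc (0 : ℝ) 1, x = gr g θ := by
  simp only [realization, Set.mem_iUnion] at hx
  obtain ⟨p, q, h, hx⟩ := hx
  revert hx
  refine adj_cases h (P := fun p q => x ∈ segment ℝ (basisVec p) (basisVec q) → _) ?_ ?_ ?_ ?_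
  · intro p q h hx
    exact h (segment_symm ℝ (basisVec p) (basisVec q) ▸ hx)
  · intro a b hab hx
    rw [segment_eq_image] at hx
    obtain ⟨s, hs, rfl⟩ := hx
    exact Or.inl ⟨a, b, hab, s, hs, (st_comb a b s).symm⟩
  · intro g j hx
    rw [segment_eq_image] at hx
    obtain ⟨s, hs, rfl⟩ := hx
    refine Or.inr ⟨g, ?_⟩
    obtain ⟨h0, h1⟩ := hs
    fin_cases j
    · exact ⟨s / 3, ⟨by linarith, by linarith⟩, (gr_comb0 g s h0 h1).symm⟩
    · exact ⟨1 - s / 3, ⟨by linarith, by linarith⟩, (gr_comb1 g s h0 h1).symm⟩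
  · intro g hx
    rw [segment_eq_image] at hx
    obtain ⟨s, hs, rfl⟩ := hx
    obtain ⟨h0, h1⟩ := hs
    exact Or.inr ⟨g, (1 + s) / 3, ⟨by linarith, by linarith⟩, (gr_comb2 g s h0 h1).symm⟩

/-! Equality of points. -/

lemma st_eq_st {a b c d : VT} {s t : ℝ} (hab : a ≠ b) (hcd : c ≠ d)
    (hs : s ∈ Set.Icc (0 : ℝ) 1) (ht : t ∈ Set.Icc (0 : ℝ) 1)
    (h : (st a b s : GrapeVert VT ℓ → ℝ) = st c d t) :
    (a = c ∧ b = d ∧ s = t) ∨ (a = d ∧ b = c ∧ t = 1 - s) ∨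
      ∃ z, ((s = 0 ∧ z = a) ∨ (b = z ∧ s = 1)) ∧ ((t = 0 ∧ z = c) ∨ (d = z ∧ t = 1)) := by
  obtain ⟨hs0, hs1⟩ := hs
  obtain ⟨ht0, ht1⟩ := ht
  have ha := congrFun h (Sum.inl a)
  have hb := congrFun h (Sum.inl b)
  have hc := congrFun h (Sum.inl c)
  have hd := congrFun h (Sum.inl d)
  simp only [st_apply, if_true, if_neg hab, if_neg hab.symm, if_neg hcd, if_neg hcd.symm]
    at ha hb hc hd
  by_cases h1 : a = c
  · subst h1
    by_cases h2 : b = d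
    · subst h2
      simp [hab] at ha
      exact Or.inl ⟨rfl, rfl, ha⟩
    · simp [hab, hcd, h2, hab.symm] at ha hb hd
      refine Or.inr (Or.inr ⟨a, Or.inl ⟨hb, rfl⟩, Or.inl ⟨by linarith, rfl⟩⟩)
  · by_cases h2 : b = c
    · subst h2
      by_cases h3 : a = d
      · subst h3
        simp [hab.symm, hab] at ha hb
        exact Or.inr (Or.inl ⟨rfl, rfl, by linarith⟩)
      · simp [h1, h3, hcd] at ha hb
        refine Or.inr (Or.inr ⟨b, Or.inr ⟨rfl, by linarith⟩, Or.inl ⟨by linarith, rfl⟩⟩)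
    · by_cases h3 : a = d
      · subst h3
        simp [hab, hab.symm, h2, h1] at ha hb
        exact Or.inr (Or.inr ⟨a, Or.inl ⟨hb, rfl⟩, Or.inr ⟨rfl, by linarith⟩⟩)
      · by_cases h4 : b = d
        · subst h4
          simp [hab, hab.symm, hcd, hcd.symm, h1] at ha hb
          exact Or.inr (Or.inr ⟨b, Or.inr ⟨rfl, by linarith⟩, Or.inr ⟨rfl, by linarith⟩⟩)
        · simp [h1, h2, h3, h4] at ha hb
          linarith

lemma gr_pos (g : Grape ℓ) {θ : ℝ} (h0 : 0 < θ) (h1 : θ < 1) :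
    gr g θ (Sum.inr ⟨g.1, (g.2, 0)⟩) ≠ 0 ∨ gr g θ (Sum.inr ⟨g.1, (g.2, 1)⟩) ≠ 0 := by
  simp only [gr_apply_inr, if_true]
  rcases lt_or_ge θ (2 / 3) with h | h
  · left
    apply ne_of_gt
    apply lt_max_of_lt_right
    have : |3 * θ - 1| < 1 := by rw [abs_lt]; constructor <;> linarith
    linarith
  · right
    apply ne_of_gt
    rw [if_neg (by simp)]
    apply lt_max_of_lt_right
    have : |3 * θ - 2| < 1 := by rw [abs_lt]; constructor <;> linarith
    linarith

lemma gr_eq_st {g : Grape ℓ} {θ s : ℝ} {a b : VT} (hab : a ≠ b)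
    (hθ : θ ∈ Set.Icc (0 : ℝ) 1) (h : st a b s = gr g θ) :
    (θ = 0 ∨ θ = 1) ∧ ((s = 0 ∧ g.1 = a) ∨ (b = g.1 ∧ s = 1)) := by
  have hend : θ = 0 ∨ θ = 1 := by
    by_contra hc
    push Not at hc
    rcases gr_pos g (lt_of_le_of_ne hθ.1 hc.1.symm) (lt_of_le_of_ne hθ.2 hc.2) with h' | h' <;>
      exact h' (by rw [← h]; rfl)
  refine ⟨hend, ?_⟩
  have e : gr g θ = basisVec (Sum.inl g.1 : GrapeVert VT ℓ) := by
    rcases hend with rfl | rfl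
    · rw [basisVec_gr0]
    · rw [basisVec_gr1]
  rw [e] at h
  have ha := congrFun h (Sum.inl a)
  have hb := congrFun h (Sum.inl b)
  have hg := congrFun h (Sum.inl g.1)
  simp [st_apply, hab, hab.symm, basisVec] at ha hb hg
  by_cases h1 : g.1 = a
  · left
    refine ⟨?_, h1⟩
    rw [if_neg (fun e => hab (by rw [← h1, ← e]))] at hb
    exact hb
  · right
    by_cases h2 : g.1 = b
    · rw [if_neg (fun e => h1 e.symm)] at ha
      exact ⟨h2.symm, by linarith⟩
    · simp [h1, h2] at hg

lemma gr_eq_gr {g g' : Grape ℓ} {θ θ' : ℝ} (hθ : θ ∈ Set.Icc (0 : ℝ) 1)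
    (hθ' : θ' ∈ Set.Icc (0 : ℝ) 1) (h : gr g θ = gr g' θ') :
    (g = g' ∧ θ = θ') ∨ ((θ = 0 ∨ θ = 1) ∧ (θ' = 0 ∨ θ' = 1) ∧ g.1 = g'.1) := by
  have key : ∀ {g g' : Grape ℓ} {θ θ' : ℝ}, 0 < θ → θ < 1 → gr g θ = gr g' θ' → g = g' := by
    intro g g' θ θ' h0 h1 h
    by_contra hne
    rcases gr_pos g h0 h1 with h' | h'
    · apply h'; rw [h, gr_apply_inr]; exact if_neg hne
    · apply h'; rw [h, gr_apply_inr]; exact if_neg hne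
  by_cases hgg : g = g'
  · subst hgg
    have e0 := congrFun h (Sum.inr ⟨g.1, (g.2, 0)⟩)
    have e1 := congrFun h (Sum.inr ⟨g.1, (g.2, 1)⟩)
    have e2 := congrFun h (Sum.inl g.1)
    simp only [gr_apply_inr, gr_apply_inl, if_true, one_ne_zero, if_false] at e0 e1 e2
    obtain ⟨a0, a1⟩ := hθ
    obtain ⟨b0, b1⟩ := hθ'
    rcases max_cases 0 (1 - |3 * θ - 1|) with ⟨p, p'⟩ | ⟨p, p'⟩ <;>
    rcases max_cases 0 (1 - |3 * θ' - 1|) with ⟨q, q'⟩ | ⟨q, q'⟩ <;>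
    rcases max_cases 0 (1 - |3 * θ - 2|) with ⟨r, r'⟩ | ⟨r, r'⟩ <;>
    rcases max_cases 0 (1 - |3 * θ' - 2|) with ⟨u, u'⟩ | ⟨u, u'⟩ <;>
    rw [p, q] at e0 <;> rw [r, u] at e1 <;>
    rcases abs_cases (3 * θ - 1) with ⟨x, x'⟩ | ⟨x, x'⟩ <;>
    rcases abs_cases (3 * θ' - 1) with ⟨y, y'⟩ | ⟨y, y'⟩ <;>
    rcases abs_cases (3 * θ - 2) with ⟨z, z'⟩ | ⟨z, z'⟩ <;>
    rcases abs_cases (3 * θ' - 2) with ⟨w, w'⟩ | ⟨w, w'⟩ <;>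
    first
      | exact Or.inl ⟨rfl, by linarith⟩
      | (exfalso; linarith)
      | exact Or.inr ⟨Or.inl (by linarith), Or.inl (by linarith), rfl⟩
      | exact Or.inr ⟨Or.inl (by linarith), Or.inr (by linarith), rfl⟩
      | exact Or.inr ⟨Or.inr (by linarith), Or.inl (by linarith), rfl⟩
      | exact Or.inr ⟨Or.inr (by linarith), Or.inr (by linarith), rfl⟩
  · right
    have h1 : θ = 0 ∨ θ = 1 := by
      by_contra hc
      push Not at hc
      exact hgg (key (lt_of_le_of_ne hθ.1 hc.1.symm) (lt_of_le_of_ne hθ.2 hc.2) h)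
    have h2 : θ' = 0 ∨ θ' = 1 := by
      by_contra hc
      push Not at hc
      exact hgg (key (lt_of_le_of_ne hθ'.1 hc.1.symm) (lt_of_le_of_ne hθ'.2 hc.2) h.symm).symm
    refine ⟨h1, h2, ?_⟩
    have e2 := congrFun h (Sum.inl g.1)
    rw [gr_apply_inl, gr_apply_inl] at e2
    by_contra hne
    rw [if_neg hne, if_pos rfl] at e2
    rcases h1 with rfl | rfl <;> norm_num at e2

end Geometry

end

/-! ### Sides of a stem edge -/

section

section Sides

variable {VT : Type} [Fintype VT] [DecidableEq VT] {T : SimpleGraph VT} {ℓ : VT → ℕ}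

/-- The stem vertices underlying the support of a point of `ℝ^V`. -/
def stems (x : GrapeVert VT ℓ → ℝ) : Set VT := {z | ∃ w, x w ≠ 0 ∧ stemOf w = z}

lemma stems_gr (g : Grape ℓ) {θ : ℝ} (hθ : θ ∈ Set.Icc (0 : ℝ) 1) : stems (gr g θ) = {g.1} := by
  ext z
  simp only [stems, Set.mem_setOf_eq, Set.mem_singleton_iff]
  constructor
  · rintro ⟨w, hw, rfl⟩
    by_contra hne
    apply hw
    rcases w with y | ⟨y, i, j⟩
    · exact if_neg hne
    · exact if_neg fun e => hne (congrArg Sigma.fst e)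
  · rintro rfl
    by_cases h0 : θ = 0
    · exact ⟨Sum.inl g.1, by rw [h0, gr_apply_inl]; norm_num, rfl⟩
    by_cases h1 : θ = 1
    · exact ⟨Sum.inl g.1, by rw [h1, gr_apply_inl]; norm_num, rfl⟩
    rcases gr_pos g (lt_of_le_of_ne hθ.1 (Ne.symm h0)) (lt_of_le_of_ne hθ.2 h1) with h | h
    · exact ⟨_, h, rfl⟩
    · exact ⟨_, h, rfl⟩

lemma mem_stems_st {a b : VT} (hab : a ≠ b) (s : ℝ) (z : VT) :
    z ∈ stems (st a b s : GrapeVert VT ℓ → ℝ) ↔ (z = a ∧ s ≠ 1) ∨ (z = b ∧ s ≠ 0) := by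
  simp only [stems, Set.mem_setOf_eq]
  constructor
  · rintro ⟨w, hw, rfl⟩
    rcases w with y | y
    · change (y = a ∧ s ≠ 1) ∨ (y = b ∧ s ≠ 0)
      rw [st_apply] at hw
      by_cases h1 : y = a
      · left
        refine ⟨h1, fun h => hw ?_⟩
        rw [if_neg (fun e => hab (h1.symm.trans e)), h]; simp
      · right
        rw [if_neg h1, zero_add] at hw
        by_cases h2 : y = b
        · rw [if_pos h2] at hw; exact ⟨h2, hw⟩
        · rw [if_neg h2] at hw; exact absurd rfl hw
    · exact absurd rfl hw
  · rintro (⟨rfl, h⟩ | ⟨rfl, h⟩)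
    · refine ⟨Sum.inl z, ?_, rfl⟩
      rw [st_apply, if_pos rfl, if_neg hab, add_zero]
      exact sub_ne_zero.2 h.symm
    · refine ⟨Sum.inl z, ?_, rfl⟩
      rw [st_apply, if_pos rfl, if_neg hab.symm, zero_add]
      exact h

lemma stems_cases {x : GrapeVert VT ℓ → ℝ} (hx : x ∈ realization (bunchOfGrapes T ℓ)) :
    (∃ v, stems x = {v}) ∨ ∃ v v', T.Adj v v' ∧ stems x = {v, v'} := by
  rcases realization_cases hx with ⟨a, b, hab, s, hs, rfl⟩ | ⟨g, θ, hθ, rfl⟩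
  · have key := mem_stems_st (ℓ := ℓ) hab.ne s
    by_cases h0 : s = 0
    · exact Or.inl ⟨a, by ext z; rw [key, h0]; simp⟩
    by_cases h1 : s = 1
    · exact Or.inl ⟨b, by ext z; rw [key, h1]; simp⟩
    · exact Or.inr ⟨a, b, hab, by ext z; rw [key]; simp [h0, h1]⟩
  · exact Or.inl ⟨g.1, stems_gr g hθ⟩

/-- The vertices of `T` on the `a`-side of the edge `{a, b}`. -/
def Side (T : SimpleGraph VT) (a b c : VT) : Prop := (T.deleteEdges {s(a, b)}).Reachable a c

lemma Side.refl (T : SimpleGraph VT) (a b : VT) : Side T a b a := SimpleGraph.Reachable.refl _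

lemma Side.not_both (hT : T.IsTree) {a b c : VT} (hab : T.Adj a b) (h : Side T a b c)
    (h' : Side T b a c) : False := by
  have hb := (SimpleGraph.isAcyclic_iff_forall_adj_isBridge.1 hT.isAcyclic) hab
  rw [SimpleGraph.isBridge_iff] at hb
  rw [Side, Sym2.eq_swap] at h'
  exact hb (SimpleGraph.Reachable.trans h h'.symm)

lemma Side.adj {a b c d : VT} (h : Side T a b c) (hcd : T.Adj c d) (hne : s(c, d) ≠ s(a, b)) :
    Side T a b d := by
  refine SimpleGraph.Reachable.trans h (SimpleGraph.Adj.reachable ?_)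
  rw [SimpleGraph.deleteEdges_adj]
  exact ⟨hcd, hne⟩

lemma exists_side (hT : T.IsTree) {v w : VT} (hvw : v ≠ w) :
    ∃ u, T.Adj v u ∧ Side T u v w := by
  obtain ⟨p, hp⟩ := (hT.isConnected.preconnected v w).exists_isPath
  cases p with
  | nil => exact absurd rfl hvw
  | @cons _ u _ h p =>
    rw [SimpleGraph.Walk.cons_isPath_iff] at hp
    refine ⟨u, h, ?_⟩
    have : s(u, v) ∉ p.edges := fun he => hp.2 (p.snd_mem_support_of_mem_edges he)
    exact ⟨p.toDeleteEdges {s(u, v)} (by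
      intro e he h'
      rw [Set.mem_singleton_iff.1 h'] at he
      exact this he)⟩

lemma stems_subset_of_mem_side {a b : VT} {x : GrapeVert VT ℓ → ℝ}
    (hx : x ∈ sideRealization T ℓ a b) : ∀ z ∈ stems x, Side T a b z := by
  simp only [sideRealization, Set.mem_iUnion] at hx
  obtain ⟨p, q, ⟨-, hp, hq⟩, hx⟩ := hx
  rintro z ⟨w, hw, rfl⟩
  rw [segment_eq_image] at hx
  obtain ⟨s, hs, rfl⟩ := hx
  have : w = p ∨ w = q := by
    by_contra hc
    push Not at hc
    apply hw
    change (1 - s) * basisVec p w + s * basisVec q w = 0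
    simp [basisVec, hc.1, hc.2]
  rcases this with rfl | rfl
  · exact hp
  · exact hq

lemma mem_side_of_edge {a b : VT} {x : GrapeVert VT ℓ → ℝ} {p q : GrapeVert VT ℓ}
    (h : (bunchOfGrapes T ℓ).Adj p q) (hp : Side T a b (stemOf p)) (hq : Side T a b (stemOf q))
    (hx : x ∈ segment ℝ (basisVec p) (basisVec q)) : x ∈ sideRealization T ℓ a b := by
  simp only [sideRealization, Set.mem_iUnion]
  exact ⟨p, q, ⟨h, hp, hq⟩, hx⟩

/-- In a normal bunch of grapes no side of a stem edge is a single vertex. -/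
lemma basisVec_mem_side (hn : IsNormalGrapes T ℓ) {a b z : VT} (hz : Side T a b z)
    (hdeg : ∃ d, T.Adj z d) :
    basisVec (Sum.inl z : GrapeVert VT ℓ) ∈ sideRealization T ℓ a b := by
  by_cases hl : 1 ≤ ℓ z
  · exact mem_side_of_edge (adj_leg (⟨z, ⟨0, hl⟩⟩ : Grape ℓ) 0) hz hz (left_mem_segment _ _ _)
  · have : ∃ d, T.Adj z d ∧ s(z, d) ≠ s(a, b) := by
      by_contra hc
      push Not at hc
      obtain ⟨d, hd⟩ := hdeg
      apply hl
      apply hn.2.2.1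
      rw [Set.ncard_eq_one]
      refine ⟨d, Set.eq_singleton_iff_unique_mem.2 ⟨hd, fun e he => ?_⟩⟩
      have := (hc e he).trans (hc d hd).symm
      exact Sym2.congr_right.1 this
    obtain ⟨d, hd, hne⟩ := this
    exact mem_side_of_edge (adj_stem hd) hz (hz.adj hd hne) (left_mem_segment _ _ _)

lemma mem_side_iff (hn : IsNormalGrapes T ℓ) {a b : VT} {x : GrapeVert VT ℓ → ℝ}
    (hx : x ∈ realization (bunchOfGrapes T ℓ)) :
    x ∈ sideRealization T ℓ a b ↔ ∀ z ∈ stems x, Side T a b z := by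
  refine ⟨stems_subset_of_mem_side, fun h => ?_⟩
  rcases realization_cases hx with ⟨c, d, hcd, s, hs, rfl⟩ | ⟨g, θ, hθ, rfl⟩
  · have key := mem_stems_st (ℓ := ℓ) hcd.ne s
    by_cases h0 : s = 0
    · rw [h0, ← basisVec_inl]
      exact basisVec_mem_side hn (h c ((key c).2 (Or.inl ⟨rfl, by rw [h0]; norm_num⟩))) ⟨d, hcd⟩
    by_cases h1 : s = 1
    · rw [h1, ← basisVec_inl']
      exact basisVec_mem_side hn (h d ((key d).2 (Or.inr ⟨rfl, h0⟩))) ⟨c, hcd.symm⟩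
    refine mem_side_of_edge (adj_stem hcd) (h c ((key c).2 (Or.inl ⟨rfl, h1⟩)))
      (h d ((key d).2 (Or.inr ⟨rfl, h0⟩))) ?_
    rw [st_comb]
    exact comb_mem hs.1 hs.2
  · obtain ⟨p, q, hpq, hp, hq, hx⟩ := gr_mem_edge T g hθ
    have := h g.1 (by rw [stems_gr g hθ]; rfl)
    exact mem_side_of_edge hpq (hp ▸ this) (hq ▸ this) hx

/-- Two points are separated by a stem edge exactly when their supports have no common stem
vertex. -/
lemma separated_iff (hn : IsNormalGrapes T ℓ) {x y : GrapeVert VT ℓ → ℝ}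
    (hx : x ∈ realization (bunchOfGrapes T ℓ)) (hy : y ∈ realization (bunchOfGrapes T ℓ)) :
    (∃ a b, T.Adj a b ∧ x ∈ sideRealization T ℓ a b ∧ y ∈ sideRealization T ℓ b a) ↔
      Disjoint (stems x) (stems y) := by
  constructor
  · rintro ⟨a, b, hab, h1, h2⟩
    rw [Set.disjoint_left]
    intro z hz hz'
    exact Side.not_both hn.1 hab (stems_subset_of_mem_side h1 z hz)
      (stems_subset_of_mem_side h2 z hz')
  · intro hdis
    simp only [mem_side_iff hn hx, mem_side_iff hn hy]
    -- an edge leaving `v` towards a support vertex `w` of `y` has all of `y` on its far side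
    have far : ∀ v w u, v ∈ stems x → w ∈ stems y → T.Adj v u → Side T u v w →
        ∀ z ∈ stems y, Side T u v z := by
      intro v w u hv hw hvu hs z hz
      have hvy : v ∉ stems y := fun h => Set.disjoint_left.1 hdis hv h
      by_cases hzw : z = w
      · exact hzw ▸ hs
      have adj : T.Adj w z := by
        rcases stems_cases hy with ⟨c, hc⟩ | ⟨c, d, hcd, hc⟩
        · rw [hc] at hz hw
          exact absurd (hz.trans hw.symm) hzw
        · rw [hc] at hz hw
          rcases hz with rfl | rfl <;> rcases hw with rfl | rfl
          · exact absurd rfl hzw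
          · exact hcd.symm
          · exact hcd
          · exact absurd rfl hzw
      refine hs.adj adj fun e => ?_
      have : v ∈ s(w, z) := by rw [e]; exact Sym2.mem_mk_right _ _
      rcases Sym2.mem_iff.1 this with rfl | rfl
      · exact hvy hw
      · exact hvy hz
    obtain ⟨w, hw⟩ : ∃ w, w ∈ stems y := by
      rcases stems_cases hy with ⟨c, hc⟩ | ⟨c, d, hcd, hc⟩ <;> exact ⟨c, by rw [hc]; simp⟩
    rcases stems_cases hx with ⟨v, hv⟩ | ⟨v, v', hvv, hv⟩
    · have hvx : v ∈ stems x := by rw [hv]; rfl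
      obtain ⟨u, hvu, hs⟩ := exists_side hn.1
        (show v ≠ w from fun e => Set.disjoint_left.1 hdis hvx (e ▸ hw))
      refine ⟨v, u, hvu, ?_, far v w u hvx hw hvu hs⟩
      rw [hv]
      rintro z rfl
      exact Side.refl T _ _
    · have hvx : v ∈ stems x := by rw [hv]; simp
      have hvx' : v' ∈ stems x := by rw [hv]; simp
      obtain ⟨u, hvu, hs⟩ := exists_side hn.1
        (show v ≠ w from fun e => Set.disjoint_left.1 hdis hvx (e ▸ hw))
      obtain ⟨u', hvu', hs'⟩ := exists_side hn.1
        (show v' ≠ w from fun e => Set.disjoint_left.1 hdis hvx' (e ▸ hw))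
      by_cases hu : u = v'
      · have hu' : u' ≠ v := by
          rintro rfl
          subst hu
          exact Side.not_both hn.1 hvu hs' hs
        refine ⟨v', u', hvu', ?_, far v' w u' hvx' hw hvu' hs'⟩
        rw [hv]
        rintro z (rfl | rfl)
        · exact (Side.refl T _ _).adj hvv.symm fun e => hu' (Sym2.congr_right.1 e).symm
        · exact Side.refl T _ _
      · refine ⟨v, u, hvu, ?_, far v w u hvx hw hvu hs⟩
        rw [hv]
        rintro z (rfl | rfl)
        · exact Side.refl T _ _
        · exact (Side.refl T _ _).adj hvv fun e => hu (Sym2.congr_right.1 e).symm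

end Sides

end

/-! ### Branches at a stem vertex -/

section

open unitInterval

section Branches

variable {VT : Type} [Fintype VT] [DecidableEq VT] {T : SimpleGraph VT} {ℓ : VT → ℕ}

/-- The topological space `|Γ|`. -/
abbrev RR (T : SimpleGraph VT) (ℓ : VT → ℕ) : Type := ↥(realization (bunchOfGrapes T ℓ))

/-- Codes for the branches at a stem vertex `v`: a neighbour of `v` in the stem, or one of the
two halves of a grape. -/
abbrev BrCode (ℓ : VT → ℕ) : Type := VT ⊕ (Grape ℓ × Bool)

/-- The code `b` describes a branch at `v`. -/
def Valid (T : SimpleGraph VT) (v : VT) : BrCode ℓ → Prop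
  | Sum.inl u => T.Adj v u
  | Sum.inr p => p.1.1 = v

lemma continuous_st (a b : VT) : Continuous (st a b : ℝ → GrapeVert VT ℓ → ℝ) := by
  refine continuous_pi fun w => ?_
  rcases w with z | p
  · simp only [st_apply]
    split_ifs <;> fun_prop
  · exact continuous_const

lemma continuous_gr (g : Grape ℓ) : Continuous (gr g) := by
  refine continuous_pi fun w => ?_
  rcases w with z | ⟨v, i, j⟩
  · simp only [gr_apply_inl]
    split_ifs <;> fun_prop
  · simp only [gr_apply_inr]
    split_ifs <;> fun_prop

/-- A stem edge as a path in `|Γ|`. -/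
def stR {a b : VT} (h : T.Adj a b) : C(I, RR T ℓ) where
  toFun s := ⟨st a b s, st_mem h s.2⟩
  continuous_toFun := ((continuous_st a b).comp continuous_subtype_val).subtype_mk _

/-- A grape as a loop in `|Γ|`. -/
def grR (T : SimpleGraph VT) (g : Grape ℓ) : C(I, RR T ℓ) where
  toFun s := ⟨gr g s, gr_mem g s.2⟩
  continuous_toFun := ((continuous_gr g).comp continuous_subtype_val).subtype_mk _

/-- The two halves of `[0, 1]`, parametrized from the endpoint to the midpoint. -/
def arm (j : Bool) : C(I, I) where
  toFun s := ⟨if j then 1 - s / 2 else s / 2, by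
    have := s.2.1; have := s.2.2
    split_ifs <;> constructor <;> linarith⟩
  continuous_toFun := by
    refine Continuous.subtype_mk ?_ _
    split_ifs <;> fun_prop

@[simp] lemma coe_arm_true (s : I) : (arm true s : ℝ) = 1 - s / 2 := rfl
@[simp] lemma coe_arm_false (s : I) : (arm false s : ℝ) = s / 2 := rfl

lemma arm_end {j : Bool} {s : I} : (arm j s = 0 ∨ arm j s = 1) ↔ s = 0 := by
  have h0 := s.2.1
  have h1 := s.2.2
  cases j <;> simp only [Subtype.ext_iff, coe_arm_true, coe_arm_false, Set.Icc.coe_zero,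
    Set.Icc.coe_one] <;> constructor <;> intro h
  · rcases h with h | h <;> linarith
  · left; linarith
  · rcases h with h | h <;> linarith
  · right; linarith

lemma arm_eq {j j' : Bool} {s t : I} (h : arm j s = arm j' t) :
    s = t ∧ (j = j' ∨ s = 1) := by
  have h0 := s.2.1
  have h1 := s.2.2
  have h2 := t.2.1
  have h3 := t.2.2
  cases j <;> cases j' <;> simp only [Subtype.ext_iff, coe_arm_true, coe_arm_false,
    Set.Icc.coe_one] at h ⊢
  · exact ⟨by linarith, Or.inl trivial⟩
  · exact ⟨by linarith, Or.inr (by linarith)⟩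
  · exact ⟨by linarith, Or.inr (by linarith)⟩
  · exact ⟨by linarith, Or.inl trivial⟩

lemma arm_one (j j' : Bool) : arm j 1 = arm j' 1 := by
  rw [Subtype.ext_iff]
  cases j <;> cases j' <;> simp <;> norm_num

lemma exists_arm (θ : I) : ∃ j s, arm j s = θ := by
  have h0 := θ.2.1
  have h1 := θ.2.2
  rcases le_total (θ : ℝ) (1 / 2) with h | h
  · exact ⟨false, ⟨2 * θ, by linarith, by linarith⟩, by rw [Subtype.ext_iff]; simp⟩
  · exact ⟨true, ⟨2 * (1 - θ), by linarith, by linarith⟩, by rw [Subtype.ext_iff]; simp⟩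

/-- The branch with code `b` at `v`, as a path starting at `v`.  Stem branches end at the
neighbouring vertex, grape branches at the point of the grape opposite to `v`. -/
def qR {v : VT} : ∀ {b : BrCode ℓ}, Valid T v b → C(I, RR T ℓ)
  | Sum.inl _, h => stR h
  | Sum.inr (g, j), _ => (grR T g).comp (arm j)

/-- The point at time `s` of the branch `b` at `v` is the stem vertex `z`. -/
def IsVert (v : VT) (b : BrCode ℓ) (s : I) (z : VT) : Prop :=
  (s = 0 ∧ z = v) ∨ (b = Sum.inl z ∧ s = 1)

lemma coe_qR_of_isVert {v z : VT} {b : BrCode ℓ} (h : Valid T v b) {s : I} (hz : IsVert v b s z) :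
    (qR h s : GrapeVert VT ℓ → ℝ) = basisVec (Sum.inl z : GrapeVert VT ℓ) := by
  rcases hz with ⟨rfl, rfl⟩ | ⟨rfl, rfl⟩
  · rcases b with u | ⟨g, j⟩
    · exact (basisVec_inl z u).symm
    · have h : g.1 = z := h
      subst h
      rcases (arm_end (j := j)).2 rfl with h | h
      · change gr g (arm j 0 : I) = _
        rw [h]; exact (basisVec_gr0 g).symm
      · change gr g (arm j 0 : I) = _
        rw [h]; exact (basisVec_gr1 g).symm
  · exact (basisVec_inl' z v).symm

lemma qR_eq_of_isVert {v w z : VT} {b c : BrCode ℓ} (h : Valid T v b) (h' : Valid T w c) {s t : I}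
    (hz : IsVert v b s z) (hz' : IsVert w c t z) : qR h s = qR h' t :=
  Subtype.ext ((coe_qR_of_isVert h hz).trans (coe_qR_of_isVert h' hz').symm)

lemma qR_zero {v : VT} {b c : BrCode ℓ} (h : Valid T v b) (h' : Valid T v c) :
    qR h 0 = qR h' 0 :=
  qR_eq_of_isVert h h' (z := v) (Or.inl ⟨rfl, rfl⟩) (Or.inl ⟨rfl, rfl⟩)

lemma stR_symm {a b : VT} (h : T.Adj a b) (s : I) :
    (stR h s : RR T ℓ) = stR h.symm (unitInterval.symm s) :=
  Subtype.ext (st_rev a b s)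

lemma one_of {s : I} (h : (s : ℝ) = 1) : s = 1 := Subtype.ext h
lemma zero_of {s : I} (h : (s : ℝ) = 0) : s = 0 := Subtype.ext h

lemma stR_eq {a b c d : VT} (h : T.Adj a b) (h' : T.Adj c d) {s t : I}
    (e : (stR h s : RR T ℓ) = stR h' t) :
    (a = c ∧ b = d ∧ s = t) ∨ (a = d ∧ b = c ∧ t = unitInterval.symm s) ∨
      ∃ z, IsVert a (Sum.inl b : BrCode ℓ) s z ∧ IsVert c (Sum.inl d : BrCode ℓ) t z := by
  rcases st_eq_st (ℓ := ℓ) h.ne h'.ne s.2 t.2 (congrArg Subtype.val e) with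
    ⟨h1, h2, h3⟩ | ⟨h1, h2, h3⟩ | ⟨z, h1, h2⟩
  · exact Or.inl ⟨h1, h2, Subtype.ext h3⟩
  · exact Or.inr (Or.inl ⟨h1, h2, Subtype.ext h3⟩)
  · refine Or.inr (Or.inr ⟨z, ?_, ?_⟩)
    · exact h1.imp (fun p => ⟨zero_of p.1, p.2⟩) (fun p => ⟨by rw [p.1], one_of p.2⟩)
    · exact h2.imp (fun p => ⟨zero_of p.1, p.2⟩) (fun p => ⟨by rw [p.1], one_of p.2⟩)

lemma grR_eq {g g' : Grape ℓ} {θ θ' : I} (e : grR T g θ = grR T g' θ') :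
    (g = g' ∧ θ = θ') ∨ ((θ = 0 ∨ θ = 1) ∧ (θ' = 0 ∨ θ' = 1) ∧ g.1 = g'.1) := by
  rcases gr_eq_gr θ.2 θ'.2 (congrArg Subtype.val e) with ⟨h1, h2⟩ | ⟨h1, h2, h3⟩
  · exact Or.inl ⟨h1, Subtype.ext h2⟩
  · exact Or.inr ⟨h1.imp zero_of one_of, h2.imp zero_of one_of, h3⟩

lemma qR_eq_grR {v : VT} {b : BrCode ℓ} (h : Valid T v b) {g : Grape ℓ} {s θ : I}
    (e : qR h s = grR T g θ) :
    (∃ j, b = Sum.inr (g, j) ∧ v = g.1 ∧ θ = arm j s) ∨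
      ((θ = 0 ∨ θ = 1) ∧ IsVert v b s g.1) := by
  rcases b with u | ⟨g', j⟩
  · right
    have h' : T.Adj v u := h
    obtain ⟨h1, h2⟩ := gr_eq_st (ℓ := ℓ) h'.ne θ.2 (congrArg Subtype.val e)
    refine ⟨h1.imp zero_of one_of, ?_⟩
    exact h2.imp (fun p => ⟨zero_of p.1, p.2⟩) (fun p => ⟨by rw [p.1], one_of p.2⟩)
  · have hv : g'.1 = v := h
    have e' : grR T g' (arm j s) = grR T g θ := e
    rcases grR_eq e' with ⟨rfl, rfl⟩ | ⟨h1, h2, h3⟩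
    · exact Or.inl ⟨j, rfl, hv.symm, rfl⟩
    · exact Or.inr ⟨h2, Or.inl ⟨arm_end.1 h1, by rw [← h3, hv]⟩⟩

/-- When two branches meet. -/
lemma qR_eq {v w : VT} {b c : BrCode ℓ} (h : Valid T v b) (h' : Valid T w c) {s t : I}
    (e : qR h s = qR h' t) :
    (v = w ∧ b = c ∧ s = t) ∨ (b = Sum.inl w ∧ c = Sum.inl v ∧ t = unitInterval.symm s) ∨
    (v = w ∧ s = 1 ∧ t = 1 ∧ ∃ g j j', b = Sum.inr (g, j) ∧ c = Sum.inr (g, j')) ∨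
    ∃ z, IsVert v b s z ∧ IsVert w c t z := by
  rcases c with u | ⟨g, j⟩
  · rcases b with u' | ⟨g, j⟩
    · rcases stR_eq h h' e with ⟨h1, h2, h3⟩ | ⟨h1, h2, h3⟩ | h1
      · exact Or.inl ⟨h1, by rw [h2], h3⟩
      · exact Or.inr (Or.inl ⟨by rw [h2], by rw [h1], h3⟩)
      · exact Or.inr (Or.inr (Or.inr h1))
    · rcases qR_eq_grR h' (g := g) (θ := arm j s) e.symm with ⟨j', h1, -⟩ | ⟨h1, h2⟩
      · cases h1
      · exact Or.inr (Or.inr (Or.inr ⟨g.1, Or.inl ⟨arm_end.1 h1, h⟩, h2⟩))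
  · rcases qR_eq_grR h (g := g) (θ := arm j t) e with ⟨j', rfl, h2, h3⟩ | ⟨h1, h2⟩
    · obtain ⟨rfl, h4⟩ := arm_eq h3
      have hw : g.1 = w := h'
      rcases h4 with rfl | rfl
      · exact Or.inl ⟨h2.trans hw, rfl, rfl⟩
      · exact Or.inr (Or.inr (Or.inl ⟨h2.trans hw, rfl, rfl, g, j', j, rfl, rfl⟩))
    · exact Or.inr (Or.inr (Or.inr ⟨g.1, h2, Or.inl ⟨arm_end.1 h1, h'⟩⟩))

lemma qR_eq_same {v : VT} {b c : BrCode ℓ} (h : Valid T v b) (h' : Valid T v c) {s t : I}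
    (e : qR h s = qR h' t) : s = t ∧ (b = c ∨ s = 0 ∨ s = 1) := by
  rcases qR_eq h h' e with ⟨-, h1, h2⟩ | ⟨rfl, -⟩ | ⟨-, rfl, rfl, -⟩ | ⟨z, h1, h2⟩
  · exact ⟨h2, Or.inl h1⟩
  · exact absurd h (SimpleGraph.irrefl T)
  · exact ⟨rfl, Or.inr (Or.inr rfl)⟩
  · rcases h1 with ⟨rfl, rfl⟩ | ⟨rfl, rfl⟩ <;> rcases h2 with ⟨rfl, h3⟩ | ⟨rfl, rfl⟩
    · exact ⟨rfl, Or.inr (Or.inl rfl)⟩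
    · exact absurd h' (SimpleGraph.irrefl T)
    · subst h3; exact absurd h (SimpleGraph.irrefl T)
    · exact ⟨rfl, Or.inl rfl⟩

/-- Two branches at `v` that are different and do not belong to the same grape, so that they
meet only in `v`. -/
def Apart (b c : BrCode ℓ) : Prop :=
  b ≠ c ∧ ¬ ∃ g j j', b = Sum.inr (g, j) ∧ c = Sum.inr (g, j')

lemma Apart.symm {b c : BrCode ℓ} (h : Apart b c) : Apart c b :=
  ⟨h.1.symm, fun ⟨g, j, j', h1, h2⟩ => h.2 ⟨g, j', j, h2, h1⟩⟩

lemma qR_eq_apart {v : VT} {b c : BrCode ℓ} (h : Valid T v b) (h' : Valid T v c) (ha : Apart b c)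
    {s t : I} : qR h s = qR h' t ↔ s = 0 ∧ t = 0 := by
  constructor
  · intro e
    rcases qR_eq h h' e with ⟨-, h1, h2⟩ | ⟨rfl, -⟩ | ⟨-, -, -, h1⟩ | ⟨z, h1, h2⟩
    · exact absurd h1 ha.1
    · exact absurd h (SimpleGraph.irrefl T)
    · exact absurd h1 ha.2
    · rcases h1 with ⟨rfl, rfl⟩ | ⟨rfl, rfl⟩ <;> rcases h2 with ⟨rfl, h3⟩ | ⟨rfl, rfl⟩
      · exact ⟨rfl, rfl⟩
      · exact absurd h' (SimpleGraph.irrefl T)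
      · subst h3; exact absurd h (SimpleGraph.irrefl T)
      · exact absurd rfl ha.1
  · rintro ⟨rfl, rfl⟩
    exact qR_zero h h'

/-- The stem vertices below a point of `|Γ|`. -/
def stemsR (x : RR T ℓ) : Set VT := stems (x : GrapeVert VT ℓ → ℝ)

lemma mem_stems_stR {a b : VT} (h : T.Adj a b) (s : I) (z : VT) :
    z ∈ stemsR (stR h s : RR T ℓ) ↔ (z = a ∧ s ≠ 1) ∨ (z = b ∧ s ≠ 0) := by
  have := mem_stems_st (ℓ := ℓ) h.ne s z
  rw [stemsR]
  refine this.trans ?_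
  rw [Ne, Ne, Ne, Ne, Subtype.ext_iff, Subtype.ext_iff]
  rfl

lemma stems_grR (g : Grape ℓ) (θ : I) : stemsR (grR T g θ) = {g.1} := stems_gr g θ.2

lemma mem_stems_qR {v : VT} {b : BrCode ℓ} (h : Valid T v b) (s : I) :
    v ∈ stemsR (qR h s) ↔ ((∃ p, b = Sum.inr p) ∨ s ≠ 1) := by
  rcases b with u | ⟨g, j⟩
  · have h' : T.Adj v u := h
    refine (mem_stems_stR h' s v).trans ?_
    simp [h'.ne]
  · refine (show v ∈ stemsR (grR T g (arm j s)) ↔ _ from ?_)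
    have hv : g.1 = v := h
    rw [stems_grR]
    simp [hv]

/-- A point whose support lies over `z` is on a branch at `z`. -/
lemma exists_branch {x : RR T ℓ} {z : VT} (hz : z ∈ stemsR x) :
    ∃ (b : BrCode ℓ) (h : Valid T z b) (s : I), x = qR h s := by
  rcases realization_cases x.2 with ⟨a, b, hab, s, hs, e⟩ | ⟨g, θ, hθ, e⟩
  · have e : x = stR hab ⟨s, hs⟩ := Subtype.ext e
    rw [e, mem_stems_stR] at hz
    rcases hz with ⟨rfl, -⟩ | ⟨rfl, -⟩
    · exact ⟨Sum.inl b, hab, ⟨s, hs⟩, e⟩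
    · exact ⟨Sum.inl a, hab.symm, _, e.trans (stR_symm hab _)⟩
  · have e : x = grR T g ⟨θ, hθ⟩ := Subtype.ext e
    rw [e, stems_grR] at hz
    obtain ⟨j, s, h⟩ := exists_arm ⟨θ, hθ⟩
    refine ⟨Sum.inr (g, j), hz.symm, s, ?_⟩
    rw [e, ← h]
    rfl

end Branches

end

/-! ### Unordered pairs of points -/

section

open unitInterval

section Pairs

variable {X : Type} [TopologicalSpace X]

/-- The unordered configuration `{x, y}`. -/
def mk2 (x y : X) (h : x ≠ y) : UConf 2 X :=
  Quot.mk _ ⟨![x, y], by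
    intro i j e
    fin_cases i <;> fin_cases j <;> simp at e ⊢
    · exact h e
    · exact h e.symm⟩

/-- Exchanging the two points of an ordered configuration. -/
def swapC (f : Conf 2 X) : Conf 2 X :=
  ⟨f.1 ∘ Equiv.swap 0 1, f.2.comp (Equiv.injective _)⟩

lemma continuous_swapC : Continuous (swapC (X := X)) :=
  by
  refine Continuous.subtype_mk ?_ _
  exact continuous_pi fun i => (continuous_apply _).comp continuous_subtype_val

lemma swapC_zero (f : Conf 2 X) : (swapC f).1 0 = f.1 1 := by simp [swapC]
lemma swapC_one (f : Conf 2 X) : (swapC f).1 1 = f.1 0 := by simp [swapC]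

lemma conf_ext {f g : Conf 2 X} (h0 : f.1 0 = g.1 0) (h1 : f.1 1 = g.1 1) : f = g := by
  apply Subtype.ext
  funext i
  fin_cases i
  · exact h0
  · exact h1

lemma swapC_swapC (f : Conf 2 X) : swapC (swapC f) = f :=
  conf_ext (by rw [swapC_zero, swapC_one]) (by rw [swapC_one, swapC_zero])

lemma permRel_iff (f g : Conf 2 X) : permRel 2 X f g ↔ f = g ∨ f = swapC g := by
  constructor
  · rintro ⟨e, he⟩
    have h0 : f.1 0 = g.1 (e 0) := congrFun he 0
    have h1 : f.1 1 = g.1 (e 1) := congrFun he 1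
    have hne : e 0 ≠ e 1 := fun h => by simpa using e.injective h
    have c0 : e 0 = 0 ∨ e 0 = 1 := by omega
    rcases c0 with c | c
    · have c1 : e 1 = 1 := by omega
      rw [c] at h0; rw [c1] at h1
      exact Or.inl (conf_ext h0 h1)
    · have c1 : e 1 = 0 := by omega
      rw [c] at h0; rw [c1] at h1
      exact Or.inr (conf_ext (by rw [swapC_zero]; exact h0) (by rw [swapC_one]; exact h1))
  · rintro (rfl | rfl)
    · exact ⟨Equiv.refl _, rfl⟩
    · exact ⟨Equiv.swap 0 1, rfl⟩

lemma quot_eq_iff (f g : Conf 2 X) :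
    (Quot.mk (permRel 2 X) f = Quot.mk (permRel 2 X) g) ↔ f = g ∨ f = swapC g := by
  have heq : Equivalence (permRel 2 X) := by
    refine ⟨fun f => (permRel_iff f f).2 (Or.inl rfl), fun {f g} h => ?_, fun {f g k} h h' => ?_⟩
    · rw [permRel_iff] at h ⊢
      rcases h with rfl | rfl
      · exact Or.inl rfl
      · exact Or.inr (swapC_swapC g).symm
    · rw [permRel_iff] at h h' ⊢
      rcases h with rfl | rfl <;> rcases h' with rfl | rfl
      · exact Or.inl rfl
      · exact Or.inr rfl
      · exact Or.inr rfl
      · exact Or.inl (swapC_swapC k)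
  rw [Quot.eq, heq.eqvGen_iff, permRel_iff]

lemma mk2_eq_iff {x y x' y' : X} {h : x ≠ y} {h' : x' ≠ y'} :
    mk2 x y h = mk2 x' y' h' ↔ (x = x' ∧ y = y') ∨ (x = y' ∧ y = x') := by
  rw [mk2, mk2, quot_eq_iff]
  constructor
  · rintro (e | e)
    · left
      have e := congrArg Subtype.val e
      exact ⟨congrFun e 0, congrFun e 1⟩
    · right
      have e := congrArg Subtype.val e
      exact ⟨(congrFun e 0).trans (swapC_zero _), (congrFun e 1).trans (swapC_one _)⟩
  · rintro (⟨h1, h2⟩ | ⟨h1, h2⟩)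
    · exact Or.inl (conf_ext h1 h2)
    · exact Or.inr (conf_ext (by rw [swapC_zero]; exact h1) (by rw [swapC_one]; exact h2))

lemma mk2_comm {x y : X} (h : x ≠ y) : mk2 x y h = mk2 y x h.symm :=
  mk2_eq_iff.2 (Or.inr ⟨rfl, rfl⟩)

lemma mk2_congr {x y x' y' : X} {h : x ≠ y} (hx : x = x') (hy : y = y') :
    mk2 x y h = mk2 x' y' (hx ▸ hy ▸ h) := by
  subst hx hy; rfl

lemma quot_mk_eq_mk2 (f : Conf 2 X) :
    (Quot.mk _ f : UConf 2 X) = mk2 (f.1 0) (f.1 1) (fun e => by simpa using f.2 e) := by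
  rw [mk2, quot_eq_iff]
  exact Or.inl (conf_ext rfl rfl)

lemma exists_mk2 (q : UConf 2 X) : ∃ x y h, q = mk2 x y h := by
  obtain ⟨f, rfl⟩ := Quot.exists_rep q
  exact ⟨_, _, _, quot_mk_eq_mk2 f⟩

lemma continuous_mk2 {Z : Type*} [TopologicalSpace Z] {φ ψ : Z → X} (hφ : Continuous φ)
    (hψ : Continuous ψ) (h : ∀ z, φ z ≠ ψ z) : Continuous fun z => mk2 (φ z) (ψ z) (h z) := by
  refine continuous_quot_mk.comp (Continuous.subtype_mk ?_ _)
  refine continuous_pi fun i => ?_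
  fin_cases i
  · exact hφ
  · exact hψ

lemma preimage_image_quot (S : Set (Conf 2 X)) :
    Quot.mk (permRel 2 X) ⁻¹' (Quot.mk (permRel 2 X) '' S) = S ∪ swapC ⁻¹' S := by
  ext f
  simp only [Set.mem_preimage, Set.mem_image, Set.mem_union]
  constructor
  · rintro ⟨g, hg, e⟩
    rcases (quot_eq_iff g f).1 e with rfl | rfl
    · exact Or.inl hg
    · exact Or.inr hg
  · rintro (h | h)
    · exact ⟨f, h, rfl⟩
    · exact ⟨_, h, (quot_eq_iff _ _).2 (Or.inr rfl)⟩

lemma isOpenMap_quot : IsOpenMap (Quot.mk (permRel 2 X)) := by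
  intro S hS
  rw [← isQuotientMap_quot_mk.isOpen_preimage, preimage_image_quot]
  exact hS.union (hS.preimage continuous_swapC)

lemma isClosedMap_quot : IsClosedMap (Quot.mk (permRel 2 X)) := by
  intro S hS
  rw [← isQuotientMap_quot_mk.isClosed_preimage, preimage_image_quot]
  exact hS.union (hS.preimage continuous_swapC)

instance [T2Space X] : T2Space (UConf 2 X) := by
  refine ⟨fun p q hpq => ?_⟩
  obtain ⟨f, rfl⟩ := Quot.exists_rep p
  obtain ⟨g, rfl⟩ := Quot.exists_rep q
  have hne : ¬ (f = g ∨ f = swapC g) := fun h => hpq ((quot_eq_iff f g).2 h)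
  push Not at hne
  obtain ⟨U, V, hU, hV, fU, gV, d⟩ := t2_separation hne.1
  obtain ⟨U', V', hU', hV', fU', gV', d'⟩ := t2_separation hne.2
  refine ⟨_, _, isOpenMap_quot _ (hU.inter hU'),
    isOpenMap_quot _ (hV.inter (hV'.preimage continuous_swapC)),
    ⟨f, ⟨fU, fU'⟩, rfl⟩, ⟨g, ⟨gV, gV'⟩, rfl⟩, ?_⟩
  rw [Set.disjoint_left]
  rintro _ ⟨a, ha, rfl⟩ ⟨b, hb, e⟩
  rcases (quot_eq_iff b a).1 e with rfl | rfl
  · exact Set.disjoint_left.1 d ha.1 hb.1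
  · have : swapC (swapC a) ∈ V' := hb.2
    rw [swapC_swapC] at this
    exact Set.disjoint_left.1 d' ha.2 this

/-- Pairs of points moving over a compact space give closed maps to the configuration space. -/
lemma isClosedMap_mk2 [T2Space X] {Z : Type*} [TopologicalSpace Z] [CompactSpace Z] (φ ψ : C(Z, X)) :
    IsClosedMap (fun z : {z : Z // φ z ≠ ψ z} => mk2 (φ z.1) (ψ z.1) z.2) := by
  intro S hS
  obtain ⟨F, hF, rfl⟩ := isClosed_induced_iff.1 hS
  have hc : IsClosed ((fun z => (φ z, ψ z)) '' F) :=
    (hF.isCompact.image (by fun_prop)).isClosed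
  have : (fun z : {z : Z // φ z ≠ ψ z} => mk2 (φ z.1) (ψ z.1) z.2) '' (Subtype.val ⁻¹' F)
      = Quot.mk (permRel 2 X) '' ((fun f : Conf 2 X => (f.1 0, f.1 1)) ⁻¹'
        ((fun z => (φ z, ψ z)) '' F)) := by
    ext q
    constructor
    · rintro ⟨z, hz, rfl⟩
      exact ⟨_, ⟨z.1, hz, rfl⟩, rfl⟩
    · rintro ⟨f, ⟨z, hz, e⟩, rfl⟩
      have e0 : φ z = f.1 0 := congrArg Prod.fst e
      have e1 : ψ z = f.1 1 := congrArg Prod.snd e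
      have hne : φ z ≠ ψ z := by
        rw [e0, e1]; intro h; simpa using f.2 h
      refine ⟨⟨z, hne⟩, hz, ?_⟩
      rw [quot_mk_eq_mk2]
      exact mk2_congr e0 e1
  rw [this]
  exact isClosedMap_quot _ (hc.preimage (((continuous_apply 0).comp continuous_subtype_val).prodMk
    ((continuous_apply 1).comp continuous_subtype_val)))

end Pairs

end

/-! ### The flow in coordinates -/

section

open unitInterval

section FlowCoord

/-- First coordinate of the straight line from `(s, t)` to `(s, t) / max s t` at time `r`; the
second coordinate is `scl t s r`. -/
def scl (s t r : I) : I :=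
  ⟨s * ((1 - r) + r / max (s : ℝ) t), by
    have hs := s.2.1; have hs1 := s.2.2; have ht := t.2.1; have hr := r.2.1; have hr1 := r.2.2
    have hm : (s : ℝ) / max (s : ℝ) t ≤ 1 := div_le_one_of_le₀ (le_max_left _ _) (hs.trans (le_max_left _ _))
    have hm0 : 0 ≤ (s : ℝ) / max (s : ℝ) t := div_nonneg hs (hs.trans (le_max_left _ _))
    have e : (s : ℝ) * ((1 - r) + r / max (s : ℝ) t) = (1 - r) * s + r * (s / max (s : ℝ) t) := by ring
    rw [e]
    constructor
    · have := mul_nonneg (sub_nonneg.2 hr1) hs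
      have := mul_nonneg hr hm0
      linarith
    · nlinarith [mul_nonneg (sub_nonneg.2 hr1) (sub_nonneg.2 hs1), mul_nonneg hr (sub_nonneg.2 hm)]⟩

lemma coe_scl (s t r : I) : (scl s t r : ℝ) = s * ((1 - r) + r / max (s : ℝ) t) := rfl

lemma scl_zero (t r : I) : scl 0 t r = 0 := Subtype.ext (by simp [coe_scl])

lemma coe_scl_right {s : I} (h : s ≠ 0) (r : I) : (scl s 0 r : ℝ) = (1 - r) * s + r := by
  have hs : (s : ℝ) ≠ 0 := fun e => h (Subtype.ext e)
  rw [coe_scl, show ((0 : I) : ℝ) = 0 from rfl, max_eq_left s.2.1]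
  field_simp

lemma scl_const {s t : I} (h : s = 1 ∨ t = 1) (r : I) : scl s t r = s := by
  apply Subtype.ext
  have : max (s : ℝ) t = 1 := by
    rcases h with rfl | rfl
    · exact max_eq_left t.2.2
    · exact max_eq_right s.2.2
  rw [coe_scl, this]; ring

lemma scl_time0 (s t : I) : scl s t 0 = s := Subtype.ext (by simp [coe_scl])

lemma scl_eq_zero {s t r : I} (h : scl s t r = 0) : s = 0 := by
  by_contra hs
  have hs' : 0 < (s : ℝ) := lt_of_le_of_ne s.2.1 fun e => hs (Subtype.ext e.symm)
  have e : (s : ℝ) * ((1 - r) + r / max (s : ℝ) t) = 0 := congrArg Subtype.val h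
  have hm : 0 < max (s : ℝ) t := lt_max_of_lt_left hs'
  rcases mul_eq_zero.1 e with e | e
  · exact hs'.ne' e
  · have h1 : (r : ℝ) ≤ r / max (s : ℝ) t :=
      le_div_self r.2.1 hm (max_le s.2.2 t.2.2)
    linarith [h1]

lemma scl_time1 {s t : I} (h : ¬ (s = 0 ∧ t = 0)) : scl s t 1 = 1 ∨ scl t s 1 = 1 := by
  have key : ∀ {s t : I}, s ≠ 0 → (t : ℝ) ≤ s → scl s t 1 = 1 := by
    intro s t hs hts
    have hs : (s : ℝ) ≠ 0 := fun e => hs (Subtype.ext e)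
    apply Subtype.ext
    rw [coe_scl, max_eq_left hts]
    simp [hs]
  rcases le_total (t : ℝ) s with h1 | h1
  · refine Or.inl (key (fun e => h ⟨e, ?_⟩) h1)
    subst e
    exact Subtype.ext (le_antisymm h1 t.2.1)
  · refine Or.inr (key (fun e => h ⟨?_, e⟩) h1)
    subst e
    exact Subtype.ext (le_antisymm h1 s.2.1)

lemma continuous_scl {Z : Type*} [TopologicalSpace Z] {f g k : Z → I} (hf : Continuous f)
    (hg : Continuous g) (hk : Continuous k) (h : ∀ z, ¬ (f z = 0 ∧ g z = 0)) :
    Continuous fun z => scl (f z) (g z) (k z) := by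
  refine Continuous.subtype_mk ?_ _
  have hm : ∀ z, max (f z : ℝ) (g z) ≠ 0 := by
    intro z e
    have h1 := le_max_left (f z : ℝ) (g z)
    have h2 := le_max_right (f z : ℝ) (g z)
    exact h z ⟨Subtype.ext (le_antisymm (h1.trans e.le) (f z).2.1),
      Subtype.ext (le_antisymm (h2.trans e.le) (g z).2.1)⟩
  have : Continuous fun z => (k z : ℝ) / max (f z : ℝ) (g z) :=
    Continuous.div (by fun_prop) (by fun_prop) hm
  fun_prop

/-- Moving `s` linearly to `0`. -/
def eL (s r : I) : I := unitInterval.symm r * s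
/-- Moving `t` linearly to `1`. -/
def eR (t r : I) : I := unitInterval.symm (eL (unitInterval.symm t) r)

lemma coe_eL (s r : I) : (eL s r : ℝ) = (1 - r) * s := rfl
lemma coe_eR (s r : I) : (eR s r : ℝ) = (1 - r) * s + r := by
  change 1 - (1 - (r : ℝ)) * (1 - s) = _
  ring

lemma continuous_eL {Z : Type*} [TopologicalSpace Z] {f k : Z → I} (hf : Continuous f)
    (hk : Continuous k) : Continuous fun z => eL (f z) (k z) := by
  unfold eL; fun_prop
lemma continuous_eR {Z : Type*} [TopologicalSpace Z] {f k : Z → I} (hf : Continuous f)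
    (hk : Continuous k) : Continuous fun z => eR (f z) (k z) := by
  unfold eR eL; fun_prop

lemma eL_zero (r : I) : eL 0 r = 0 := Subtype.ext (by simp [coe_eL])
lemma eR_one (r : I) : eR 1 r = 1 := Subtype.ext (by simp [coe_eR])
lemma eL_time0 (s : I) : eL s 0 = s := Subtype.ext (by simp [coe_eL])
lemma eR_time0 (s : I) : eR s 0 = s := Subtype.ext (by simp [coe_eR])
lemma eL_time1 (s : I) : eL s 1 = 0 := Subtype.ext (by simp [coe_eL])
lemma eR_time1 (s : I) : eR s 1 = 1 := Subtype.ext (by simp [coe_eR])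

lemma eL_lt_eR {s t : I} (h : s < t) (r : I) : eL s r < eR t r := by
  have h : (s : ℝ) < t := h
  have : (eL s r : ℝ) < eR t r := by
    rw [coe_eL, coe_eR]
    rcases eq_or_lt_of_le r.2.1 with h0 | h0
    · rw [← h0]; linarith
    · nlinarith [mul_le_mul_of_nonneg_left h.le (sub_nonneg.2 r.2.2)]
  exact this

/-- The rotation parameter of a pair `s < t` of points on a circle. -/
def rot (s t : I) : I :=
  ⟨s / (s + (1 - t)), by
    have hs := s.2.1; have ht := t.2.2
    exact ⟨div_nonneg hs (by linarith), div_le_one_of_le₀ (by linarith) (by linarith)⟩⟩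

/-- The antipodal pair on a circle with rotation parameter `a`: first point. -/
def half0 (a : I) : I := ⟨a / 2, by have := a.2.1; have := a.2.2; constructor <;> linarith⟩
/-- The antipodal pair on a circle with rotation parameter `a`: second point. -/
def half1 (a : I) : I := ⟨(1 + a) / 2, by have := a.2.1; have := a.2.2; constructor <;> linarith⟩

/-- Convex combination in the unit interval. -/
def mix (s t r : I) : I := ⟨(1 - r) * s + r * t, by
    have hs := s.2.1; have hs1 := s.2.2; have ht := t.2.1; have ht1 := t.2.2
    have hr := r.2.1; have hr1 := r.2.2
    constructor
    · nlinarith [mul_nonneg (sub_nonneg.2 hr1) hs, mul_nonneg hr ht]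
    · nlinarith [mul_nonneg (sub_nonneg.2 hr1) (sub_nonneg.2 hs1), mul_nonneg hr (sub_nonneg.2 ht1)]⟩

lemma coe_mix (s t r : I) : (mix s t r : ℝ) = (1 - r) * s + r * t := rfl
lemma mix_time0 (s t : I) : mix s t 0 = s := Subtype.ext (by simp [coe_mix])
lemma mix_time1 (s t : I) : mix s t 1 = t := Subtype.ext (by simp [coe_mix])
lemma mix_self (s r : I) : mix s s r = s := Subtype.ext (by rw [coe_mix]; ring)

/-- First coordinate of the line from `(s, t)` to an antipodal pair. -/
def gL (s t r : I) : I := mix s (half0 (rot s t)) r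
/-- Second coordinate of the line from `(s, t)` to an antipodal pair. -/
def gR (s t r : I) : I := mix t (half1 (rot s t)) r

lemma gL_lt_gR {s t : I} (h : s < t) (r : I) : gL s t r < gR s t r := by
  have h : (s : ℝ) < t := h
  have : (gL s t r : ℝ) < gR s t r := by
    change (1 - (r : ℝ)) * s + r * ((rot s t : ℝ) / 2) < (1 - r) * t + r * ((1 + (rot s t : ℝ)) / 2)
    rcases eq_or_lt_of_le r.2.1 with h0 | h0
    · rw [← h0]; linarith
    · nlinarith [mul_le_mul_of_nonneg_left h.le (sub_nonneg.2 r.2.2)]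
  exact this

lemma rot_zero (t : I) : rot 0 t = 0 := Subtype.ext (by simp [rot])
lemma rot_one {s : I} (h : s ≠ 0) : rot s 1 = 1 := by
  have hs : (s : ℝ) ≠ 0 := fun e => h (Subtype.ext e)
  exact Subtype.ext (by simp [rot, hs])

lemma half0_zero : half0 0 = 0 := Subtype.ext (by simp [half0])
lemma half1_one : half1 1 = 1 := Subtype.ext (by simp [half1])
lemma half_swap : half0 1 = half1 0 := Subtype.ext (by simp [half0, half1])

lemma rot_half (a : I) : rot (half0 a) (half1 a) = a := by
  apply Subtype.ext
  change (a : ℝ) / 2 / (a / 2 + (1 - (1 + a) / 2)) = a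
  rw [show (a : ℝ) / 2 + (1 - (1 + a) / 2) = 1 / 2 by ring]
  ring

lemma half_lt (a : I) : half0 a < half1 a := by
  have : (half0 a : ℝ) < half1 a := by change (a : ℝ) / 2 < (1 + a) / 2; linarith
  exact this

lemma half_not_end (a : I) : ¬ (half0 a = 0 ∧ half1 a = 1) := by
  rintro ⟨h, h'⟩
  have h : (a : ℝ) / 2 = 0 := congrArg Subtype.val h
  have h' : (1 + (a : ℝ)) / 2 = 1 := congrArg Subtype.val h'
  linarith

lemma continuous_half0 : Continuous half0 := Continuous.subtype_mk (by fun_prop) _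
lemma continuous_half1 : Continuous half1 := Continuous.subtype_mk (by fun_prop) _

lemma continuous_rot {Z : Type*} [TopologicalSpace Z] {f g : Z → I} (hf : Continuous f)
    (hg : Continuous g) (h : ∀ z, ¬ (f z = 0 ∧ g z = 1)) :
    Continuous fun z => rot (f z) (g z) := by
  refine Continuous.subtype_mk ?_ _
  refine Continuous.div (by fun_prop) (by fun_prop) fun z e => h z ?_
  have h1 := (f z).2.1
  have h2 := (g z).2.2
  exact ⟨Subtype.ext (by change (f z : ℝ) = 0; linarith), Subtype.ext (by change (g z : ℝ) = 1; linarith)⟩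

lemma continuous_mix {Z : Type*} [TopologicalSpace Z] {f g k : Z → I} (hf : Continuous f)
    (hg : Continuous g) (hk : Continuous k) : Continuous fun z => mix (f z) (g z) (k z) :=
  Continuous.subtype_mk (by fun_prop) _

/-- Antipodal pushing of a point on a branch of a grape agrees with the flow of the branch. -/
lemma arm_scl {j : Bool} {s : I} (h : s ≠ 0) (r : I) :
    arm j (scl s 0 r) = mix (arm j s) (half0 1) r := by
  apply Subtype.ext
  rw [coe_mix, show (half0 1 : ℝ) = 1 / 2 by simp [half0]]
  cases j
  · rw [coe_arm_false, coe_arm_false, coe_scl_right h]; ring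
  · rw [coe_arm_true, coe_arm_true, coe_scl_right h]; ring

end FlowCoord

/-! ### Flows of overlapping pieces agree -/

section FlowCompat

variable {VT : Type} [Fintype VT] [DecidableEq VT] {T : SimpleGraph VT} {ℓ : VT → ℕ}

lemma isVert_end {v z : VT} {b : BrCode ℓ} {s : I} (h : IsVert v b s z) : s = 0 ∨ s = 1 :=
  h.imp (fun h => h.1) (fun h => h.2)

lemma flow_DD_aux {v : VT} {b b' c c' : BrCode ℓ} (h : Valid T v b) (h' : Valid T v b')
    (k : Valid T v c) (k' : Valid T v c') {s t s' t' : I}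
    (e : qR h s = qR k s') (e' : qR h' t = qR k' t') (r : I) :
    qR h (scl s t r) = qR k (scl s' t' r) := by
  obtain ⟨rfl, h1⟩ := qR_eq_same h k e
  obtain ⟨rfl, h2⟩ := qR_eq_same h' k' e'
  by_cases hc : s = 1 ∨ t = 1
  · rw [scl_const hc]; exact e
  · rcases h1 with rfl | rfl | rfl
    · rfl
    · rw [scl_zero]; exact qR_zero h k
    · exact absurd (Or.inl rfl) hc

lemma flow_DD {v w : VT} {b b' c c' : BrCode ℓ} (h : Valid T v b) (h' : Valid T v b')
    (ha : Apart b b') (k : Valid T w c) (k' : Valid T w c') (ka : Apart c c') {s t s' t' : I}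
    (hst : ¬ (s = 0 ∧ t = 0)) (hst' : ¬ (s' = 0 ∧ t' = 0))
    (e : qR h s = qR k s') (e' : qR h' t = qR k' t') (r : I) :
    qR h (scl s t r) = qR k (scl s' t' r) ∧ qR h' (scl t s r) = qR k' (scl t' s' r) := by
  by_cases hvw : v = w
  · subst hvw
    exact ⟨flow_DD_aux h h' k k' e e' r, flow_DD_aux h' h k' k e' e r⟩
  · suffices hh : (s = 1 ∨ t = 1) ∧ (s' = 1 ∨ t' = 1) by
      rw [scl_const hh.1, scl_const hh.2, scl_const hh.1.symm, scl_const hh.2.symm]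
      exact ⟨e, e'⟩
    have key : ∀ {b b' c c' : BrCode ℓ} {s t s' t' : I}, Apart b b' → Apart c c' →
        b = Sum.inl w → c = Sum.inl v → (∃ z, IsVert v b' t z ∧ IsVert w c' t' z) →
        t = 1 ∧ t' = 1 := by
      rintro b b' c c' s t s' t' ha ka rfl rfl ⟨z, ⟨rfl, rfl⟩ | ⟨rfl, rfl⟩, ⟨rfl, h5⟩ | ⟨rfl, rfl⟩⟩
      · exact absurd h5 hvw
      · exact absurd rfl ka.1
      · exact absurd (by rw [h5]) ha.1
      · exact ⟨rfl, rfl⟩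
    rcases qR_eq h k e with ⟨h1, -⟩ | ⟨h1, h2, -⟩ | ⟨h1, -⟩ | h1
    · exact absurd h1 hvw
    · rcases qR_eq h' k' e' with ⟨g1, -⟩ | ⟨g1, g2, -⟩ | ⟨g1, -⟩ | g1
      · exact absurd g1 hvw
      · exact absurd (h1.trans g1.symm) ha.1
      · exact absurd g1 hvw
      · obtain ⟨p, q⟩ := key (s := s) (s' := s') ha ka h1 h2 g1
        exact ⟨Or.inr p, Or.inr q⟩
    · exact absurd h1 hvw
    · rcases qR_eq h' k' e' with ⟨g1, -⟩ | ⟨g1, g2, -⟩ | ⟨g1, -⟩ | g1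
      · exact absurd g1 hvw
      · obtain ⟨p, q⟩ := key (s := t) (s' := t') ha.symm ka.symm g1 g2 h1
        exact ⟨Or.inl p, Or.inl q⟩
      · exact absurd g1 hvw
      · obtain ⟨z, h1, h2⟩ := h1
        obtain ⟨z', g1, g2⟩ := g1
        have h1 := isVert_end h1
        have h2 := isVert_end h2
        have g1 := isVert_end g1
        have g2 := isVert_end g2
        tauto

lemma qR_stR {c d : VT} (hcd : T.Adj c d) (s : I) :
    qR (ℓ := ℓ) (T := T) (v := c) (b := Sum.inl d) hcd s = stR hcd s := rfl

lemma flow_DE {v : VT} {b b' : BrCode ℓ} (h : Valid T v b) (h' : Valid T v b')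
    (ha : Apart b b') {c d : VT} (hcd : T.Adj c d) {s t s' t' : I}
    (hst : ¬ (s = 0 ∧ t = 0)) (hlt : s' < t')
    (e : qR h s = stR hcd s') (e' : qR h' t = stR hcd t') (r : I) :
    qR h (scl s t r) = stR hcd (eL s' r) ∧ qR h' (scl t s r) = stR hcd (eR t' r) := by
  have k : Valid (ℓ := ℓ) T c (Sum.inl d) := hcd
  have hs1 : s' ≠ 1 := fun q => by subst q; exact absurd hlt (not_lt.2 t'.2.2)
  have ht0 : t' ≠ 0 := fun q => by subst q; exact absurd hlt (not_lt.2 s'.2.1)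
  have vs : ∀ {z}, IsVert c (Sum.inl d : BrCode ℓ) s' z → s' = 0 ∧ z = c := by
    rintro z (q | q)
    · exact q
    · exact absurd q.2 hs1
  have vt : ∀ {z}, IsVert c (Sum.inl d : BrCode ℓ) t' z → t' = 1 ∧ z = d := by
    rintro z (q | q)
    · exact absurd q.1 ht0
    · exact ⟨q.2, (Sum.inl_injective q.1).symm⟩
  rcases qR_eq h k e with ⟨rfl, rfl, rfl⟩ | ⟨rfl, h2, rfl⟩ | ⟨-, -, -, g, j, j', -, h1⟩ | ⟨z, h1, h2⟩
  · exfalso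
    rcases qR_eq h' k e' with ⟨-, rfl, -⟩ | ⟨rfl, -, -⟩ | ⟨-, -, -, g, j, j', -, h1⟩ | ⟨z, g1, g2⟩
    · exact ha.1 rfl
    · exact SimpleGraph.irrefl T h'
    · cases h1
    · obtain ⟨rfl, rfl⟩ := vt g2
      rcases g1 with ⟨-, rfl⟩ | ⟨rfl, -⟩
      · exact SimpleGraph.irrefl T hcd
      · exact ha.1 rfl
  · obtain rfl : d = v := Sum.inl_injective h2
    rcases qR_eq h' k e' with ⟨rfl, -, -⟩ | ⟨rfl, -, -⟩ | ⟨-, -, -, g, j, j', -, h1⟩ | ⟨z, g1, g2⟩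
    · exact absurd hcd (SimpleGraph.irrefl T)
    · exact absurd rfl ha.1
    · cases h1
    · obtain ⟨rfl, rfl⟩ := vt g2
      rcases g1 with ⟨rfl, -⟩ | ⟨rfl, -⟩
      · have hs : s ≠ 0 := fun q => hst ⟨q, rfl⟩
        rw [scl_zero, eR_one]
        refine ⟨?_, e'⟩
        rw [stR_symm hcd]
        change stR h _ = _
        congr 1
        apply Subtype.ext
        rw [coe_scl_right hs]
        change _ = 1 - (1 - (r : ℝ)) * (1 - s)
        ring
      · exact absurd h' (SimpleGraph.irrefl T)
  · cases h1
  · obtain ⟨rfl, rfl⟩ := vs h2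
    rcases qR_eq h' k e' with ⟨rfl, rfl, rfl⟩ | ⟨rfl, g2, -⟩ | ⟨-, -, -, g, j, j', -, h1⟩ | ⟨z', g1, g2⟩
    · rcases h1 with ⟨rfl, -⟩ | ⟨rfl, -⟩
      · rw [scl_zero, eL_zero]
        refine ⟨e, ?_⟩
        change stR h' _ = _
        congr 1
        apply Subtype.ext
        rw [coe_scl_right ht0, coe_eR]
      · exact absurd h (SimpleGraph.irrefl T)
    · rcases h1 with ⟨rfl, rfl⟩ | ⟨rfl, -⟩
      · exact absurd h' (SimpleGraph.irrefl T)
      · exact absurd rfl ha.1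
    · cases h1
    · obtain ⟨rfl, rfl⟩ := vt g2
      have h1 := isVert_end h1
      have g1 := isVert_end g1
      have hc : s = 1 ∨ t = 1 := by tauto
      rw [scl_const hc, scl_const hc.symm, eL_zero, eR_one]
      exact ⟨e, e'⟩

lemma flow_DG {v : VT} {b b' : BrCode ℓ} (h : Valid T v b) (h' : Valid T v b')
    (ha : Apart b b') {g : Grape ℓ} {s t s' t' : I}
    (hst : ¬ (s = 0 ∧ t = 0)) (hlt : s' < t') (hne : ¬ (s' = 0 ∧ t' = 1))
    (e : qR h s = grR T g s') (e' : qR h' t = grR T g t') (r : I) :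
    qR h (scl s t r) = grR T g (gL s' t' r) ∧ qR h' (scl t s r) = grR T g (gR s' t' r) := by
  have hs1 : s' ≠ 1 := fun q => by subst q; exact absurd hlt (not_lt.2 t'.2.2)
  have ht0 : t' ≠ 0 := fun q => by subst q; exact absurd hlt (not_lt.2 s'.2.1)
  rcases qR_eq_grR h e with ⟨j, rfl, hv, rfl⟩ | ⟨h1, h2⟩
  · rcases qR_eq_grR h' e' with ⟨j', rfl, -, rfl⟩ | ⟨g1, g2⟩
    · exact absurd ⟨g, j, j', rfl, rfl⟩ ha.2
    · obtain rfl := g1.resolve_left ht0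
      have hs0 : arm j s ≠ 0 := fun q => hne ⟨q, rfl⟩
      rcases g2 with ⟨rfl, -⟩ | ⟨rfl, -⟩
      · have hs : s ≠ 0 := fun q => hst ⟨q, rfl⟩
        rw [scl_zero, gL, gR, rot_one hs0, half1_one, mix_self, ← arm_scl hs]
        exact ⟨rfl, e'⟩
      · subst hv; exact absurd h' (SimpleGraph.irrefl T)
  · obtain rfl := h1.resolve_right hs1
    rcases qR_eq_grR h' e' with ⟨j', rfl, hv, rfl⟩ | ⟨g1, g2⟩
    · rcases h2 with ⟨rfl, -⟩ | ⟨rfl, -⟩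
      · have ht : t ≠ 0 := fun q => hst ⟨rfl, q⟩
        rw [scl_zero, gL, gR, rot_zero, half0_zero, mix_self, ← half_swap, ← arm_scl ht]
        exact ⟨e, rfl⟩
      · subst hv; exact absurd h (SimpleGraph.irrefl T)
    · exact absurd ⟨rfl, g1.resolve_left ht0⟩ hne

lemma flow_EE {a b c d : VT} (hab : T.Adj a b) (hcd : T.Adj c d) {s t s' t' : I}
    (hlt : s < t) (hlt' : s' < t')
    (e : (stR hab s : RR T ℓ) = stR hcd s') (e' : (stR hab t : RR T ℓ) = stR hcd t') (r : I) :
    (stR hab (eL s r) : RR T ℓ) = stR hcd (eL s' r) ∧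
      (stR hab (eR t r) : RR T ℓ) = stR hcd (eR t' r) := by
  have vs : ∀ {a b z : VT} {s t : I}, s < t → IsVert a (Sum.inl b : BrCode ℓ) s z → s = 0 ∧ z = a := by
    rintro a b z s t hlt (q | q)
    · exact q
    · exact absurd hlt (by rw [q.2]; exact not_lt.2 t.2.2)
  have vt : ∀ {a b z : VT} {s t : I}, s < t → IsVert a (Sum.inl b : BrCode ℓ) t z → t = 1 ∧ z = b := by
    rintro a b z s t hlt (q | q)
    · exact absurd hlt (by rw [q.1]; exact not_lt.2 s.2.1)
    · exact ⟨q.2, (Sum.inl_injective q.1).symm⟩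
  rcases stR_eq hab hcd e with ⟨rfl, rfl, rfl⟩ | ⟨rfl, rfl, rfl⟩ | ⟨z, h1, h2⟩
  · rcases stR_eq hab hcd e' with ⟨-, -, rfl⟩ | ⟨rfl, -, -⟩ | ⟨z, h1, h2⟩
    · exact ⟨rfl, rfl⟩
    · exact absurd hab (SimpleGraph.irrefl T)
    · obtain ⟨rfl, -⟩ := vt hlt h1
      obtain ⟨rfl, -⟩ := vt hlt' h2
      exact ⟨rfl, rfl⟩
  · rcases stR_eq hab hcd e' with ⟨rfl, -, -⟩ | ⟨-, -, rfl⟩ | ⟨z, h1, h2⟩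
    · exact absurd hab (SimpleGraph.irrefl T)
    · exact absurd hlt (not_lt.2 (unitInterval.symm_le_symm.1 hlt'.le))
    · obtain ⟨-, rfl⟩ := vt hlt h1
      obtain ⟨-, rfl⟩ := vt hlt' h2
      exact absurd hab (SimpleGraph.irrefl T)
  · obtain ⟨rfl, rfl⟩ := vs hlt h1
    obtain ⟨rfl, rfl⟩ := vs hlt' h2
    rcases stR_eq hab hcd e' with ⟨-, rfl, rfl⟩ | ⟨-, rfl, -⟩ | ⟨z, g1, g2⟩
    · exact ⟨rfl, rfl⟩
    · exact absurd hab (SimpleGraph.irrefl T)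
    · obtain ⟨rfl, rfl⟩ := vt hlt g1
      obtain ⟨rfl, rfl⟩ := vt hlt' g2
      exact ⟨rfl, rfl⟩

lemma flow_EG {a b : VT} (hab : T.Adj a b) {g : Grape ℓ} {s t s' t' : I}
    (hlt : s' < t') (hne : ¬ (s' = 0 ∧ t' = 1))
    (e : stR hab s = grR T g s') (e' : stR hab t = grR T g t') : False := by
  have hs1 : s' ≠ 1 := fun q => by subst q; exact absurd hlt (not_lt.2 t'.2.2)
  have ht0 : t' ≠ 0 := fun q => by subst q; exact absurd hlt (not_lt.2 s'.2.1)
  have k : Valid (ℓ := ℓ) T a (Sum.inl b) := hab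
  rcases qR_eq_grR k e with ⟨j, h1, -⟩ | ⟨h1, -⟩
  · cases h1
  · rcases qR_eq_grR k e' with ⟨j, h2, -⟩ | ⟨h2, -⟩
    · cases h2
    · exact hne ⟨h1.resolve_right hs1, h2.resolve_left ht0⟩

lemma flow_GG {g g' : Grape ℓ} {s t s' t' : I} (hlt : s < t) (hlt' : s' < t')
    (hne : ¬ (s = 0 ∧ t = 1))
    (e : grR T g s = grR T g' s') (e' : grR T g t = grR T g' t') : g = g' ∧ s = s' ∧ t = t' := by
  have hs1 : s ≠ 1 := fun q => by subst q; exact absurd hlt (not_lt.2 t.2.2)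
  have ht0 : t ≠ 0 := fun q => by subst q; exact absurd hlt (not_lt.2 s.2.1)
  have hs1' : s' ≠ 1 := fun q => by subst q; exact absurd hlt' (not_lt.2 t'.2.2)
  have ht0' : t' ≠ 0 := fun q => by subst q; exact absurd hlt' (not_lt.2 s'.2.1)
  rcases grR_eq e with ⟨h1, h2⟩ | ⟨h1, h2, -⟩ <;> rcases grR_eq e' with ⟨g1, g2⟩ | ⟨g1, g2, -⟩
  · exact ⟨h1, h2, g2⟩
  · exact ⟨h1, h2, by rw [g1.resolve_left ht0, g2.resolve_left ht0']⟩
  · exact ⟨g1, by rw [h1.resolve_right hs1, h2.resolve_right hs1'], g2⟩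
  · exact absurd ⟨h1.resolve_right hs1, g1.resolve_left ht0⟩ hne

lemma flow_GG' {g g' : Grape ℓ} {s t s' t' : I} (hlt : s < t) (hlt' : s' < t')
    (hne : ¬ (s = 0 ∧ t = 1)) (hne' : ¬ (s' = 0 ∧ t' = 1))
    (e : grR T g s = grR T g' t') (e' : grR T g t = grR T g' s') (r : I) :
    grR T g (gL s t r) = grR T g' (gR s' t' r) ∧ grR T g (gR s t r) = grR T g' (gL s' t' r) := by
  have hs1 : s ≠ 1 := fun q => by subst q; exact absurd hlt (not_lt.2 t.2.2)
  have ht0 : t ≠ 0 := fun q => by subst q; exact absurd hlt (not_lt.2 s.2.1)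
  have hs1' : s' ≠ 1 := fun q => by subst q; exact absurd hlt' (not_lt.2 t'.2.2)
  have ht0' : t' ≠ 0 := fun q => by subst q; exact absurd hlt' (not_lt.2 s'.2.1)
  rcases grR_eq e with ⟨h1, h2⟩ | ⟨h1, h2, -⟩ <;> rcases grR_eq e' with ⟨g1, g2⟩ | ⟨g1, g2, -⟩
  · subst h2 g2; exact absurd (hlt.trans hlt') (lt_irrefl _)
  · obtain rfl := g1.resolve_left ht0
    obtain rfl := g2.resolve_right hs1'
    subst h1 h2
    have hs0 : s ≠ 0 := fun q => hne ⟨q, rfl⟩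
    simp only [gL, gR]
    rw [rot_one hs0, rot_zero, half_swap, half1_one, half0_zero, mix_self, mix_self]
    exact ⟨rfl, e'⟩
  · obtain rfl := h1.resolve_right hs1
    obtain rfl := h2.resolve_left ht0'
    subst g1 g2
    have hs0 : t ≠ 0 := ht0
    simp only [gL, gR]
    rw [rot_one hs0, rot_zero, half_swap, half1_one, half0_zero, mix_self, mix_self]
    exact ⟨e, rfl⟩
  · exact absurd ⟨h1.resolve_right hs1, g1.resolve_left ht0⟩ hne

end FlowCompat

end

/-! ### The subspace K -/

section

open unitInterval

section KSpace

variable {VT : Type} [Fintype VT] [DecidableEq VT] {T : SimpleGraph VT} {ℓ : VT → ℕ}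

/-- The unordered configuration space of two points on `|Γ|`. -/
abbrev CC (T : SimpleGraph VT) (ℓ : VT → ℕ) : Type := UConf 2 (RR T ℓ)

/-- Two distinct points form a configuration in `K` exactly when they have no stem vertex
in common. -/
lemma mk2_mem_K (hn : IsNormalGrapes T ℓ) {x y : RR T ℓ} (h : x ≠ y) :
    mk2 x y h ∈ Kset T ℓ ↔ Disjoint (stemsR x) (stemsR y) := by
  rw [stemsR, stemsR, ← separated_iff hn x.2 y.2]
  constructor
  · rintro ⟨a, b, hab, f, e, h0, h1⟩
    rw [quot_mk_eq_mk2] at e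
    rcases mk2_eq_iff.1 e with ⟨e0, e1⟩ | ⟨e0, e1⟩
    · exact ⟨a, b, hab, by rw [e0]; exact h0, by rw [e1]; exact h1⟩
    · exact ⟨b, a, hab.symm, by rw [e0]; exact h1, by rw [e1]; exact h0⟩
  · rintro ⟨a, b, hab, h0, h1⟩
    exact ⟨a, b, hab, _, rfl, h0, h1⟩

lemma isClosed_sideRealization (a b : VT) : IsClosed (sideRealization T ℓ a b) := by
  unfold sideRealization
  refine isClosed_iUnion_of_finite fun u => isClosed_iUnion_of_finite fun v =>
    isClosed_iUnion_of_finite fun _ => ?_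
  rw [segment_eq_image]
  exact (isCompact_Icc.image (by fun_prop)).isClosed

lemma isClosed_K : IsClosed (Kset T ℓ) := by
  have : Kset T ℓ = ⋃ (a : VT) (b : VT) (_ : T.Adj a b), Quot.mk (permRel 2 (RR T ℓ)) ''
      ((fun f : Conf 2 (RR T ℓ) => ((f.1 0 : GrapeVert VT ℓ → ℝ), (f.1 1 : GrapeVert VT ℓ → ℝ))) ⁻¹'
        (sideRealization T ℓ a b ×ˢ sideRealization T ℓ b a)) := by
    ext q
    simp only [Set.mem_iUnion]
    constructor
    · rintro ⟨a, b, hab, f, e, h0, h1⟩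
      exact ⟨a, b, hab, f, ⟨h0, h1⟩, e.symm⟩
    · rintro ⟨a, b, hab, f, ⟨h0, h1⟩, e⟩
      exact ⟨a, b, hab, f, e.symm, h0, h1⟩
  rw [this]
  refine isClosed_iUnion_of_finite fun a => isClosed_iUnion_of_finite fun b =>
    isClosed_iUnion_of_finite fun _ => ?_
  refine isClosedMap_quot _ (((isClosed_sideRealization a b).prod
    (isClosed_sideRealization b a)).preimage ?_)
  exact (continuous_subtype_val.comp ((continuous_apply 0).comp continuous_subtype_val)).prodMk
    (continuous_subtype_val.comp ((continuous_apply 1).comp continuous_subtype_val))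

end KSpace

/-! ### The flow on the configuration space -/

section FlowSpace

variable {VT : Type} [Fintype VT] [DecidableEq VT] {T : SimpleGraph VT} {ℓ : VT → ℕ}

/-- `OB x y f g` says that `(f, g)` is a flow line starting at `(x, y)`: constant if `x` and `y`
have disjoint stem supports, pushing radially away from `v` if `x` and `y` lie on different
branches at `v`, pushing to the endpoints of a stem edge containing both points, and pushing to an
antipodal pair on a grape containing both. -/
inductive OB : RR T ℓ → RR T ℓ → (I → RR T ℓ) → (I → RR T ℓ) → Prop
  | K (x y : RR T ℓ) (h : Disjoint (stemsR x) (stemsR y)) : OB x y (fun _ => x) (fun _ => y)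
  | D {v : VT} {b b' : BrCode ℓ} (h : Valid T v b) (h' : Valid T v b') (ha : Apart b b')
      (s t : I) (hst : ¬ (s = 0 ∧ t = 0)) :
      OB (qR h s) (qR h' t) (fun r => qR h (scl s t r)) (fun r => qR h' (scl t s r))
  | E {a b : VT} (h : T.Adj a b) (s t : I) (hlt : s < t) :
      OB (stR h s) (stR h t) (fun r => stR h (eL s r)) (fun r => stR h (eR t r))
  | G (g : Grape ℓ) (s t : I) (hlt : s < t) (hne : ¬ (s = 0 ∧ t = 1)) :
      OB (grR T g s) (grR T g t) (fun r => grR T g (gL s t r)) (fun r => grR T g (gR s t r))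

lemma disj_D {v : VT} {b b' : BrCode ℓ} (h : Valid T v b) (h' : Valid T v b') {s t : I}
    (hd : Disjoint (stemsR (qR h s)) (stemsR (qR h' t))) : s = 1 ∨ t = 1 := by
  by_contra hc
  push Not at hc
  exact Set.disjoint_left.1 hd ((mem_stems_qR h s).2 (Or.inr hc.1)) ((mem_stems_qR h' t).2 (Or.inr hc.2))

lemma disj_E {a b : VT} (h : T.Adj a b) {s t : I} (hlt : s < t)
    (hd : Disjoint (stemsR (stR h s : RR T ℓ)) (stemsR (stR h t : RR T ℓ))) : s = 0 ∧ t = 1 := by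
  have hs1 : s ≠ 1 := fun q => by subst q; exact absurd hlt (not_lt.2 t.2.2)
  have ht0 : t ≠ 0 := fun q => by subst q; exact absurd hlt (not_lt.2 s.2.1)
  constructor
  · by_contra hc
    exact Set.disjoint_left.1 hd ((mem_stems_stR h s b).2 (Or.inr ⟨rfl, hc⟩))
      ((mem_stems_stR h t b).2 (Or.inr ⟨rfl, ht0⟩))
  · by_contra hc
    exact Set.disjoint_left.1 hd ((mem_stems_stR h s a).2 (Or.inl ⟨rfl, hs1⟩))
      ((mem_stems_stR h t a).2 (Or.inl ⟨rfl, hc⟩))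

lemma OB.const_of_disjoint {x y : RR T ℓ} {f g : I → RR T ℓ} (h : OB x y f g)
    (hd : Disjoint (stemsR x) (stemsR y)) (r : I) : f r = x ∧ g r = y := by
  cases h with
  | K => exact ⟨rfl, rfl⟩
  | D h h' ha s t hst =>
    have hc := disj_D h h' hd
    dsimp only
    rw [scl_const hc, scl_const hc.symm]
    exact ⟨rfl, rfl⟩
  | E h s t hlt =>
    obtain ⟨rfl, rfl⟩ := disj_E h hlt hd
    dsimp only
    rw [eL_zero, eR_one]
    exact ⟨rfl, rfl⟩
  | G g s t hlt hne =>
    rw [stems_grR, stems_grR] at hd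
    simp at hd

lemma OB.symm_or {x y : RR T ℓ} {f g : I → RR T ℓ} (h : OB x y f g) :
    OB y x g f ∨ ∃ (γ : Grape ℓ) (s t : I), s < t ∧ ¬ (s = 0 ∧ t = 1) ∧ x = grR T γ s ∧
      y = grR T γ t ∧ f = (fun r => grR T γ (gL s t r)) ∧ g = (fun r => grR T γ (gR s t r)) := by
  cases h with
  | K _ _ h => exact Or.inl (OB.K _ _ h.symm)
  | D h h' ha s t hst => exact Or.inl (OB.D h' h ha.symm t s (fun q => hst q.symm))
  | E h s t hlt =>
    left
    have := OB.E (ℓ := ℓ) h.symm (unitInterval.symm t) (unitInterval.symm s)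
      (unitInterval.symm_lt_symm.2 hlt)
    rw [← stR_symm h, ← stR_symm h] at this
    convert this using 2 with r r
    · rw [stR_symm, eR, unitInterval.symm_symm]
    · rw [stR_symm, eR, unitInterval.symm_symm]
  | G g s t hlt hne => exact Or.inr ⟨g, s, t, hlt, hne, rfl, rfl, rfl, rfl⟩

/-- Flow lines are determined by their starting points. -/
lemma OB.unique {x y x' y' : RR T ℓ} {f g f' g' : I → RR T ℓ} (h : OB x y f g)
    (h' : OB x' y' f' g') (ex : x = x') (ey : y = y') (r : I) : f r = f' r ∧ g r = g' r := by
  by_cases hd : Disjoint (stemsR x) (stemsR y)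
  · have h1 := h.const_of_disjoint hd r
    have h2 := h'.const_of_disjoint (by rw [← ex, ← ey]; exact hd) r
    rw [h1.1, h1.2, h2.1, h2.2]
    exact ⟨ex, ey⟩
  cases h with
  | K _ _ h => exact absurd h hd
  | D h1 h2 ha s t hst =>
    cases h' with
    | K _ _ h => exact absurd (by rw [ex, ey]; exact h) hd
    | D k1 k2 ka s' t' hst' => exact flow_DD h1 h2 ha k1 k2 ka hst hst' ex ey r
    | E k s' t' hlt => exact flow_DE h1 h2 ha k hst hlt ex ey r
    | G γ s' t' hlt hne => exact flow_DG h1 h2 ha hst hlt hne ex ey r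
  | E h s t hlt =>
    cases h' with
    | K _ _ h => exact absurd (by rw [ex, ey]; exact h) hd
    | D k1 k2 ka s' t' hst' =>
      exact (flow_DE k1 k2 ka h hst' hlt ex.symm ey.symm r).imp Eq.symm Eq.symm
    | E k s' t' hlt' => exact flow_EE h k hlt hlt' ex ey r
    | G γ s' t' hlt' hne => exact (flow_EG h hlt' hne ex ey).elim
  | G γ s t hlt hne =>
    cases h' with
    | K _ _ h => exact absurd (by rw [ex, ey]; exact h) hd
    | D k1 k2 ka s' t' hst' =>
      exact (flow_DG k1 k2 ka hst' hlt hne ex.symm ey.symm r).imp Eq.symm Eq.symm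
    | E k s' t' hlt' => exact (flow_EG k hlt hne ex.symm ey.symm).elim
    | G γ' s' t' hlt' hne' =>
      obtain ⟨rfl, rfl, rfl⟩ := flow_GG hlt hlt' hne ex ey
      exact ⟨rfl, rfl⟩

lemma OB.unique' {x y x' y' : RR T ℓ} {f g f' g' : I → RR T ℓ} (h : OB x y f g)
    (h' : OB x' y' f' g') (ex : x = y') (ey : y = x') (r : I) : f r = g' r ∧ g r = f' r := by
  rcases h.symm_or with k | ⟨γ, s, t, hlt, hne, rfl, rfl, rfl, rfl⟩
  · exact (k.unique h' ey ex r).symm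
  · rcases h'.symm_or with k' | ⟨γ', s', t', hlt', hne', rfl, rfl, rfl, rfl⟩
    · exact h.unique k' ex ey r
    · exact flow_GG' hlt hlt' hne hne' ex ey r

lemma stR_inj {a b : VT} (h : T.Adj a b) {s t : I} (e : (stR h s : RR T ℓ) = stR h t) : s = t :=
  (qR_eq_same (b := Sum.inl b) (c := Sum.inl b) h h e).1

lemma OB.ne {x y : RR T ℓ} {f g : I → RR T ℓ} (h : OB x y f g) (hne : x ≠ y) (r : I) :
    f r ≠ g r := by
  cases h with
  | K _ _ h => exact hne
  | D h h' ha s t hst =>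
    intro e
    obtain ⟨e1, e2⟩ := (qR_eq_apart h h' ha).1 e
    exact hst ⟨scl_eq_zero e1, scl_eq_zero e2⟩
  | E h s t hlt => exact fun e => (eL_lt_eR hlt r).ne (stR_inj h e)
  | G g s t hlt hne' =>
    intro e
    rcases grR_eq e with ⟨-, e⟩ | ⟨h1, h2, -⟩
    · exact (gL_lt_gR hlt r).ne e
    · have hl := gL_lt_gR hlt r
      have h1 : gL s t r = 0 := h1.resolve_right fun q => by
        rw [q] at hl; exact absurd hl (not_lt.2 (gR s t r).2.2)
      have h2 : gR s t r = 1 := h2.resolve_left fun q => by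
        rw [q] at hl; exact absurd hl (not_lt.2 (gL s t r).2.1)
      have h1 : (1 - (r : ℝ)) * s + r * ((s : ℝ) / (s + (1 - t)) / 2) = 0 := congrArg Subtype.val h1
      have h2 : (1 - (r : ℝ)) * t + r * ((1 + (s : ℝ) / (s + (1 - t))) / 2) = 1 :=
        congrArg Subtype.val h2
      have hs := s.2.1; have ht := t.2.2
      have hr := r.2.1; have hr1 := r.2.2
      have hD : 0 < (s : ℝ) + (1 - t) := by
        rcases lt_or_eq_of_le (show (0 : ℝ) ≤ s + (1 - t) by linarith) with q | q
        · exact q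
        · exact absurd ⟨Subtype.ext (by change (s : ℝ) = 0; linarith),
            Subtype.ext (by change (t : ℝ) = 1; linarith)⟩ hne'
      have hq0 : 0 ≤ (s : ℝ) / (s + (1 - t)) := div_nonneg hs hD.le
      have hq1 : (s : ℝ) / (s + (1 - t)) ≤ 1 := (div_le_one hD).2 (by linarith)
      generalize (s : ℝ) / (s + (1 - t)) = q at *
      rcases eq_or_lt_of_le hr with h0 | h0
      · rw [← h0] at h1 h2
        exact hne' ⟨Subtype.ext (by change (s : ℝ) = 0; linarith),
            Subtype.ext (by change (t : ℝ) = 1; linarith)⟩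
      · have a1 := mul_nonneg (sub_nonneg.2 hr1) hs
        have a2 : 0 ≤ r * q := mul_nonneg hr hq0
        have a3 : r * q = 0 := by nlinarith
        have a4 := mul_nonneg (sub_nonneg.2 hr1) (sub_nonneg.2 ht)
        nlinarith

/-- Codes of the pieces into which the configuration space (apart from `K`) is decomposed. -/
inductive Pc (T : SimpleGraph VT) (ℓ : VT → ℕ) : Type
  | D (v : VT) (b b' : BrCode ℓ) (h : Valid T v b) (h' : Valid T v b') (ha : Apart b b')
  | E (a b : VT) (h : T.Adj a b)
  | G (g : Grape ℓ)

instance : Finite (Pc T ℓ) := by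
  let f : Pc T ℓ → (VT × BrCode ℓ × BrCode ℓ) ⊕ (VT × VT) ⊕ Grape ℓ
    | .D v b b' _ _ _ => Sum.inl (v, b, b')
    | .E a b _ => Sum.inr (Sum.inl (a, b))
    | .G g => Sum.inr (Sum.inr g)
  refine Finite.of_injective f ?_
  rintro (⟨v, b, b', _, _, _⟩ | ⟨a, b, _⟩ | g) (⟨w, c, c', _, _, _⟩ | ⟨a', d, _⟩ | g') e <;>
    simp_all [f]

/-- The map `(s, t) ↦ min s t` on the square. -/
def minC : C(I × I, I) := ⟨fun z => min z.1 z.2, by fun_prop⟩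
/-- The map `(s, t) ↦ max s t` on the square. -/
def maxC : C(I × I, I) := ⟨fun z => max z.1 z.2, by fun_prop⟩

/-- First point of the configurations in a piece. -/
def Pc.φ : Pc T ℓ → C(I × I, RR T ℓ)
  | .D _ _ _ h _ _ => (qR h).comp ⟨Prod.fst, continuous_fst⟩
  | .E _ _ h => (stR h).comp minC
  | .G g => (grR T g).comp minC
/-- Second point of the configurations in a piece. -/
def Pc.ψ : Pc T ℓ → C(I × I, RR T ℓ)
  | .D _ _ _ _ h' _ => (qR h').comp ⟨Prod.snd, continuous_snd⟩
  | .E _ _ h => (stR h).comp maxC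
  | .G g => (grR T g).comp maxC

/-- The parameters of a piece that give two distinct points. -/
abbrev Pc.Dom (i : Pc T ℓ) : Type := {z : I × I // i.φ z ≠ i.ψ z}

/-- Flow line of the first point. -/
def Pc.Fφ : (i : Pc T ℓ) → I × I → I → RR T ℓ
  | .D _ _ _ h _ _, z, r => qR h (scl z.1 z.2 r)
  | .E _ _ h, z, r => stR h (eL (minC z) r)
  | .G g, z, r => grR T g (gL (minC z) (maxC z) r)
/-- Flow line of the second point. -/
def Pc.Fψ : (i : Pc T ℓ) → I × I → I → RR T ℓ
  | .D _ _ _ _ h' _, z, r => qR h' (scl z.2 z.1 r)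
  | .E _ _ h, z, r => stR h (eR (maxC z) r)
  | .G g, z, r => grR T g (gR (minC z) (maxC z) r)

lemma min_lt_max {z : I × I} (h : minC z ≠ maxC z) : minC z < maxC z :=
  lt_of_le_of_ne min_le_max h

lemma grR_end (g : Grape ℓ) : grR T g 0 = grR T g 1 := by
  have h : Valid T g.1 (Sum.inr (g, false) : BrCode ℓ) := rfl
  have h' : Valid T g.1 (Sum.inr (g, true) : BrCode ℓ) := rfl
  have := qR_zero h h'
  have e0 : arm false 0 = 0 := Subtype.ext (by simp)
  have e1 : arm true 0 = 1 := Subtype.ext (by simp)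
  change grR T g (arm false 0) = grR T g (arm true 0) at this
  rwa [e0, e1] at this

lemma Pc.good_D {v : VT} {b b' : BrCode ℓ} {h : Valid T v b} {h' : Valid T v b'} {ha : Apart b b'}
    (z : (Pc.D v b b' h h' ha).Dom) : ¬ (z.1.1 = 0 ∧ z.1.2 = 0) :=
  fun q => z.2 ((qR_eq_apart h h' ha).2 q)

lemma Pc.good_G {g : Grape ℓ} (z : (Pc.G (T := T) g).Dom) :
    minC z.1 < maxC z.1 ∧ ¬ (minC z.1 = 0 ∧ maxC z.1 = 1) := by
  refine ⟨min_lt_max fun q => z.2 ?_, fun q => z.2 ?_⟩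
  · change grR T g (minC z.1) = grR T g (maxC z.1)
    rw [q]
  · change grR T g (minC z.1) = grR T g (maxC z.1)
    rw [q.1, q.2, grR_end]

lemma Pc.good_E {a b : VT} {h : T.Adj a b} (z : (Pc.E (ℓ := ℓ) a b h).Dom) :
    minC z.1 < maxC z.1 :=
  min_lt_max fun q => z.2 (by
    change stR h (minC z.1) = stR h (maxC z.1)
    rw [q])

lemma Pc.OB (i : Pc T ℓ) (z : i.Dom) : OB (i.φ z.1) (i.ψ z.1) (i.Fφ z.1) (i.Fψ z.1) := by
  cases i with
  | D v b b' h h' ha => exact OB.D h h' ha _ _ (Pc.good_D z)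
  | E a b h => exact OB.E h _ _ (Pc.good_E z)
  | G g => exact OB.G g _ _ (Pc.good_G z).1 (Pc.good_G z).2

lemma Pc.continuous_Fφ (i : Pc T ℓ) : Continuous fun p : i.Dom × I => i.Fφ p.1.1 p.2 := by
  cases i with
  | D v b b' h h' ha =>
    exact (qR h).continuous.comp (continuous_scl (by fun_prop) (by fun_prop) (by fun_prop)
      fun p => Pc.good_D p.1)
  | E a b h => exact (stR h).continuous.comp (continuous_eL (by fun_prop) (by fun_prop))
  | G g =>
    refine (grR T g).continuous.comp (continuous_mix (by fun_prop)
      (continuous_half0.comp (continuous_rot (by fun_prop) (by fun_prop)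
        fun p => (Pc.good_G p.1).2)) (by fun_prop))

lemma Pc.continuous_Fψ (i : Pc T ℓ) : Continuous fun p : i.Dom × I => i.Fψ p.1.1 p.2 := by
  cases i with
  | D v b b' h h' ha =>
    exact (qR h').continuous.comp (continuous_scl (by fun_prop) (by fun_prop) (by fun_prop)
      fun p q => Pc.good_D p.1 q.symm)
  | E a b h => exact (stR h).continuous.comp (continuous_eR (by fun_prop) (by fun_prop))
  | G g =>
    refine (grR T g).continuous.comp (continuous_mix (by fun_prop)
      (continuous_half1.comp (continuous_rot (by fun_prop) (by fun_prop)
        fun p => (Pc.good_G p.1).2)) (by fun_prop))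

/-- Every pair of points has disjoint stem supports or belongs to a piece. -/
lemma exists_piece {x y : RR T ℓ} (hxy : x ≠ y) : Disjoint (stemsR x) (stemsR y) ∨
    ∃ (i : Pc T ℓ) (z : i.Dom), mk2 x y hxy = mk2 (i.φ z.1) (i.ψ z.1) z.2 := by
  by_cases hd : Disjoint (stemsR x) (stemsR y)
  · exact Or.inl hd
  right
  rw [Set.not_disjoint_iff] at hd
  obtain ⟨v, hx, hy⟩ := hd
  obtain ⟨b, h, s, rfl⟩ := exists_branch hx
  obtain ⟨b', h', t, rfl⟩ := exists_branch hy
  by_cases ha : Apart b b'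
  · exact ⟨.D v b b' h h' ha, ⟨(s, t), hxy⟩, rfl⟩
  have key : ∀ (α : C(I, RR T ℓ)) (s t : I) (h1 : α s ≠ α t),
      ∃ h2, mk2 (α s) (α t) h1 = mk2 (α (minC (s, t))) (α (maxC (s, t))) h2 := by
    intro α s t h1
    rcases le_total s t with q | q
    · have e1 : minC (s, t) = s := min_eq_left q
      have e2 : maxC (s, t) = t := max_eq_right q
      rw [e1, e2]; exact ⟨h1, rfl⟩
    · have e1 : minC (s, t) = t := min_eq_right q
      have e2 : maxC (s, t) = s := max_eq_left q
      rw [e1, e2]; exact ⟨h1.symm, mk2_comm h1⟩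
  have grape : ∀ (g : Grape ℓ) (s t : I) (h1 : grR T g s ≠ grR T g t), ∃ (i : Pc T ℓ) (z : i.Dom),
      mk2 (grR T g s) (grR T g t) h1 = mk2 (i.φ z.1) (i.ψ z.1) z.2 := by
    intro g s t h1
    obtain ⟨h2, e⟩ := key (grR T g) s t h1
    exact ⟨.G g, ⟨(s, t), h2⟩, e⟩
  rw [Apart, not_and_not_right] at ha
  by_cases hb : b = b'
  · subst hb
    rcases b with u | ⟨g, j⟩
    · obtain ⟨h2, e⟩ := key (stR h) s t hxy
      exact ⟨.E v u h, ⟨(s, t), h2⟩, e⟩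
    · exact grape g (arm j s) (arm j t) hxy
  · obtain ⟨g, j, j', rfl, rfl⟩ := ha hb
    exact grape g (arm j s) (arm j' t) hxy

/-- The disjoint union of `K` and all pieces. -/
abbrev PP (T : SimpleGraph VT) (ℓ : VT → ℕ) : Type := ↥(Kset T ℓ) ⊕ (Σ i : Pc T ℓ, i.Dom)

/-- The projection of the disjoint union of all pieces to the configuration space. -/
def PP.proj : PP T ℓ → CC T ℓ :=
  Sum.elim Subtype.val fun p => mk2 (p.1.φ p.2.1) (p.1.ψ p.2.1) p.2.2

lemma isQuotientMap_proj (hn : IsNormalGrapes T ℓ) :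
    Topology.IsQuotientMap (PP.proj : PP T ℓ → CC T ℓ) := by
  refine IsClosedMap.isQuotientMap ?_ ?_ ?_
  · refine isClosedMap_sumElim.2 ⟨isClosed_K.isClosedMap_subtype_val, fun S hS => ?_⟩
    have e : (fun p : Σ i : Pc T ℓ, i.Dom => mk2 (p.1.φ p.2.1) (p.1.ψ p.2.1) p.2.2) '' S =
        ⋃ i : Pc T ℓ, (fun z : i.Dom => mk2 (i.φ z.1) (i.ψ z.1) z.2) '' (Sigma.mk i ⁻¹' S) := by
      ext q
      simp only [Set.mem_iUnion]
      constructor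
      · rintro ⟨⟨i, z⟩, h, rfl⟩
        exact ⟨i, z, h, rfl⟩
      · rintro ⟨i, z, h, rfl⟩
        exact ⟨⟨i, z⟩, h, rfl⟩
    rw [e]
    exact isClosed_iUnion_of_finite fun i =>
      isClosedMap_mk2 i.φ i.ψ _ (hS.preimage continuous_sigmaMk)
  · refine continuous_sumElim.2 ⟨continuous_subtype_val, continuous_sigma fun i => ?_⟩
    exact continuous_mk2 (i.φ.continuous.comp continuous_subtype_val)
      (i.ψ.continuous.comp continuous_subtype_val) _
  · intro q
    obtain ⟨x, y, h, rfl⟩ := exists_mk2 q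
    rcases exists_piece h with hd | ⟨i, z, e⟩
    · exact ⟨Sum.inl ⟨_, (mk2_mem_K hn h).2 hd⟩, rfl⟩
    · exact ⟨Sum.inr ⟨i, z⟩, e.symm⟩

/-- The flow on a piece. -/
def Pc.flow (i : Pc T ℓ) : C(i.Dom, C(I, CC T ℓ)) :=
  ContinuousMap.curry ⟨fun z : i.Dom × I => mk2 (i.Fφ z.1.1 z.2) (i.Fψ z.1.1 z.2)
    ((i.OB z.1).ne z.1.2 z.2), continuous_mk2 i.continuous_Fφ i.continuous_Fψ _⟩

/-- The flow on the disjoint union of all pieces; it fixes `K`. -/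
def PP.flow (T : SimpleGraph VT) (ℓ : VT → ℕ) : C(PP T ℓ × I, CC T ℓ) :=
  ContinuousMap.uncurry ⟨Sum.elim (fun k => ContinuousMap.const I k.1) (fun p => p.1.flow p.2),
    continuous_sumElim.2 ⟨ContinuousMap.continuous_const'.comp continuous_subtype_val,
      continuous_sigma fun i => i.flow.continuous⟩⟩

/-- The flow on the configuration space. -/
lemma exists_flow (hn : IsNormalGrapes T ℓ) : ∃ H : C(CC T ℓ × I, CC T ℓ),
    ∀ {x y : RR T ℓ} (hxy : x ≠ y) {f g : I → RR T ℓ} (h : OB x y f g) (r : I),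
      H (mk2 x y hxy, r) = mk2 (f r) (g r) (h.ne hxy r) := by
  -- every point of the disjoint union of the pieces carries a flow line
  have hP : ∀ a : PP T ℓ, ∃ (x y : RR T ℓ) (hxy : x ≠ y) (f g : I → RR T ℓ) (h : OB x y f g),
      PP.proj a = mk2 x y hxy ∧ ∀ r, PP.flow T ℓ (a, r) = mk2 (f r) (g r) (h.ne hxy r) := by
    rintro (⟨q, hq⟩ | ⟨i, z⟩)
    · obtain ⟨x, y, hxy, rfl⟩ := exists_mk2 q
      exact ⟨x, y, hxy, _, _, OB.K x y ((mk2_mem_K hn hxy).1 hq), rfl, fun r => rfl⟩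
    · exact ⟨_, _, z.2, _, _, i.OB z, rfl, fun r => rfl⟩
  have huniq : ∀ {x y x' y' : RR T ℓ} (hxy : x ≠ y) (hxy' : x' ≠ y') {f g f' g' : I → RR T ℓ}
      (h : OB x y f g) (h' : OB x' y' f' g'), mk2 x y hxy = mk2 x' y' hxy' → ∀ r,
      mk2 (f r) (g r) (h.ne hxy r) = mk2 (f' r) (g' r) (h'.ne hxy' r) := by
    intro x y x' y' hxy hxy' f g f' g' h h' e r
    rcases mk2_eq_iff.1 e with ⟨e1, e2⟩ | ⟨e1, e2⟩
    · exact mk2_eq_iff.2 (Or.inl (h.unique h' e1 e2 r))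
    · exact mk2_eq_iff.2 (Or.inr (h.unique' h' e1 e2 r))
  obtain ⟨H, hH⟩ := exists_homotopy_descend (isQuotientMap_proj hn) (PP.flow T ℓ) (by
    intro a b e r
    obtain ⟨x, y, hxy, f, g, h, e1, e2⟩ := hP a
    obtain ⟨x', y', hxy', f', g', h', e1', e2'⟩ := hP b
    rw [e2, e2']
    exact huniq hxy hxy' h h' (by rw [← e1, ← e1', e]) r)
  refine ⟨H, fun {x y} hxy {f g} h r => ?_⟩
  obtain ⟨a, ha⟩ := (isQuotientMap_proj hn).surjective (mk2 x y hxy)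
  obtain ⟨x', y', hxy', f', g', h', e1', e2'⟩ := hP a
  rw [← ha, hH, e2']
  exact huniq hxy' hxy h' h (by rw [← e1', ha]) r

/-- Every configuration is the start of a flow line. -/
lemma exists_OB (q : CC T ℓ) : ∃ (x y : RR T ℓ) (hxy : x ≠ y) (f g : I → RR T ℓ),
    q = mk2 x y hxy ∧ OB x y f g := by
  obtain ⟨x, y, h, rfl⟩ := exists_mk2 q
  rcases exists_piece h with hd | ⟨i, z, e⟩
  · exact ⟨x, y, h, _, _, rfl, OB.K x y hd⟩
  · exact ⟨_, _, z.2, _, _, e, i.OB z⟩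

end FlowSpace

end

/-! ### The arcs outside K -/

section

open unitInterval

section Arcs

variable {VT : Type} [Fintype VT] [DecidableEq VT] {T : SimpleGraph VT} {ℓ : VT → ℕ}

lemma valid_self (T : SimpleGraph VT) (g : Grape ℓ) (j : Bool) :
    Valid T g.1 (Sum.inr (g, j) : BrCode ℓ) := rfl

/-- The point of the grape `g` opposite to the stem. -/
def mid (T : SimpleGraph VT) (g : Grape ℓ) : RR T ℓ := grR T g (arm false 1)

lemma mid_eq (g : Grape ℓ) (j : Bool) (h : Valid T g.1 (Sum.inr (g, j) : BrCode ℓ)) :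
    mid T g = qR h 1 := by
  change _ = grR T g (arm j 1)
  rw [mid, arm_one false j]

/-- Codes of the arcs that are left after the flow has been followed to its end, outside `K`:
either two antipodal points rotate on the grape `g`, or one point rests in `mid g` and the other
one moves along another branch `b`. -/
inductive Arc (T : SimpleGraph VT) (ℓ : VT → ℕ) : Type
  | rot (g : Grape ℓ)
  | push (g : Grape ℓ) (b : BrCode ℓ) (h : Valid T g.1 b) (ha : Apart (Sum.inr (g, false)) b)

instance : Finite (Arc T ℓ) := by
  let f : Arc T ℓ → Grape ℓ ⊕ (Grape ℓ × BrCode ℓ)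
    | .rot g => Sum.inl g
    | .push g b _ _ => Sum.inr (g, b)
  refine Finite.of_injective f ?_
  rintro (g | ⟨g, b, _, _⟩) (g' | ⟨g', b', _, _⟩) e <;> simp_all [f]

lemma apart_grape {g : Grape ℓ} {b : BrCode ℓ} : Apart (Sum.inr (g, false)) b ↔
    ∀ j, b ≠ Sum.inr (g, j) := by
  constructor
  · rintro ⟨-, h⟩ j rfl
    exact h ⟨g, false, j, rfl, rfl⟩
  · intro h
    refine ⟨(h false).symm, ?_⟩
    rintro ⟨g', j, j', e, rfl⟩
    cases e
    exact h j' rfl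

lemma push_ne {g : Grape ℓ} {b : BrCode ℓ} (h : Valid T g.1 b) (ha : Apart (Sum.inr (g, false)) b)
    (t : I) : mid T g ≠ qR h t := by
  rw [mid_eq g false (valid_self T g false)]
  intro e
  have := ((qR_eq_apart _ h ha).1 e).1
  exact one_ne_zero this

lemma rot_ne (g : Grape ℓ) (t : I) : grR T g (half0 t) ≠ grR T g (half1 t) := by
  intro e
  rcases grR_eq e with ⟨-, e⟩ | ⟨h1, h2, -⟩
  · exact (half_lt t).ne e
  · have hl := half_lt t
    refine half_not_end t ⟨h1.resolve_right fun q => ?_, h2.resolve_left fun q => ?_⟩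
    · rw [q] at hl; exact absurd hl (not_lt.2 (half1 t).2.2)
    · rw [q] at hl; exact absurd hl (not_lt.2 (half0 t).2.1)

/-- The arcs as paths in the configuration space. -/
def Arc.c : Arc T ℓ → C(I, CC T ℓ)
  | .rot g => ⟨fun t => mk2 (grR T g (half0 t)) (grR T g (half1 t)) (rot_ne g t),
      continuous_mk2 ((grR T g).continuous.comp continuous_half0)
        ((grR T g).continuous.comp continuous_half1) _⟩
  | .push g _ h ha => ⟨fun t => mk2 (mid T g) (qR h t) (push_ne h ha t),
      continuous_mk2 continuous_const (qR h).continuous _⟩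

lemma c_push {g : Grape ℓ} {b : BrCode ℓ} {h : Valid T g.1 b} {ha : Apart (Sum.inr (g, false)) b}
    (t : I) : (Arc.push g b h ha).c t = mk2 (mid T g) (qR h t) (push_ne h ha t) := rfl
lemma c_rot {g : Grape ℓ} (t : I) :
    (Arc.rot (T := T) g).c t = mk2 (grR T g (half0 t)) (grR T g (half1 t)) (rot_ne g t) := rfl

lemma push_mem_K (hn : IsNormalGrapes T ℓ) {g : Grape ℓ} {b : BrCode ℓ} {h : Valid T g.1 b}
    {ha : Apart (Sum.inr (g, false)) b} {t : I} :
    (Arc.push g b h ha).c t ∈ Kset T ℓ ↔ (∃ u, b = Sum.inl u) ∧ t = 1 := by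
  rw [c_push, mk2_mem_K hn, mid, stems_grR, Set.disjoint_singleton_left, mem_stems_qR]
  rcases b with u | p <;> simp

lemma rot_not_mem_K (hn : IsNormalGrapes T ℓ) {g : Grape ℓ} {t : I} :
    (Arc.rot g).c t ∉ Kset T ℓ := by
  rw [c_rot, mk2_mem_K hn, stems_grR, stems_grR]
  simp

lemma coe_arm1 : (arm false 1 : ℝ) = 1 / 2 := by simp

lemma arm1_not_end : ¬ (arm false 1 = 0 ∨ arm false 1 = 1) := by
  rw [arm_end]; exact one_ne_zero

lemma mid_inj {g g' : Grape ℓ} (e : mid T g = mid T g') : g = g' := by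
  rcases grR_eq e with ⟨h, -⟩ | ⟨h, -⟩
  · exact h
  · exact absurd h arm1_not_end

lemma qR_eq_mid {v : VT} {b : BrCode ℓ} (h : Valid T v b) {g : Grape ℓ} {s : I}
    (e : qR h s = mid T g) : s = 1 ∧ ∃ j, b = Sum.inr (g, j) := by
  rcases qR_eq_grR h e with ⟨j, h1, -, h2⟩ | ⟨h1, -⟩
  · refine ⟨?_, j, h1⟩
    obtain ⟨h3, -⟩ := arm_eq h2
    exact h3.symm
  · exact absurd h1 arm1_not_end

lemma push_eq_push {g g' : Grape ℓ} {b b' : BrCode ℓ} {h : Valid T g.1 b}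
    {ha : Apart (Sum.inr (g, false)) b} {h' : Valid T g'.1 b'}
    {ha' : Apart (Sum.inr (g', false)) b'} {s t : I}
    (e : (Arc.push g b h ha).c s = (Arc.push g' b' h' ha').c t) :
    (g = g' ∧ s = t ∧ (b = b' ∨ s = 0 ∨ (s = 1 ∧
      ∃ γ j j', b = Sum.inr (γ, j) ∧ b' = Sum.inr (γ, j')))) ∨
    (s = 1 ∧ t = 1 ∧ (∃ j, b = Sum.inr (g', j)) ∧ ∃ j, b' = Sum.inr (g, j)) := by
  rw [c_push, c_push] at e
  rcases mk2_eq_iff.1 e with ⟨e1, e2⟩ | ⟨e1, e2⟩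
  · obtain rfl := mid_inj e1
    left
    refine ⟨rfl, (qR_eq_same h h' e2).1, ?_⟩
    rcases qR_eq h h' e2 with ⟨-, h1, -⟩ | ⟨rfl, -⟩ | ⟨-, h1, -, h2⟩ | ⟨z, h1, h2⟩
    · exact Or.inl h1
    · exact absurd h (SimpleGraph.irrefl T)
    · exact Or.inr (Or.inr ⟨h1, h2⟩)
    · rcases h1 with ⟨h1, -⟩ | ⟨rfl, rfl⟩
      · exact Or.inr (Or.inl h1)
      · rcases h2 with ⟨-, rfl⟩ | ⟨rfl, -⟩
        · exact absurd h (SimpleGraph.irrefl T)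
        · exact Or.inl rfl
  · obtain ⟨h1, h2⟩ := qR_eq_mid h' e1.symm
    obtain ⟨h3, h4⟩ := qR_eq_mid h e2
    exact Or.inr ⟨h3, h1, h4, h2⟩

lemma push_eq_rot {g g' : Grape ℓ} {b : BrCode ℓ} {h : Valid T g.1 b}
    {ha : Apart (Sum.inr (g, false)) b} {s t : I}
    (e : (Arc.push g b h ha).c s = (Arc.rot g').c t) : s = 0 ∧ (t = 0 ∨ t = 1) := by
  have key : ∀ {θ : I}, g = g' → qR h s = grR T g' θ → s = 0 := by
    rintro θ rfl e
    rcases qR_eq_grR h e with ⟨j, rfl, -⟩ | ⟨-, h1⟩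
    · exact absurd rfl (apart_grape.1 ha j)
    · rcases h1 with ⟨h1, -⟩ | ⟨rfl, -⟩
      · exact h1
      · exact absurd h (SimpleGraph.irrefl T)
  rw [c_push, c_rot] at e
  rcases mk2_eq_iff.1 e with ⟨e1, e2⟩ | ⟨e1, e2⟩
  · rcases grR_eq e1 with ⟨h1, h2⟩ | ⟨h1, -⟩
    · refine ⟨key h1 e2, Or.inr ?_⟩
      have h2 : (arm false 1 : ℝ) = (t : ℝ) / 2 := congrArg Subtype.val h2
      rw [coe_arm1] at h2
      exact one_of (by linarith)
    · exact absurd h1 arm1_not_end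
  · rcases grR_eq e1 with ⟨h1, h2⟩ | ⟨h1, -⟩
    · refine ⟨key h1 e2, Or.inl ?_⟩
      have h2 : (arm false 1 : ℝ) = (1 + (t : ℝ)) / 2 := congrArg Subtype.val h2
      rw [coe_arm1] at h2
      exact zero_of (by linarith)
    · exact absurd h1 arm1_not_end

lemma half0_inj {s t : I} (h : half0 s = half0 t) : s = t := by
  have h : (s : ℝ) / 2 = t / 2 := congrArg Subtype.val h
  exact Subtype.ext (by linarith)

lemma half01 {s t : I} (h : half0 s = half1 t) : s = 1 ∧ t = 0 := by
  have h : (s : ℝ) / 2 = (1 + t) / 2 := congrArg Subtype.val h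
  have := s.2.2; have := t.2.1
  exact ⟨one_of (by linarith), zero_of (by linarith)⟩

lemma half0_end {s : I} (h : half0 s = 0 ∨ half0 s = 1) : s = 0 := by
  rcases h with h | h
  · have h : (s : ℝ) / 2 = 0 := congrArg Subtype.val h
    exact zero_of (by linarith)
  · have h : (s : ℝ) / 2 = 1 := congrArg Subtype.val h
    have := s.2.2
    exact absurd h (by linarith)

lemma rot_eq_rot {g g' : Grape ℓ} {s t : I}
    (e : (Arc.rot (T := T) g).c s = (Arc.rot g').c t) :
    (g = g' ∧ s = t) ∨ s = 0 ∨ s = 1 := by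
  rw [c_rot, c_rot] at e
  rcases mk2_eq_iff.1 e with ⟨e1, e2⟩ | ⟨e1, e2⟩
  · obtain ⟨h1, h2, -⟩ := flow_GG (half_lt s) (half_lt t) (half_not_end s) e1 e2
    exact Or.inl ⟨h1, half0_inj h2⟩
  · rcases grR_eq e1 with ⟨-, h2⟩ | ⟨h1, -⟩
    · exact Or.inr (Or.inr (half01 h2).1)
    · exact Or.inr (Or.inl (half0_end h1))

/-- The interiors of the arcs are disjoint from each other and from all endpoints. -/
lemma arc_eq {α β : Arc T ℓ} {s t : I} (e : α.c s = β.c t) (h0 : s ≠ 0) (h1 : s ≠ 1) :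
    α = β ∧ s = t := by
  rcases α with g | ⟨g, b, h, ha⟩ <;> rcases β with g' | ⟨g', b', h', ha'⟩
  · obtain ⟨rfl, rfl⟩ := (rot_eq_rot e).resolve_right (by tauto)
    exact ⟨rfl, rfl⟩
  · have := (push_eq_rot e.symm).2
    tauto
  · exact absurd (push_eq_rot e).1 h0
  · rcases push_eq_push e with ⟨rfl, rfl, rfl | h2 | h2⟩ | h2
    · exact ⟨rfl, rfl⟩
    · exact absurd h2 h0
    · exact absurd h2.1 h1
    · exact absurd h2.1 h1

/-- The end of the flow: `K` together with all arcs. -/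
def Lset (T : SimpleGraph VT) (ℓ : VT → ℕ) : Set (CC T ℓ) :=
  Kset T ℓ ∪ ⋃ α : Arc T ℓ, Set.range α.c

lemma stems_qR_subset {v z : VT} {b : BrCode ℓ} (h : Valid T v b) {s : I}
    (hz : z ∈ stemsR (qR h s)) : z = v ∨ b = Sum.inl z := by
  rcases b with u | ⟨g, j⟩
  · rcases (mem_stems_stR h s z).1 hz with ⟨h1, -⟩ | ⟨h1, -⟩
    · exact Or.inl h1
    · exact Or.inr (by rw [h1])
  · have hz : z ∈ stemsR (grR T g (arm j s)) := hz
    rw [stems_grR] at hz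
    exact Or.inl (hz.trans h)

lemma push_end_mem_L (hn : IsNormalGrapes T ℓ) {v : VT} {b b' : BrCode ℓ} (h : Valid T v b)
    (h' : Valid T v b') (ha : Apart b b') (t : I) (hne : qR h 1 ≠ qR h' t) :
    mk2 (qR h 1) (qR h' t) hne ∈ Lset T ℓ := by
  rcases b with u | ⟨g, j⟩
  · refine Or.inl ((mk2_mem_K hn hne).2 (Set.disjoint_left.2 fun z hz hz' => ?_))
    have hvu : T.Adj v u := h
    rcases (mem_stems_stR hvu 1 z).1 hz with ⟨-, h1⟩ | ⟨rfl, -⟩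
    · exact h1 rfl
    · rcases stems_qR_subset h' hz' with rfl | rfl
      · exact SimpleGraph.irrefl T hvu
      · exact ha.1 rfl
  · have hv : g.1 = v := h
    subst hv
    have ha' : Apart (Sum.inr (g, false)) b' := by
      rw [apart_grape]
      rintro j' rfl
      exact ha.2 ⟨g, j, j', rfl, rfl⟩
    refine Or.inr (Set.mem_iUnion.2 ⟨Arc.push g b' h' ha', t, ?_⟩)
    rw [c_push]
    exact mk2_congr (mid_eq g j h) rfl

lemma OB.end_mem (hn : IsNormalGrapes T ℓ) {x y : RR T ℓ} {f g : I → RR T ℓ} (h : OB x y f g)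
    (hne : f 1 ≠ g 1) : mk2 (f 1) (g 1) hne ∈ Lset T ℓ := by
  cases h with
  | K _ _ h => exact Or.inl ((mk2_mem_K hn hne).2 h)
  | D h h' ha s t hst =>
    rcases scl_time1 hst with e | e
    · have e' : qR h (scl s t 1) = qR h 1 := congrArg (qR h) e
      have := push_end_mem_L hn h h' ha (scl t s 1) (fun q => hne (e'.trans q))
      have e2 := mk2_congr (h := hne) e' rfl
      exact e2 ▸ this
    · have e' : qR h' (scl t s 1) = qR h' 1 := congrArg (qR h') e
      have := push_end_mem_L hn h' h ha.symm (scl s t 1) (fun q => hne.symm (e'.trans q))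
      have e2 := mk2_congr (h := hne.symm) e' rfl
      rw [mk2_comm]
      exact e2 ▸ this
  | @E a b h s t hlt =>
    refine Or.inl ((mk2_mem_K hn hne).2 (Set.disjoint_left.2 fun z hz hz' => ?_))
    dsimp only at hz hz'
    rw [eL_time1, mem_stems_stR] at hz
    rw [eR_time1, mem_stems_stR] at hz'
    have := h.ne
    rcases hz with ⟨rfl, -⟩ | ⟨-, q⟩
    · rcases hz' with ⟨-, q⟩ | ⟨q, -⟩
      · exact q rfl
      · exact this q
    · exact q rfl
  | G g s t hlt hne' =>
    refine Or.inr (Set.mem_iUnion.2 ⟨Arc.rot g, GraphBraid.rot s t, ?_⟩)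
    rw [c_rot]
    refine mk2_congr ?_ ?_
    · dsimp only; rw [gL, mix_time1]
    · dsimp only; rw [gR, mix_time1]

lemma OB.start {x y : RR T ℓ} {f g : I → RR T ℓ} (h : OB x y f g) : f 0 = x ∧ g 0 = y := by
  cases h with
  | K _ _ h => exact ⟨rfl, rfl⟩
  | D h h' ha s t hst => dsimp only; rw [scl_time0, scl_time0]; exact ⟨rfl, rfl⟩
  | E h s t hlt => dsimp only; rw [eL_time0, eR_time0]; exact ⟨rfl, rfl⟩
  | G g s t hlt hne' => dsimp only; rw [gL, gR, mix_time0, mix_time0]; exact ⟨rfl, rfl⟩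

/-- The configuration space deformation retracts onto `K` together with the arcs. -/
lemma exists_deformation (hn : IsNormalGrapes T ℓ) : ∃ H : C(CC T ℓ × I, CC T ℓ),
    (∀ q, H (q, 0) = q) ∧ (∀ q, H (q, 1) ∈ Lset T ℓ) ∧ ∀ q ∈ Lset T ℓ, ∀ r, H (q, r) = q := by
  obtain ⟨H, hH⟩ := exists_flow hn
  refine ⟨H, fun q => ?_, fun q => ?_, ?_⟩
  · obtain ⟨x, y, hxy, f, g, rfl, h⟩ := exists_OB q
    rw [hH hxy h]
    exact mk2_congr h.start.1 h.start.2
  · obtain ⟨x, y, hxy, f, g, rfl, h⟩ := exists_OB q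
    rw [hH hxy h]
    exact h.end_mem hn _
  · rintro q (hq | hq) r
    · obtain ⟨x, y, hxy, rfl⟩ := exists_mk2 q
      rw [hH hxy (OB.K x y ((mk2_mem_K hn hxy).1 hq))]
    · obtain ⟨α, t, rfl⟩ := Set.mem_iUnion.1 hq
      rcases α with g | ⟨g, b, h, ha⟩
      · rw [c_rot, hH _ (OB.G g _ _ (half_lt t) (half_not_end t))]
        refine mk2_congr ?_ ?_
        · rw [gL, rot_half, mix_self]
        · rw [gR, rot_half, mix_self]
      · have e : (Arc.push g b h ha).c t = mk2 (qR (valid_self T g false) 1) (qR h t)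
            (by rw [← mid_eq]; exact push_ne h ha t) := by
          rw [c_push]; exact mk2_congr (mid_eq g false _) rfl
        rw [e, hH _ (OB.D (valid_self T g false) h ha 1 t (fun q => one_ne_zero q.1))]
        refine mk2_congr ?_ ?_
        · rw [scl_const (Or.inl rfl)]
        · rw [scl_const (Or.inr rfl)]

end Arcs

end

/-! ### Path-connectedness of K -/

section

open unitInterval

section KConnected

variable {VT : Type} [Fintype VT] [DecidableEq VT] {T : SimpleGraph VT} {ℓ : VT → ℕ}

lemma exists_nb (hn : IsNormalGrapes T ℓ) (v : VT) : ∃ u, T.Adj v u := by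
  obtain ⟨hT, ⟨a, b, hab, -⟩, -⟩ := hn
  have : Nontrivial VT := ⟨a, b, hab⟩
  exact hT.connected.preconnected.exists_adj_of_nontrivial v

/-- A chosen neighbour of `v` in the stem. -/
def nb (hn : IsNormalGrapes T ℓ) (v : VT) : VT := (exists_nb hn v).choose

lemma nb_adj (hn : IsNormalGrapes T ℓ) (v : VT) : T.Adj v (nb hn v) := (exists_nb hn v).choose_spec

/-- The stem vertex `v` as a point of `|Γ|`. -/
def vR (hn : IsNormalGrapes T ℓ) (v : VT) : RR T ℓ := stR (nb_adj hn v) 0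

lemma qR_zero_eq (hn : IsNormalGrapes T ℓ) {v : VT} {b : BrCode ℓ} (h : Valid T v b) :
    qR h 0 = vR hn v :=
  qR_zero h (c := Sum.inl (nb hn v)) (nb_adj hn v)

lemma stR_zero_eq (hn : IsNormalGrapes T ℓ) {v u : VT} (h : T.Adj v u) :
    stR h 0 = vR hn v :=
  qR_zero_eq hn (b := Sum.inl u) h

lemma stR_one_eq (hn : IsNormalGrapes T ℓ) {v u : VT} (h : T.Adj v u) :
    stR h 1 = vR hn u := by
  rw [stR_symm, unitInterval.symm_one, stR_zero_eq hn]

lemma stems_vR (hn : IsNormalGrapes T ℓ) (v : VT) : stemsR (vR hn v) = {v} := by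
  ext z
  rw [vR, mem_stems_stR]
  simp

lemma ne_of_disjoint {x y : RR T ℓ} (h : Disjoint (stemsR x) (stemsR y)) : x ≠ y := by
  rintro rfl
  have h0 : stemsR x = ∅ := by simpa using h
  rcases stems_cases x.2 with ⟨v, e⟩ | ⟨v, w, -, e⟩
  · exact Set.singleton_ne_empty v (e.symm.trans h0)
  · exact (Set.insert_nonempty v {w}).ne_empty (e.symm.trans h0)

/-- The configurations `{x, y}` and `{x', y'}` are joined by a path in `K`; the distinctness of the
points is part of the statement, so that it need not be passed around. -/
def KJoin (x y x' y' : RR T ℓ) : Prop :=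
  ∃ (h : x ≠ y) (h' : x' ≠ y'), JoinedIn (Kset T ℓ) (mk2 x y h) (mk2 x' y' h')

lemma KJoin.trans {x y x' y' x'' y'' : RR T ℓ} (h : KJoin x y x' y') (h' : KJoin x' y' x'' y'') :
    KJoin x y x'' y'' := by
  obtain ⟨a, b, c⟩ := h
  obtain ⟨a', b', c'⟩ := h'
  exact ⟨a, b', c.trans c'⟩

lemma KJoin.symm {x y x' y' : RR T ℓ} (h : KJoin x y x' y') : KJoin x' y' x y := by
  obtain ⟨a, b, c⟩ := h
  exact ⟨b, a, c.symm⟩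

lemma KJoin.swap_left {x y x' y' : RR T ℓ} (h : KJoin x y x' y') : KJoin y x x' y' := by
  obtain ⟨a, b, c⟩ := h
  refine ⟨a.symm, b, ?_⟩
  rw [mk2_comm]
  exact c

lemma KJoin.swap_right {x y x' y' : RR T ℓ} (h : KJoin x y x' y') : KJoin x y y' x' :=
  h.symm.swap_left.symm

lemma kjoin_of_map (hn : IsNormalGrapes T ℓ) (y : RR T ℓ) (p : C(I, RR T ℓ))
    (hp : ∀ t, Disjoint (stemsR (p t)) (stemsR y)) : KJoin (p 0) y (p 1) y := by
  refine ⟨ne_of_disjoint (hp 0), ne_of_disjoint (hp 1),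
    ⟨⟨⟨fun t => mk2 (p t) y (ne_of_disjoint (hp t)),
      continuous_mk2 p.continuous continuous_const _⟩, rfl, rfl⟩, fun t => ?_⟩⟩
  exact (mk2_mem_K hn (ne_of_disjoint (hp t))).2 (hp t)

/-- The first point moves along its branch to a stem vertex. -/
lemma kjoin_vertex (hn : IsNormalGrapes T ℓ) {x y : RR T ℓ} {z : VT}
    (hd : Disjoint (stemsR x) (stemsR y)) (hz : z ∈ stemsR x) : KJoin x y (vR hn z) y := by
  obtain ⟨b, h, s, rfl⟩ := exists_branch hz
  have key := kjoin_of_map hn y ((qR h).comp ⟨fun t : I => s * t, by fun_prop⟩) (by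
    intro t
    refine hd.mono_left fun w hw => ?_
    rcases b with u | ⟨g, j⟩
    · have hvu : T.Adj z u := h
      rcases (mem_stems_stR hvu (s * t) w).1 hw with ⟨rfl, -⟩ | ⟨rfl, h2⟩
      · exact hz
      · refine (mem_stems_stR hvu s w).2 (Or.inr ⟨rfl, ?_⟩)
        rintro rfl
        exact h2 (zero_mul t)
    · have hw : w ∈ stemsR (grR T g (arm j (s * t))) := hw
      have hz : z ∈ stemsR (grR T g (arm j s)) := hz
      rw [stems_grR] at hw hz
      rw [hw, ← hz]
      assumption)
  have key := key.symm
  have e0 : ((qR h).comp ⟨fun t : I => s * t, by fun_prop⟩) 0 = vR hn z := by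
    rw [← qR_zero_eq hn h]
    change qR h (s * 0) = _
    rw [mul_zero]
  have e1 : ((qR h).comp ⟨fun t : I => s * t, by fun_prop⟩) 1 = qR h s := by
    change qR h (s * 1) = _
    rw [mul_one]
  rwa [e0, e1] at key

lemma kjoin_refl (hn : IsNormalGrapes T ℓ) {a b : VT} (hab : a ≠ b) :
    KJoin (vR hn a) (vR hn b) (vR hn a) (vR hn b) := by
  have hd : Disjoint (stemsR (vR hn a)) (stemsR (vR hn b)) := by
    rw [stems_vR, stems_vR]
    simpa using hab
  exact ⟨ne_of_disjoint hd, ne_of_disjoint hd, JoinedIn.refl ((mk2_mem_K hn _).2 hd)⟩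

lemma kjoin_adj (hn : IsNormalGrapes T ℓ) {a b c : VT} (hbc : T.Adj b c) (hb : b ≠ a) (hc : c ≠ a) :
    KJoin (vR hn b) (vR hn a) (vR hn c) (vR hn a) := by
  have key := kjoin_of_map hn (vR hn a) (stR hbc) (fun t => by
    rw [stems_vR, Set.disjoint_singleton_right, mem_stems_stR]
    rintro (⟨h, -⟩ | ⟨h, -⟩)
    · exact hb h.symm
    · exact hc h.symm)
  rwa [stR_zero_eq hn, stR_one_eq hn] at key

lemma kjoin_walk (hn : IsNormalGrapes T ℓ) {b a : VT} (p : T.Walk b a) (hb : b ≠ a) :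
    ∃ n, T.Adj a n ∧ KJoin (vR hn b) (vR hn a) (vR hn n) (vR hn a) := by
  induction p with
  | nil => exact absurd rfl hb
  | @cons b c a h p ih =>
    by_cases hc : c = a
    · subst hc
      exact ⟨b, h.symm, kjoin_refl hn hb⟩
    · obtain ⟨n, h1, h2⟩ := ih hc
      exact ⟨n, h1, (kjoin_adj hn h hb hc).trans h2⟩

/-- One point rests in the vertex `a`, the other one moves from `b` to `c`, possibly exchanging
roles with the first point. -/
lemma kjoin_fixed (hn : IsNormalGrapes T ℓ) {a b c : VT} (hb : b ≠ a) (hc : c ≠ a) :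
    KJoin (vR hn b) (vR hn a) (vR hn c) (vR hn a) := by
  have hT := hn.1.connected.preconnected
  obtain ⟨n, hn1, h1⟩ := kjoin_walk hn (hT b a).some hb
  obtain ⟨m, hm1, h2⟩ := kjoin_walk hn (hT c a).some hc
  refine h1.trans (KJoin.trans ?_ h2.symm)
  by_cases hnm : n = m
  · subst hnm
    exact kjoin_refl hn hn1.ne'
  · have e1 := (kjoin_adj hn hm1 hn1.ne (Ne.symm hnm)).swap_left
    have e2 := (kjoin_adj hn hn1.symm hnm hm1.ne).swap_right
    exact e1.trans e2.swap_left

lemma kjoin_vertices (hn : IsNormalGrapes T ℓ) {a b c d : VT} (hab : a ≠ b) (hcd : c ≠ d) :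
    KJoin (vR hn a) (vR hn b) (vR hn c) (vR hn d) := by
  by_cases had : a = d
  · subst had
    exact (kjoin_fixed hn hab.symm hcd).swap_left
  · exact (kjoin_fixed hn hab.symm (Ne.symm had)).swap_left.swap_right.trans (kjoin_fixed hn had hcd)

lemma stemsR_nonempty (x : RR T ℓ) : ∃ z, z ∈ stemsR x := by
  rcases stems_cases x.2 with ⟨v, e⟩ | ⟨v, w, -, e⟩
  · exact ⟨v, by rw [stemsR, e]; rfl⟩
  · exact ⟨v, by rw [stemsR, e]; exact Or.inl rfl⟩

theorem isPathConnected_K (hn : IsNormalGrapes T ℓ) : IsPathConnected (Kset T ℓ) := by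
  obtain ⟨a, b, hab, -⟩ := hn.2.1
  have hd : Disjoint (stemsR (vR hn a)) (stemsR (vR hn b)) := by
    rw [stems_vR, stems_vR]
    simpa using hab
  refine ⟨_, (mk2_mem_K hn (ne_of_disjoint hd)).2 hd, ?_⟩
  intro q hq
  obtain ⟨x, y, hxy, rfl⟩ := exists_mk2 q
  have hxyd := (mk2_mem_K hn hxy).1 hq
  obtain ⟨z, hz⟩ := stemsR_nonempty x
  obtain ⟨w, hw⟩ := stemsR_nonempty y
  have hzw : z ≠ w := by
    rintro rfl
    exact Set.disjoint_left.1 hxyd hz hw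
  have hd2 : Disjoint (stemsR y) (stemsR (vR hn z)) := by
    rw [stems_vR]
    exact hxyd.symm.mono_right (Set.singleton_subset_iff.2 hz)
  have k1 := kjoin_vertex hn hxyd hz
  have k2 := (kjoin_vertex hn hd2 hw).swap_left.swap_right
  obtain ⟨_, _, h⟩ := (kjoin_vertices hn hab hzw).trans (k1.trans k2).symm
  exact h

end KConnected

end

/-! ### Building the end of the flow from K -/

section

open unitInterval

section Stages

lemma ArcData.pathConnected {A B J : Type*} [TopologicalSpace A] [TopologicalSpace B]
    (D : ArcData A B J) [PathConnectedSpace A] : PathConnectedSpace B := by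
  obtain ⟨a0⟩ := (inferInstance : Nonempty A)
  have key : ∀ b, Joined (D.i a0) b := by
    have h1 : ∀ a, Joined (D.i a0) (D.i a) := fun a =>
      ⟨(PathConnectedSpace.somePath a0 a).map D.i.continuous⟩
    intro b
    rcases D.cov b with ⟨a, rfl⟩ | ⟨j, s, -, -, rfl⟩
    · exact h1 a
    · obtain ⟨a, ha⟩ := D.h0 j
      refine (h1 a).trans ?_
      rw [ha]
      exact ⟨⟨(D.c j).comp ⟨fun t => s * t, by fun_prop⟩, congrArg (D.c j) (mul_zero s),
        congrArg (D.c j) (mul_one s)⟩⟩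
  exact ⟨⟨D.i a0⟩, fun x y => (key x).symm.trans (key y)⟩

variable {X J : Type} [TopologicalSpace X] [T2Space X] [Finite J] {A B : Set X}

lemma isClosedEmbedding_incl (hA : IsClosed A) (h : A ⊆ B) :
    Topology.IsClosedEmbedding (ContinuousMap.inclusion h) := by
  refine ⟨Topology.IsEmbedding.inclusion h, ?_⟩
  have e : Set.range (ContinuousMap.inclusion h) = (Subtype.val : B → X) ⁻¹' A :=
    Set.range_inclusion h
  rw [e]
  exact hA.preimage continuous_subtype_val

lemma mem_range_incl (h : A ⊆ B) {b : B} : b ∈ Set.range (ContinuousMap.inclusion h) ↔ b.1 ∈ A := by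
  constructor
  · rintro ⟨a, rfl⟩
    exact a.2
  · exact fun hb => ⟨⟨b.1, hb⟩, rfl⟩

/-- Restriction of the codomain of a path. -/
def restr (c : C(I, X)) (h : ∀ t, c t ∈ B) : C(I, B) := ⟨fun t => ⟨c t, h t⟩, by fun_prop⟩

lemma isClosed_attach (hA : IsClosed A) (c : J → C(I, X)) (hB : B = A ∪ ⋃ j, Set.range (c j)) :
    IsClosed B := by
  rw [hB]
  exact hA.union (isClosed_iUnion_of_finite fun j => (isCompact_range (c j).continuous).isClosed)

lemma whisker_set (hA : IsClosed A) (c : J → C(I, X)) (hB : B = A ∪ ⋃ j, Set.range (c j))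
    (h1 : ∀ j, c j 1 ∈ A) (inj : ∀ j j' s s', s < 1 → c j s = c j' s' → j = j' ∧ s = s')
    (out : ∀ j s, s < 1 → c j s ∉ A) (h : A ⊆ B) :
    (∀ a : A, Nonempty (FundamentalGroup A a ≃*
      FundamentalGroup B (ContinuousMap.inclusion h a))) ∧
      (PathConnectedSpace A → PathConnectedSpace B) := by
  have hc : ∀ j t, c j t ∈ B := fun j t => by
    rw [hB]; exact Or.inr (Set.mem_iUnion.2 ⟨j, t, rfl⟩)
  refine whisker (ContinuousMap.inclusion h) (isClosedEmbedding_incl hA h)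
    (fun j => restr (c j) (hc j)) ?_ ?_ ?_ ?_
  · rintro ⟨b, hb⟩
    rw [hB] at hb
    rcases hb with hb | hb
    · exact Or.inl ⟨⟨b, hb⟩, rfl⟩
    · obtain ⟨j, t, rfl⟩ := Set.mem_iUnion.1 hb
      exact Or.inr ⟨j, t, rfl⟩
  · exact fun j => (mem_range_incl h).2 (h1 j)
  · exact fun j j' s s' hs e => inj j j' s s' hs (congrArg Subtype.val e)
  · exact fun j s hs q => out j s hs ((mem_range_incl h).1 q)

lemma exists_arcData (hA : IsClosed A) (c : J → C(I, X)) (hB : B = A ∪ ⋃ j, Set.range (c j))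
    (h0 : ∀ j, c j 0 ∈ A) (h1 : ∀ j, c j 1 ∈ A)
    (inj : ∀ j j' s s', 0 < s → s < 1 → c j s = c j' s' → j = j' ∧ s = s')
    (out : ∀ j s, 0 < s → s < 1 → c j s ∉ A) (h : A ⊆ B) :
    Nonempty (ArcData A B J) := by
  have hc : ∀ j t, c j t ∈ B := fun j t => by
    rw [hB]; exact Or.inr (Set.mem_iUnion.2 ⟨j, t, rfl⟩)
  refine ⟨⟨ContinuousMap.inclusion h, isClosedEmbedding_incl hA h,
    fun j => restr (c j) (hc j), ?_, ?_, ?_, ?_, ?_⟩⟩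
  · exact fun j => (mem_range_incl h).2 (h0 j)
  · exact fun j => (mem_range_incl h).2 (h1 j)
  · exact fun j j' s s' hs hs' e => inj j j' s s' hs hs' (congrArg Subtype.val e)
  · exact fun j s hs hs' q => out j s hs hs' ((mem_range_incl h).1 q)
  · rintro ⟨b, hb⟩
    rw [hB] at hb
    rcases hb with hb | hb
    · exact Or.inl ⟨⟨b, hb⟩, rfl⟩
    · obtain ⟨j, t, rfl⟩ := Set.mem_iUnion.1 hb
      rcases ArcData.trich t with rfl | rfl | ⟨h0', h1'⟩
      · exact Or.inl ⟨⟨_, h0 j⟩, rfl⟩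
      · exact Or.inl ⟨⟨_, h1 j⟩, rfl⟩
      · exact Or.inr ⟨j, t, h0', h1', rfl⟩

end Stages

section Tower

variable {VT : Type} [Fintype VT] [DecidableEq VT] {T : SimpleGraph VT} {ℓ : VT → ℕ}

lemma valid_nb (hn : IsNormalGrapes T ℓ) (v : VT) :
    Valid T v (Sum.inl (nb hn v) : BrCode ℓ) := nb_adj hn v

lemma apart_inl (g : Grape ℓ) (u : VT) : Apart (Sum.inr (g, false) : BrCode ℓ) (Sum.inl u) :=
  apart_grape.2 fun _ => Sum.inl_ne_inr

/-- For each grape, an arc connecting the configuration `{mid g, g.1}` to `K`. -/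
def arc1 (hn : IsNormalGrapes T ℓ) (g : Grape ℓ) : Arc T ℓ :=
  .push g (Sum.inl (nb hn g.1)) (valid_nb hn g.1) (apart_inl g _)

/-- Unordered pairs of distinct grapes at a common vertex, listed once each. -/
def Pair (ℓ : VT → ℕ) : Type :=
  {p : Grape ℓ × Grape ℓ // p.2.1 = p.1.1 ∧
    Fintype.equivFin (Grape ℓ) p.1 < Fintype.equivFin (Grape ℓ) p.2}

instance : Finite (Pair ℓ) := inferInstanceAs (Finite {_p : Grape ℓ × Grape ℓ // _})

lemma grape_apart {g g' : Grape ℓ} (h : g ≠ g') (j : Bool) :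
    Apart (Sum.inr (g, false) : BrCode ℓ) (Sum.inr (g', j)) := by
  rw [apart_grape]
  intro j' e
  exact h (congrArg Prod.fst (Sum.inr_injective e)).symm

lemma Pair.ne (p : Pair ℓ) : p.1.1 ≠ p.1.2 := fun e => by
  have := p.2.2
  rw [e] at this
  exact lt_irrefl _ this

lemma Pair.valid (T : SimpleGraph VT) (p : Pair ℓ) :
    Valid T p.1.1.1 (Sum.inr (p.1.2, false) : BrCode ℓ) := p.2.1

/-- For each pair of grapes at a common vertex `v`, an arc from `{mid g, v}` to
`{mid g, mid g'}`. -/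
def arc2 (p : Pair ℓ) : Arc T ℓ :=
  .push p.1.1 (Sum.inr (p.1.2, false)) (p.valid T) (grape_apart p.ne false)

/-- `K` with the arcs `arc1` attached. -/
def K1 (hn : IsNormalGrapes T ℓ) : Set (CC T ℓ) :=
  Kset T ℓ ∪ ⋃ g, Set.range (arc1 hn g).c

/-- The arcs `arc2` traversed backwards, so that they end in `K1`. -/
def arc2rev (p : Pair ℓ) : C(I, CC T ℓ) := (arc2 p).c.comp ⟨unitInterval.symm, by fun_prop⟩

/-- `K1` with the arcs `arc2` attached. -/
def K2 (hn : IsNormalGrapes T ℓ) : Set (CC T ℓ) :=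
  K1 hn ∪ ⋃ p, Set.range (arc2rev (T := T) (ℓ := ℓ) p)

/-- The remaining arcs. -/
def Rest (hn : IsNormalGrapes T ℓ) : Type :=
  {α : Arc T ℓ // (∀ g, α ≠ arc1 hn g) ∧ ∀ p, α ≠ arc2 p}

instance (hn : IsNormalGrapes T ℓ) : Finite (Rest hn) :=
  inferInstanceAs (Finite {_α : Arc T ℓ // _})

lemma K_sub_K1 (hn : IsNormalGrapes T ℓ) : Kset T ℓ ⊆ K1 hn := Set.subset_union_left
lemma K1_sub_K2 (hn : IsNormalGrapes T ℓ) : K1 hn ⊆ K2 hn := Set.subset_union_left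

lemma arc1_mem (hn : IsNormalGrapes T ℓ) (g : Grape ℓ) (t : I) : (arc1 hn g).c t ∈ K1 hn :=
  Or.inr (Set.mem_iUnion.2 ⟨g, t, rfl⟩)

lemma arc2_mem (hn : IsNormalGrapes T ℓ) (p : Pair ℓ) (t : I) : (arc2 p).c t ∈ K2 hn := by
  refine Or.inr (Set.mem_iUnion.2 ⟨p, unitInterval.symm t, ?_⟩)
  change (arc2 p).c (unitInterval.symm (unitInterval.symm t)) = _
  rw [unitInterval.symm_symm]

lemma push_zero_mem (hn : IsNormalGrapes T ℓ) {g : Grape ℓ} {b : BrCode ℓ} (h : Valid T g.1 b)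
    (ha : Apart (Sum.inr (g, false)) b) : (Arc.push g b h ha).c 0 ∈ K1 hn := by
  rw [c_push, mk2_congr rfl (qR_zero h (valid_nb hn g.1))]
  exact arc1_mem hn g 0

lemma isClosed_K1 (hn : IsNormalGrapes T ℓ) : IsClosed (K1 hn) :=
  isClosed_attach isClosed_K (fun g => (arc1 hn g).c) rfl

lemma isClosed_K2 (hn : IsNormalGrapes T ℓ) : IsClosed (K2 hn) :=
  isClosed_attach (isClosed_K1 hn) arc2rev rfl

lemma stage1 (hn : IsNormalGrapes T ℓ) :
    (∀ a : Kset T ℓ, Nonempty (FundamentalGroup (Kset T ℓ) a ≃*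
      FundamentalGroup (K1 hn) (ContinuousMap.inclusion (K_sub_K1 hn) a))) ∧
      (PathConnectedSpace (Kset T ℓ) → PathConnectedSpace (K1 hn)) := by
  refine whisker_set isClosed_K (fun g => (arc1 hn g).c) rfl ?_ ?_ ?_ _
  · intro g
    exact (push_mem_K hn).2 ⟨⟨_, rfl⟩, rfl⟩
  · intro g g' s s' hs e
    rcases push_eq_push e with ⟨h1, h2, -⟩ | ⟨h1, -⟩
    · exact ⟨h1, h2⟩
    · exact absurd h1 hs.ne
  · intro g s hs h
    exact hs.ne ((push_mem_K hn).1 h).2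

lemma symm_pos {s : I} (hs : s < 1) : unitInterval.symm s ≠ 0 := fun e => by
  rw [unitInterval.symm_eq_zero] at e
  exact hs.ne e

lemma arc2_not_mem (hn : IsNormalGrapes T ℓ) (p : Pair ℓ) {t : I} (ht : t ≠ 0) :
    (arc2 p).c t ∉ K1 hn := by
  rintro (h | h)
  · obtain ⟨⟨u, hu⟩, -⟩ := (push_mem_K hn).1 h
    exact absurd hu Sum.inr_ne_inl
  · obtain ⟨g, s, e⟩ := Set.mem_iUnion.1 h
    rcases push_eq_push e.symm with ⟨-, -, h1 | h1 | ⟨-, _, _, _, -, h1⟩⟩ | ⟨-, -, -, _, h1⟩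
    · exact absurd h1 Sum.inr_ne_inl
    · exact ht h1
    · exact absurd h1 Sum.inl_ne_inr
    · exact absurd h1 Sum.inl_ne_inr

lemma stage2 (hn : IsNormalGrapes T ℓ) :
    (∀ a : K1 hn, Nonempty (FundamentalGroup (K1 hn) a ≃*
      FundamentalGroup (K2 hn) (ContinuousMap.inclusion (K1_sub_K2 hn) a))) ∧
      (PathConnectedSpace (K1 hn) → PathConnectedSpace (K2 hn)) := by
  refine whisker_set (isClosed_K1 hn) arc2rev rfl ?_ ?_ ?_ _
  · intro p
    change (arc2 p).c (unitInterval.symm 1) ∈ _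
    rw [unitInterval.symm_one]
    exact push_zero_mem hn _ _
  · intro p p' s s' hs e
    rcases push_eq_push (ha := grape_apart p.ne false) (ha' := grape_apart p'.ne false) e with
      ⟨h1, h2, h3⟩ | ⟨-, -, ⟨j, h1⟩, j', h2⟩
    · refine ⟨Subtype.ext (Prod.ext h1 ?_), unitInterval.symm_inj.1 h2⟩
      rcases h3 with h3 | h3 | ⟨-, _, _, _, h3, h4⟩
      · exact congrArg Prod.fst (Sum.inr_injective h3)
      · exact absurd h3 (symm_pos hs)
      · exact (congrArg Prod.fst (Sum.inr_injective h3)).trans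
          (congrArg Prod.fst (Sum.inr_injective h4)).symm
    · have h1 := congrArg Prod.fst (Sum.inr_injective h1)
      have h2 := congrArg Prod.fst (Sum.inr_injective h2)
      dsimp only at h1 h2
      have q1 := p.2.2
      have q2 := p'.2.2
      rw [h1] at q1
      rw [h2] at q2
      exact absurd q1 (not_lt.2 q2.le)
  · intro p s hs
    exact arc2_not_mem hn p (symm_pos hs)

/-- The configuration `{mid g, mid g'}` for two grapes at the same vertex lies in `K2`. -/
lemma mid_mid_mem (hn : IsNormalGrapes T ℓ) {g g' : Grape ℓ} (hg : g'.1 = g.1)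
    (hne : mid T g ≠ mid T g') : mk2 (mid T g) (mid T g') hne ∈ K2 hn := by
  have key : ∀ p : Pair ℓ, ∀ h : mid T p.1.1 ≠ mid T p.1.2,
      mk2 (mid T p.1.1) (mid T p.1.2) h ∈ K2 hn := fun p h => by
    exact arc2_mem hn p 1
  have hgg : g ≠ g' := fun e => hne (by rw [e])
  rcases lt_or_gt_of_ne ((Fintype.equivFin (Grape ℓ)).injective.ne hgg) with h | h
  · exact key ⟨(g, g'), hg, h⟩ hne
  · rw [mk2_comm]
    exact key ⟨(g', g), hg.symm, h⟩ hne.symm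

lemma rot_zero_mem (hn : IsNormalGrapes T ℓ) (g : Grape ℓ) :
    (Arc.rot g).c 0 ∈ K1 hn ∧ (Arc.rot g).c 1 ∈ K1 hn := by
  have e0 : qR (valid_self T g false) 0 = vR hn g.1 := qR_zero_eq hn _
  have e1 : qR (valid_self T g true) 0 = vR hn g.1 := qR_zero_eq hn _
  have e0' : grR T g (half0 0) = vR hn g.1 := by
    rw [← e0]
    exact congrArg (grR T g) (Subtype.ext (by simp [half0]))
  have e1' : grR T g (half1 1) = vR hn g.1 := by
    rw [← e1]
    exact congrArg (grR T g) (Subtype.ext (by simp [half1]))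
  have m0 : grR T g (half1 0) = mid T g := congrArg (grR T g) (Subtype.ext (by simp [half1]))
  have m1 : grR T g (half0 1) = mid T g := congrArg (grR T g) (Subtype.ext (by simp [half0]))
  have := push_zero_mem hn (valid_nb hn g.1) (apart_inl g _)
  rw [c_push, mk2_congr rfl (qR_zero_eq hn _)] at this
  constructor
  · rw [c_rot, mk2_comm, mk2_congr m0 e0']
    exact this
  · rw [c_rot, mk2_congr m1 e1']
    exact this

lemma arc_zero_mem (hn : IsNormalGrapes T ℓ) (α : Arc T ℓ) : α.c 0 ∈ K2 hn := by
  rcases α with g | ⟨g, b, h, ha⟩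
  · exact Or.inl (rot_zero_mem hn g).1
  · exact Or.inl (push_zero_mem hn h ha)

lemma arc_one_mem (hn : IsNormalGrapes T ℓ) (α : Arc T ℓ) : α.c 1 ∈ K2 hn := by
  rcases α with g | ⟨g, b, h, ha⟩
  · exact Or.inl (rot_zero_mem hn g).2
  · rcases b with u | ⟨g', j⟩
    · exact Or.inl (Or.inl ((push_mem_K hn).2 ⟨⟨u, rfl⟩, rfl⟩))
    · have hg : g'.1 = g.1 := h
      have e : qR h 1 = mid T g' := by
        change grR T g' (arm j 1) = _
        rw [mid, arm_one false j]
      rw [c_push, mk2_congr rfl e]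
      exact mid_mid_mem hn hg _

lemma L_eq (hn : IsNormalGrapes T ℓ) :
    Lset T ℓ = K2 hn ∪ ⋃ α : Rest hn, Set.range α.1.c := by
  apply Set.Subset.antisymm
  · rintro q (h | h)
    · exact Or.inl (Or.inl (Or.inl h))
    · obtain ⟨α, t, rfl⟩ := Set.mem_iUnion.1 h
      by_cases h1 : ∃ g, α = arc1 hn g
      · obtain ⟨g, rfl⟩ := h1
        exact Or.inl (Or.inl (arc1_mem hn g t))
      by_cases h2 : ∃ p, α = arc2 p
      · obtain ⟨p, rfl⟩ := h2
        exact Or.inl (arc2_mem hn p t)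
      · exact Or.inr (Set.mem_iUnion.2 ⟨⟨α, not_exists.1 h1, not_exists.1 h2⟩, t, rfl⟩)
  · rintro q (((h | h) | h) | h)
    · exact Or.inl h
    · obtain ⟨g, t, rfl⟩ := Set.mem_iUnion.1 h
      exact Or.inr (Set.mem_iUnion.2 ⟨_, t, rfl⟩)
    · obtain ⟨p, t, rfl⟩ := Set.mem_iUnion.1 h
      exact Or.inr (Set.mem_iUnion.2 ⟨arc2 p, unitInterval.symm t, rfl⟩)
    · obtain ⟨α, t, rfl⟩ := Set.mem_iUnion.1 h
      exact Or.inr (Set.mem_iUnion.2 ⟨_, t, rfl⟩)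

lemma K2_sub_L (hn : IsNormalGrapes T ℓ) : K2 hn ⊆ Lset T ℓ := by
  rw [L_eq hn]
  exact Set.subset_union_left

lemma arc_not_mem_K (hn : IsNormalGrapes T ℓ) (α : Arc T ℓ) {t : I} (ht : t ≠ 1) :
    α.c t ∉ Kset T ℓ := by
  rcases α with g | ⟨g, b, h, ha⟩
  · exact rot_not_mem_K hn
  · exact fun q => ht ((push_mem_K hn).1 q).2

lemma stage3 (hn : IsNormalGrapes T ℓ) :
    Nonempty (ArcData (K2 hn) (Lset T ℓ) (Rest hn)) := by
  refine exists_arcData (isClosed_K2 hn) (fun α : Rest hn => α.1.c) (L_eq hn)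
    (fun α => arc_zero_mem hn α.1) (fun α => arc_one_mem hn α.1) ?_ ?_ (K2_sub_L hn)
  · intro α β s t h0 h1 e
    obtain ⟨h2, h3⟩ := arc_eq e h0.ne' h1.ne
    exact ⟨Subtype.ext h2, h3⟩
  · rintro α s h0 h1 ((h | h) | h)
    · exact arc_not_mem_K hn α.1 h1.ne h
    · obtain ⟨g, t, e⟩ := Set.mem_iUnion.1 h
      exact α.2.1 g (arc_eq e.symm h0.ne' h1.ne).1
    · obtain ⟨p, t, e⟩ := Set.mem_iUnion.1 h
      exact α.2.2 p (arc_eq e.symm h0.ne' h1.ne).1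

lemma card_Rest (hn : IsNormalGrapes T ℓ) : ∑ v, ℓ v ≤ Nat.card (Rest hn) := by
  have h1 : Nat.card (Grape ℓ) = ∑ v, ℓ v := by
    rw [Nat.card_eq_fintype_card]
    exact (Fintype.card_sigma).trans (by simp)
  rw [← h1]
  let f : Grape ℓ → Rest hn := fun g => ⟨Arc.rot g,
    fun _ e => by simp [arc1] at e, fun _ e => by simp [arc2] at e⟩
  refine Nat.card_le_card_of_injective f fun g g' e => ?_
  have := congrArg Subtype.val e
  simpa [f] using this

/-- `π₁` of the end of the flow. -/
lemma pi1_L (hn : IsNormalGrapes T ℓ) (k : Kset T ℓ) : PathConnectedSpace (Lset T ℓ) ∧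
    ∃ l : Lset T ℓ, Nonempty (FundamentalGroup (Lset T ℓ) l ≃*
      Monoid.Coprod (FundamentalGroup (Kset T ℓ) k) (FreeGroup (Rest hn))) := by
  have p0 : PathConnectedSpace (Kset T ℓ) :=
    isPathConnected_iff_pathConnectedSpace.1 (isPathConnected_K hn)
  have p1 := (stage1 hn).2 p0
  have p2 := (stage2 hn).2 p1
  obtain ⟨D⟩ := stage3 hn
  obtain ⟨e1⟩ := (stage1 hn).1 k
  obtain ⟨e2⟩ := (stage2 hn).1 (ContinuousMap.inclusion (K_sub_K1 hn) k)
  obtain ⟨e3⟩ := D.coprod_free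
    (ContinuousMap.inclusion (K1_sub_K2 hn) (ContinuousMap.inclusion (K_sub_K1 hn) k))
  exact ⟨D.pathConnected, _, ⟨e3.trans (MulEquiv.coprodCongr (e1.trans e2).symm
    (MulEquiv.refl _))⟩⟩

lemma pi1_C (hn : IsNormalGrapes T ℓ) (k : Kset T ℓ) (x : CC T ℓ) :
    Nonempty (FundamentalGroup (CC T ℓ) x ≃*
      Monoid.Coprod (FundamentalGroup (Kset T ℓ) k) (FreeGroup (Fin (Nat.card (Rest hn))))) := by
  obtain ⟨pL, l, ⟨e⟩⟩ := pi1_L hn k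
  obtain ⟨H, H0, H1, HL⟩ := exists_deformation hn
  let i : C(Lset T ℓ, CC T ℓ) := ⟨Subtype.val, continuous_subtype_val⟩
  have hr : ∀ q, H (q, 1) ∈ Set.range i := fun q => ⟨⟨_, H1 q⟩, rfl⟩
  have pC : PathConnectedSpace (CC T ℓ) := pathConnected_of_deformation i H H0 hr
  have bij := map_bijective_of_deformation i Topology.IsEmbedding.subtypeVal H H0 hr
    (fun a t => HL a.1 a.2 t) l
  let f := MulEquiv.ofBijective _ bij
  let f' := FundamentalGroup.fundamentalGroupMulEquivOfPathConnected x (i l)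
  exact ⟨f'.trans (f.symm.trans (e.trans (MulEquiv.coprodCongr (MulEquiv.refl _)
    (FreeGroup.freeGroupCongr (Finite.equivFin (Rest hn))))))⟩

end Tower

end

/-- For a normal bunch of grapes `Γ = (T, ℓ)`, the union `K` of the
product pieces indexed by the stem edges is path-connected, and `B₂(Γ) ≅ π₁(K) ∗ F_N` for
some `N ≥ Σ_v ℓ v` (at arbitrary basepoints). -/
theorem braid2_grapes_UP2_free_factor
    (VT : Type) [Fintype VT] [DecidableEq VT] (T : SimpleGraph VT) (ℓ : VT → ℕ)
    (hnorm : IsNormalGrapes T ℓ) :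
    IsPathConnected (Kset T ℓ) ∧
    ∃ N : ℕ, (∑ v : VT, ℓ v) ≤ N ∧
      ∀ (x : UConf 2 ↥(realization (bunchOfGrapes T ℓ))) (k : ↥(Kset T ℓ)),
        Nonempty
          (FundamentalGroup (UConf 2 ↥(realization (bunchOfGrapes T ℓ))) x ≃*
            Monoid.Coprod (FundamentalGroup ↥(Kset T ℓ) k) (FreeGroup (Fin N))) :=
  ⟨isPathConnected_K hnorm, _, card_Rest hnorm, fun x k => pi1_C hnorm k x⟩

end GraphBraid
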